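/- arXiv:2201.05582 — 3 statements merged into one kernel-verified Lean document; each statement's English description precedes it below -/
import Mathlib

section
/- Let μ satisfy Assumption 1. Then there exists a finite Borel measure μ̂ on ℝ such that F_μ(ω) − ω = −∫_ℝ x dμ(x) + ∫_ℝ 1/(x−ω) dμ̂(x) for all ω ∈ ℂ⁺. Moreover 0 < μ̂(ℝ) = ∫_ℝ x² dμ(x) − (∫_ℝ x dμ(x))² < ∞ (the variance of μ), and supp(μ̂) = supp(μ_ac) ∪ {y_1,…,y_j}, where {y_1,…,y_j} is a finite set of at most n_ac + n_pp^out − 1 real points, each of which is a zero of m_μ lying outside supp(μ_ac); each such y_i is an atom of μ̂. -/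
open MeasureTheory Topology Filter Set

noncomputable section

/-- The open upper half-plane ℂ⁺. -/
def UHP : Set ℂ := {z : ℂ | 0 < z.im}

/-- The closed upper half-plane ℂ⁺ ∪ ℝ. -/
def CUHP : Set ℂ := {z : ℂ | 0 ≤ z.im}

/-- Cauchy–Stieltjes transform `m_μ(z) = ∫ 1/(x−z) dμ(x)`. -/
def stT (μ : Measure ℝ) (z : ℂ) : ℂ := ∫ x, ((x : ℂ) - z)⁻¹ ∂μ

/-- Real-valued Cauchy–Stieltjes transform at real points (outside the support). -/
def stTR (μ : Measure ℝ) (E : ℝ) : ℝ := ∫ x, (x - E)⁻¹ ∂μ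

/-- Negative reciprocal Cauchy–Stieltjes transform `F_μ = −1/m_μ`. -/
def nrT (μ : Measure ℝ) (z : ℂ) : ℂ := -(stT μ z)⁻¹

/-- Support of a Borel measure on ℝ (the smallest closed set of full measure). -/
def msupp (μ : Measure ℝ) : Set ℝ := {x : ℝ | ∀ ε > 0, 0 < μ (Set.Ioo (x - ε) (x + ε))}

/-- Absolutely continuous part of μ with respect to Lebesgue measure. -/
def acPart (μ : Measure ℝ) : Measure ℝ := volume.withDensity (μ.rnDeriv volume)

/-- `I_μ(ω) = ∫ 1/|x−ω|² dμ(x)`. -/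
def Ifun (μ : Measure ℝ) (w : ℂ) : ℝ := ∫ x, (Complex.normSq ((x : ℂ) - w))⁻¹ ∂μ

/-- A sequence of the upper half-plane converging non-tangentially to `E ∈ ℝ`. -/
def NonTangentialSeq (z : ℕ → ℂ) (E : ℝ) : Prop :=
  (∀ n, z n ∈ UHP) ∧ Tendsto z atTop (𝓝 (E : ℂ)) ∧
    ∃ C : ℝ, ∀ n, |(z n).re - E| ≤ C * (z n).im

/-- The density `ρ_μ` of the a.c. part of `μ` vanishes at `x`
(via the Stieltjes inversion formula). -/
def densityVanishesAt (μ : Measure ℝ) (x : ℝ) : Prop :=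
  Tendsto (fun η : ℝ => (stT μ ((x : ℂ) + (η : ℂ) * Complex.I)).im) (𝓝[>] 0) (𝓝 0)

/-- The density `ρ_μ` of the a.c. part of `μ` diverges at `x`. -/
def densityDivergesAt (μ : Measure ℝ) (x : ℝ) : Prop :=
  Tendsto (fun η : ℝ => (stT μ ((x : ℂ) + (η : ℂ) * Complex.I)).im) (𝓝[>] 0) atTop

/-- Assumption 1. -/
structure Assumption1 (μ : Measure ℝ) (nac npp nppout : ℕ)
    (Em Ep : Fin nac → ℝ) (atom : Fin npp → ℝ) (ρ : ℝ → ℝ) : Prop where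
  prob : IsProbabilityMeasure μ
  compact : IsCompact (msupp μ)
  nac_pos : 1 ≤ nac
  npp_pos : 1 ≤ npp
  ρ_nonneg : ∀ x, 0 ≤ ρ x
  ac_density : acPart μ = volume.withDensity fun x => ENNReal.ofReal (ρ x)
  sing_atomic : μ.singularPart volume = ∑ j : Fin npp, μ {atom j} • Measure.dirac (atom j)
  atom_inj : Function.Injective atom
  atom_pos : ∀ j, 0 < μ {atom j}
  lt : ∀ j, Em j < Ep j
  ordered : ∀ i j : Fin nac, i < j → Ep i < Em j
  supp_ac : msupp (acPart μ) = ⋃ j, Set.Icc (Em j) (Ep j)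
  out_card : Nat.card {j : Fin npp // atom j ∉ msupp (acPart μ)} = nppout
  no_atom_endpoint : ∀ j i, atom j ≠ Em i ∧ atom j ≠ Ep i
  power_law : ∀ j, ∃ tm tp C : ℝ, -1 < tm ∧ tm < 1 ∧ -1 < tp ∧ tp < 1 ∧ 1 ≤ C ∧
    ∀ᵐ x ∂volume, x ∈ Set.Icc (Em j) (Ep j) →
      C⁻¹ < ρ x / ((x - Em j) ^ tm * (Ep j - x) ^ tp) ∧
      ρ x / ((x - Em j) ^ tm * (Ep j - x) ^ tp) < C

/-- The subordination function `ω_t` for the free convolution semi-group,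
together with its continuous extension to `ℂ⁺ ∪ ℝ`. -/
structure IsSubordT (μ : Measure ℝ) (t : ℝ) (ω : ℂ → ℂ) : Prop where
  diff : DifferentiableOn ℂ ω UHP
  maps : ∀ z ∈ UHP, ω z ∈ UHP
  imLe : ∀ z ∈ UHP, z.im ≤ (ω z).im
  limTop : Tendsto (fun η : ℝ => ω ((η : ℂ) * Complex.I) / ((η : ℂ) * Complex.I))
      atTop (𝓝 1)
  eqn : ∀ z ∈ UHP, (t : ℂ) * ω z - z = ((t : ℂ) - 1) * nrT μ (ω z)
  cont : ContinuousOn ω CUHP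

/-- `μt = μ^{⊞ t}`: the probability measure whose negative reciprocal Cauchy–Stieltjes
transform is `F_μ ∘ ω_t`, i.e. whose Cauchy–Stieltjes transform is `m_μ ∘ ω_t`. -/
def IsFreePow (μ : Measure ℝ) (ω : ℂ → ℂ) (μt : Measure ℝ) : Prop :=
  IsProbabilityMeasure μt ∧ ∀ z ∈ UHP, stT μt z = stT μ (ω z)

/-- Assumption 2 (for one of the two measures). -/
structure Assumption2 (μ : Measure ℝ) (n : ℕ) (Am Ap : Fin n → ℝ) (ρ : ℝ → ℝ) : Prop where
  prob : IsProbabilityMeasure μ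
  n_pos : 1 ≤ n
  centered : ∫ x, x ∂μ = 0
  ρ_nonneg : ∀ x, 0 ≤ ρ x
  ac : μ = volume.withDensity fun x => ENNReal.ofReal (ρ x)
  lt : ∀ j, Am j < Ap j
  ordered : ∀ i j : Fin n, i < j → Ap i < Am j
  supp_eq : msupp μ = ⋃ j, Set.Icc (Am j) (Ap j)
  power_law : ∀ j, ∃ sm sp C : ℝ, -1 < sm ∧ sm < 1 ∧ -1 < sp ∧ sp < 1 ∧ 1 ≤ C ∧
    ∀ᵐ x ∂volume, x ∈ Set.Icc (Am j) (Ap j) →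
      C⁻¹ < ρ x / ((x - Am j) ^ sm * (Ap j - x) ^ sp) ∧
      ρ x / ((x - Am j) ^ sm * (Ap j - x) ^ sp) < C

/-- The pair of subordination functions for the free additive convolution `μa ⊞ μb`. -/
structure IsSubordPair (μa μb : Measure ℝ) (ωa ωb : ℂ → ℂ) : Prop where
  diff_a : DifferentiableOn ℂ ωa UHP
  diff_b : DifferentiableOn ℂ ωb UHP
  maps_a : ∀ z ∈ UHP, ωa z ∈ UHP
  maps_b : ∀ z ∈ UHP, ωb z ∈ UHP
  imLe_a : ∀ z ∈ UHP, z.im ≤ (ωa z).im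
  imLe_b : ∀ z ∈ UHP, z.im ≤ (ωb z).im
  lim_a : Tendsto (fun η : ℝ => ωa ((η : ℂ) * Complex.I) / ((η : ℂ) * Complex.I))
      atTop (𝓝 1)
  lim_b : Tendsto (fun η : ℝ => ωb ((η : ℂ) * Complex.I) / ((η : ℂ) * Complex.I))
      atTop (𝓝 1)
  eqn_a : ∀ z ∈ UHP, ωa z + ωb z - z = nrT μa (ωb z)
  eqn_b : ∀ z ∈ UHP, ωa z + ωb z - z = nrT μb (ωa z)

/-- `μab = μa ⊞ μb`: the probability measure whose negative reciprocal Cauchy–Stieltjes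
transform is `F_{μa} ∘ ω_b`, i.e. whose Cauchy–Stieltjes transform is `m_{μa} ∘ ω_b`. -/
def IsFreeConv (μa μb : Measure ℝ) (ωb : ℂ → ℂ) (μab : Measure ℝ) : Prop :=
  IsProbabilityMeasure μab ∧ ∀ z ∈ UHP, stT μab z = stT μa (ωb z)

/-- `Ω` is the continuous extension of `ω` to `ℂ⁺ ∪ ℝ`, with values in the
Riemann sphere `ℂ ∪ {∞}`. -/
def ExtendsToRP (ω : ℂ → ℂ) (Ω : ℂ → OnePoint ℂ) : Prop :=
  ContinuousOn Ω CUHP ∧ ∀ z ∈ UHP, Ω z = (ω z : OnePoint ℂ)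

/-- `μhat` is the measure in the Nevanlinna representation
`F_μ(ω) − ω = −∫ x dμ + ∫ 1/(x−ω) dμ̂(x)`. -/
def IsNevanHat (μ μhat : Measure ℝ) : Prop :=
  IsFiniteMeasure μhat ∧ ∀ z ∈ UHP,
    nrT μ z - z = -((∫ x, x ∂μ : ℝ) : ℂ) + ∫ x, ((x : ℂ) - z)⁻¹ ∂μhat

end

open scoped CompactlySupported

theorem spectral_measure {H : Type*} [NormedAddCommGroup H] [InnerProductSpace ℂ H]
    [CompleteSpace H] (A : H →L[ℂ] H) (hA : IsSelfAdjoint A) (v : H) :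
    ∃ ν : Measure ℝ, IsFiniteMeasure ν ∧ (ν Set.univ).toReal = ‖v‖ ^ 2 ∧
      ∀ z : ℂ, 0 < z.im → ∃ g : H, A g - z • g = v ∧
        inner ℂ v g = ∫ x, ((x : ℂ) - z)⁻¹ ∂ν := by
  let Λ : C_c(spectrum ℝ A, ℝ) →ₚ[ℝ] ℝ :=
    { toFun f := (inner ℂ v (cfcHom hA (f : C(spectrum ℝ A, ℝ)) v)).re
      map_add' f g := by
        have : ((f + g : C_c(spectrum ℝ A, ℝ)) : C(spectrum ℝ A, ℝ))
            = (f : C(spectrum ℝ A, ℝ)) + (g : C(spectrum ℝ A, ℝ)) := rfl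
        rw [this, map_add]
        simp
      map_smul' c f := by
        have : ((c • f : C_c(spectrum ℝ A, ℝ)) : C(spectrum ℝ A, ℝ))
            = c • (f : C(spectrum ℝ A, ℝ)) := rfl
        rw [this, map_smul]
        simp [inner_smul_right_eq_smul]
      monotone' f g hfg := by
        have h : cfcHom hA (f : C(spectrum ℝ A, ℝ)) ≤ cfcHom hA (g : C(spectrum ℝ A, ℝ)) :=
          cfcHom_mono hA (fun x => hfg x)
        rw [ContinuousLinearMap.le_def] at h
        have h2 := h.re_inner_nonneg_right v
        simp [inner_sub_right] at h2
        exact h2 }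
  let ν := RealRMK.rieszMeasure Λ
  have hν : ∀ f : C(spectrum ℝ A, ℝ), ∫ x, f x ∂ν = (inner ℂ v (cfcHom hA f v)).re := by
    intro f
    let f' : C_c(spectrum ℝ A, ℝ) :=
      { toFun := f
        hasCompactSupport' := HasCompactSupport.of_compactSpace _ }
    exact RealRMK.integral_rieszMeasure Λ f'
  have hsa : ∀ f : C(spectrum ℝ A, ℝ),
      inner ℂ v (cfcHom hA f v) = ((∫ x, f x ∂ν : ℝ) : ℂ) := by
    intro f
    rw [hν]
    have h1 : IsSelfAdjoint (cfcHom hA f) := cfcHom_predicate hA f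
    have h2 := (ContinuousLinearMap.isSelfAdjoint_iff_isSymmetric.mp h1) v v
    apply Complex.ext
    · simp
    · rw [Complex.ofReal_im, ← Complex.conj_eq_iff_im, inner_conj_symm]
      exact h2
  refine ⟨ν.map Subtype.val, inferInstance, ?_, ?_⟩
  · rw [Measure.map_apply measurable_subtype_coe MeasurableSet.univ]
    have := hν 1
    simp at this
    simp [Measure.real] at this ⊢
    rw [this]
    norm_cast
  intro z hz
  have hpos : ∀ x : ℝ, 0 < (x - z.re) ^ 2 + z.im ^ 2 := fun x => by positivity
  let f1 : C(spectrum ℝ A, ℝ) := ⟨fun x => (x.1 - z.re) / ((x.1 - z.re) ^ 2 + z.im ^ 2),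
    by
      refine Continuous.div (by fun_prop) (by fun_prop) (fun x => (hpos x).ne')⟩
  let f2 : C(spectrum ℝ A, ℝ) := ⟨fun x => z.im / ((x.1 - z.re) ^ 2 + z.im ^ 2),
    by
      refine Continuous.div (by fun_prop) (by fun_prop) (fun x => (hpos x).ne')⟩
  let X : C(spectrum ℝ A, ℝ) := (ContinuousMap.id ℝ).restrict (spectrum ℝ A)
  have hX : cfcHom hA X = A := cfcHom_id hA
  have e1 : X * f1 - z.re • f1 + z.im • f2 = 1 := by
    ext x
    simp [X, f1, f2]
    have := (hpos x).ne'
    field_simp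
  have e2 : X * f2 - z.re • f2 - z.im • f1 = 0 := by
    ext x
    simp [X, f1, f2]
    have := (hpos x).ne'
    ring
  have E1 := congrArg (fun f => cfcHom hA f v) e1
  have E2 := congrArg (fun f => cfcHom hA f v) e2
  simp only [map_add, map_sub, map_mul, map_smul, hX, map_one, map_zero] at E1 E2
  simp at E1 E2
  refine ⟨cfcHom hA f1 v + Complex.I • cfcHom hA f2 v, ?_, ?_⟩
  · have hzz : z = (z.re : ℂ) + z.im * Complex.I := (Complex.re_add_im z).symm
    set B1 := cfcHom hA f1 v
    set B2 := cfcHom hA f2 v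
    have E1' : A B1 - (z.re : ℂ) • B1 + (z.im : ℂ) • B2 = v := by exact_mod_cast E1
    have E2' : A B2 - (z.re : ℂ) • B2 - (z.im : ℂ) • B1 = 0 := by exact_mod_cast E2
    have : A (B1 + Complex.I • B2) - z • (B1 + Complex.I • B2) =
      (A B1 - (z.re : ℂ) • B1 + (z.im : ℂ) • B2) +
        Complex.I • (A B2 - (z.re : ℂ) • B2 - (z.im : ℂ) • B1) := by
      rw [map_add, map_smul]
      conv_lhs => rw [hzz]
      have hI : Complex.I * Complex.I = -1 := Complex.I_mul_I
      match_scalars <;> ring_nf <;> simp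
    rw [this, E1', E2']; simp
  · rw [inner_add_right, inner_smul_right, hsa, hsa, integral_map measurable_subtype_coe.aemeasurable
      (by
        apply Measurable.aestronglyMeasurable
        fun_prop)]
    rw [← integral_complex_ofReal, ← integral_complex_ofReal, ← integral_const_mul, ← integral_add]
    · congr 1
      ext x
      have h0 : ((x : ℝ) : ℂ) - z ≠ 0 := by
        intro h
        have := congrArg Complex.im h
        simp at this
        exact hz.ne' this
      have h1 := (hpos x).ne'
      have hf1 : f1 x = (x.1 - z.re) / ((x.1 - z.re) ^ 2 + z.im ^ 2) := rfl
      have hf2 : f2 x = z.im / ((x.1 - z.re) ^ 2 + z.im ^ 2) := rfl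
      apply Complex.ext
      · rw [Complex.add_re, Complex.ofReal_re, Complex.I_mul_re, Complex.ofReal_im, Complex.inv_re,
          hf1, Complex.normSq_apply]
        simp
        ring_nf
      · rw [Complex.add_im, Complex.ofReal_im, Complex.I_mul_im, Complex.ofReal_re, Complex.inv_im,
          hf2, Complex.normSq_apply]
        simp
        ring_nf
    · have : Continuous fun x => ((f1 x : ℝ) : ℂ) := by fun_prop
      exact this.integrable_of_hasCompactSupport (HasCompactSupport.of_compactSpace _)
    · have : Continuous fun x => Complex.I * ((f2 x : ℝ) : ℂ) := by fun_prop
      exact this.integrable_of_hasCompactSupport (HasCompactSupport.of_compactSpace _)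

theorem schur_measure {H : Type*} [NormedAddCommGroup H] [InnerProductSpace ℂ H]
    [CompleteSpace H] (X : H →L[ℂ] H) (hX : IsSelfAdjoint X) (e : H) (he : ‖e‖ = 1) :
    ∃ ν : Measure ℝ, IsFiniteMeasure ν ∧
      (ν Set.univ).toReal = ‖X e - (inner ℂ e (X e) : ℂ) • e‖ ^ 2 ∧
      ∀ z : ℂ, 0 < z.im → ∃ h : H, inner ℂ e h = (1 : ℂ) ∧
        X h - z • h = (inner ℂ e (X e) - z - ∫ x, ((x : ℂ) - z)⁻¹ ∂ν) • e := by
  have hXs : ∀ a b : H, inner ℂ (X a) b = inner ℂ a (X b) :=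
    fun a b => (ContinuousLinearMap.isSelfAdjoint_iff_isSymmetric.mp hX) a b
  have hee : inner ℂ e e = (1 : ℂ) := by
    rw [inner_self_eq_norm_sq_to_K, he]; simp
  let Q : H →L[ℂ] H := ContinuousLinearMap.id ℂ H - (innerSL ℂ e).smulRight e
  have hQ : ∀ f, Q f = f - (inner ℂ e f : ℂ) • e := fun f => by simp [Q]
  have hQs : ∀ a b : H, inner ℂ (Q a) b = inner ℂ a (Q b) := by
    intro a b
    rw [hQ, hQ, inner_sub_left, inner_sub_right, inner_smul_left, inner_smul_right,
      inner_conj_symm]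
    ring
  have hQe : Q e = 0 := by rw [hQ, hee]; simp
  let A : H →L[ℂ] H := Q ∘L X ∘L Q
  have hAa : ∀ f, A f = Q (X (Q f)) := fun f => rfl
  have hAs : ∀ a b : H, inner ℂ (A a) b = inner ℂ a (A b) := by
    intro a b
    rw [hAa, hAa, hQs, hXs, hQs]
  have hA : IsSelfAdjoint A :=
    ContinuousLinearMap.isSelfAdjoint_iff_isSymmetric.mpr (fun a b => hAs a b)
  obtain ⟨ν, hfin, hmass, hν⟩ := spectral_measure A hA (Q (X e))
  refine ⟨ν, hfin, by rw [hmass, hQ], ?_⟩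
  intro z hz
  obtain ⟨g, hg, hint⟩ := hν z hz
  have hz0 : z ≠ 0 := by rintro rfl; simp at hz
  have hAe : A e = 0 := by rw [hAa, hQe]; simp
  have hge : inner ℂ e g = (0 : ℂ) := by
    have h1 := congrArg (fun f => (inner ℂ e f : ℂ)) hg
    simp only [inner_sub_right, inner_smul_right] at h1
    rw [← hAs, hAe, ← hQs, hQe] at h1
    simpa [hz0] using h1
  have hQg : Q g = g := by rw [hQ, hge]; simp
  refine ⟨e - g, by rw [inner_sub_right, hee, hge]; simp, ?_⟩
  rw [← hint, hQs, hQg, hXs]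
  have hg' : X g - (inner ℂ e (X g) : ℂ) • e - z • g = X e - (inner ℂ e (X e) : ℂ) • e := by
    have := hg
    rw [hAa, hQg, hQ, hQ] at this
    exact this
  have hXg : X g = X e - (inner ℂ e (X e) : ℂ) • e + (inner ℂ e (X g) : ℂ) • e + z • g := by
    rw [← hg']; abel
  rw [map_sub]
  set p : ℂ := inner ℂ e (X g)
  set q : ℂ := inner ℂ e (X e)
  rw [hXg]
  module

theorem nevan_exists (μ : Measure ℝ) [IsProbabilityMeasure μ] (R : ℝ)
    (hR : ∀ᵐ x ∂μ, |x| ≤ R) :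
    ∃ ν : Measure ℝ, IsFiniteMeasure ν ∧
      (ν Set.univ).toReal = (∫ x, x ^ 2 ∂μ) - (∫ x, x ∂μ) ^ 2 ∧
      ∀ z : ℂ, 0 < z.im → (((∫ x, x ∂μ : ℝ) : ℂ) - z - ∫ x, ((x : ℂ) - z)⁻¹ ∂ν) *
        (∫ x, ((x : ℂ) - z)⁻¹ ∂μ) = 1 := by
  have hid : MemLp (fun x : ℝ => (x : ℂ)) ⊤ μ :=
    memLp_top_of_bound (by apply Measurable.aestronglyMeasurable; fun_prop) R
      (by filter_upwards [hR] with x hx; simpa using hx)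
  have hid2 : MemLp (fun x : ℝ => x) 2 μ :=
    MemLp.of_bound (by apply Measurable.aestronglyMeasurable; fun_prop) R
      (by filter_upwards [hR] with x hx; simpa using hx)
  let X : Lp ℂ 2 μ →L[ℂ] Lp ℂ 2 μ :=
    ContinuousLinearMap.holderL μ ⊤ 2 2 (ContinuousLinearMap.mul ℂ ℂ) (hid.toLp _)
  have hXa : ∀ f : Lp ℂ 2 μ, X f =ᵐ[μ] fun x => (x : ℂ) * f x := by
    intro f
    have h1 := (ContinuousLinearMap.mul ℂ ℂ).coeFn_holder (r := 2) (hid.toLp _) f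
    filter_upwards [h1, hid.coeFn_toLp] with x h1 h2
    simp only [X, ContinuousLinearMap.holderL_apply_apply]
    rw [h1, h2]; rfl
  have h1m : MemLp (fun _ : ℝ => (1 : ℂ)) 2 μ := memLp_const 1
  let e : Lp ℂ 2 μ := h1m.toLp _
  have hea : e =ᵐ[μ] fun _ => (1 : ℂ) := h1m.coeFn_toLp
  have hX : IsSelfAdjoint X := by
    rw [ContinuousLinearMap.isSelfAdjoint_iff_isSymmetric]
    intro f g
    change inner ℂ (X f) g = inner ℂ f (X g)
    rw [L2.inner_def, L2.inner_def]
    apply integral_congr_ae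
    filter_upwards [hXa f, hXa g] with x hf hg
    rw [hf, hg]
    simp
    ring
  have hin : ∀ f : Lp ℂ 2 μ, inner ℂ e f = ∫ x, f x ∂μ := by
    intro f
    rw [L2.inner_def]
    apply integral_congr_ae
    filter_upwards [hea] with x hx
    rw [hx]; simp
  have hXe : X e =ᵐ[μ] fun x => (x : ℂ) := by
    filter_upwards [hXa e, hea] with x h1 h2
    rw [h1, h2, mul_one]
  have hmean : inner ℂ e (X e) = ((∫ x, x ∂μ : ℝ) : ℂ) := by
    rw [hin, integral_congr_ae hXe, integral_complex_ofReal]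
  have hsq : inner ℂ (X e) (X e) = ((∫ x, x ^ 2 ∂μ : ℝ) : ℂ) := by
    rw [L2.inner_def, ← integral_complex_ofReal]
    apply integral_congr_ae
    filter_upwards [hXe] with x hx
    rw [hx]; simp
    norm_cast
    rw [sq_abs]
  have hee : inner ℂ e e = (1 : ℂ) := by
    rw [hin, integral_congr_ae hea]; simp
  have he : ‖e‖ = 1 := by
    have h := inner_self_eq_norm_sq (𝕜 := ℂ) e
    rw [hee, RCLike.one_re] at h
    nlinarith [norm_nonneg e]
  obtain ⟨ν, hfin, hmass, hν⟩ := schur_measure X hX e he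
  rw [hmean] at hmass hν
  refine ⟨ν, hfin, ?_, ?_⟩
  · rw [hmass]
    have h := inner_self_eq_norm_sq_to_K (𝕜 := ℂ) (X e - ((∫ x, x ∂μ : ℝ) : ℂ) • e)
    have hmean' : inner ℂ (X e) e = ((∫ x, x ∂μ : ℝ) : ℂ) := by
      rw [← inner_conj_symm, hmean, Complex.conj_ofReal]
    rw [inner_sub_left, inner_sub_right, inner_sub_right, inner_smul_left, inner_smul_right,
      inner_smul_right, inner_smul_left, hmean, hmean', hsq, hee, Complex.conj_ofReal] at h
    have h2 : ((∫ x, x ^ 2 ∂μ : ℝ) : ℂ) - ((∫ x, x ∂μ : ℝ) : ℂ) ^ 2 =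
      ((‖X e - ((∫ x, x ∂μ : ℝ) : ℂ) • e‖ : ℝ) : ℂ) ^ 2 := by
      refine Eq.trans ?_ h
      ring
    exact_mod_cast h2.symm
  · intro z hz
    obtain ⟨h, hh1, hh2⟩ := hν z hz
    set c := ((∫ x, x ∂μ : ℝ) : ℂ) - z - ∫ x, ((x : ℂ) - z)⁻¹ ∂ν
    have hae : h =ᵐ[μ] fun x => c * ((x : ℂ) - z)⁻¹ := by
      have h3 : (X h - z • h : Lp ℂ 2 μ) =ᵐ[μ] (c • e : Lp ℂ 2 μ) := by rw [hh2]
      filter_upwards [h3, Lp.coeFn_sub (X h) (z • h), Lp.coeFn_smul z h, Lp.coeFn_smul c e, hXa h,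
        hea] with x a1 a2 a3 a4 a5 a6
      rw [a2, a4, Pi.sub_apply, a3, a5, Pi.smul_apply, Pi.smul_apply, a6] at a1
      have h0 : ((x : ℝ) : ℂ) - z ≠ 0 := by
        intro h
        have := congrArg Complex.im h
        simp at this
        exact hz.ne' this
      rw [← div_eq_mul_inv, eq_div_iff h0]
      simp at a1
      rw [← a1]; ring
    rw [hin, integral_congr_ae hae, integral_const_mul] at hh1
    exact hh1

theorem sub_ne_zero_of_im {z : ℂ} (hz : 0 < z.im) (x : ℝ) : (x : ℂ) - z ≠ 0 := by
  intro h
  have := congrArg Complex.im h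
  simp at this
  exact hz.ne' this

theorem norm_inv_le_im {z : ℂ} (hz : 0 < z.im) (x : ℝ) : ‖((x : ℂ) - z)⁻¹‖ ≤ z.im⁻¹ := by
  rw [norm_inv]
  apply inv_anti₀ hz
  have := Complex.abs_im_le_norm ((x : ℂ) - z)
  simp at this
  rwa [abs_of_pos hz] at this

theorem integrable_st (ν : Measure ℝ) [IsFiniteMeasure ν] {z : ℂ} (hz : 0 < z.im) :
    Integrable (fun x : ℝ => ((x : ℂ) - z)⁻¹) ν := by
  refine Integrable.of_bound ?_ (z.im⁻¹) (ae_of_all _ (norm_inv_le_im hz))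
  apply Measurable.aestronglyMeasurable
  fun_prop

/-- the point `x + i η`. -/
def zpt (x η : ℝ) : ℂ := (x : ℂ) + (η : ℂ) * Complex.I

theorem zpt_im (x η : ℝ) : (zpt x η).im = η := by simp [zpt]

theorem zpt_re (x η : ℝ) : (zpt x η).re = x := by simp [zpt]

theorem zpt_tendsto (x : ℝ) : Tendsto (fun η : ℝ => zpt x η) (𝓝[>] 0) (𝓝 (x : ℂ)) := by
  have h : Continuous fun η : ℝ => zpt x η := by unfold zpt; fun_prop
  have := h.tendsto 0
  simp only [zpt, Complex.ofReal_zero, zero_mul, add_zero] at this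
  exact this.mono_left nhdsWithin_le_nhds

theorem st_im (ν : Measure ℝ) [IsFiniteMeasure ν] (x : ℝ) {η : ℝ} (hη : 0 < η) :
    (stT ν (zpt x η)).im = ∫ t, η / ((t - x) ^ 2 + η ^ 2) ∂ν := by
  have hi := integrable_st ν (z := zpt x η) (by rwa [zpt_im])
  have h := integral_im hi
  have h2 : (stT ν (zpt x η)).im = RCLike.im (stT ν (zpt x η)) := rfl
  rw [h2, stT, ← h]
  congr 1
  ext t
  change ((((t : ℂ) - zpt x η)⁻¹).im) = _
  rw [Complex.inv_im, Complex.normSq_apply]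
  simp [zpt]
  ring_nf

theorem st_im_nonneg (ν : Measure ℝ) [IsFiniteMeasure ν] (x : ℝ) {η : ℝ} (hη : 0 < η) :
    0 ≤ (stT ν (zpt x η)).im := by
  rw [st_im ν x hη]
  exact integral_nonneg (fun t => by positivity)

theorem ball_le_im (ν : Measure ℝ) [IsFiniteMeasure ν] (x : ℝ) {η : ℝ} (hη : 0 < η) :
    ν.real (Icc (x - η) (x + η)) ≤ 2 * η * (stT ν (zpt x η)).im := by
  have hint : Integrable (fun t => η / ((t - x) ^ 2 + η ^ 2)) ν := by
    have := (integrable_st ν (z := zpt x η) (by rwa [zpt_im])).im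
    refine this.congr (ae_of_all _ fun t => ?_)
    change ((((t : ℂ) - zpt x η)⁻¹).im) = _
    rw [Complex.inv_im, Complex.normSq_apply]
    simp [zpt]
    ring_nf
  have h := mul_meas_ge_le_integral_of_nonneg (μ := ν)
    (f := fun t => η / ((t - x) ^ 2 + η ^ 2))
    (ae_of_all _ fun t => by positivity) hint (1 / (2 * η))
  rw [← st_im ν x hη] at h
  have hsub : ν.real (Icc (x - η) (x + η)) ≤
      ν.real {t | 1 / (2 * η) ≤ η / ((t - x) ^ 2 + η ^ 2)} := by
    refine measureReal_mono ?_ (measure_ne_top _ _)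
    · intro t ht
      simp only [mem_Icc, mem_ofPred_eq] at ht ⊢
      rw [div_le_div_iff₀ (by positivity) (by positivity)]
      nlinarith [ht.1, ht.2]
  have h2 : ν.real (Icc (x - η) (x + η)) * (1 / (2 * η)) ≤ (stT ν (zpt x η)).im := by
    refine le_trans ?_ h
    rw [mul_comm]
    gcongr
  rw [mul_one_div, div_le_iff₀ (by positivity)] at h2
  linarith

theorem null_of_im_tendsto (ν : Measure ℝ) [IsFiniteMeasure ν] (a b : ℝ)
    (h : ∀ x ∈ Ioo a b, Tendsto (fun η : ℝ => (stT ν (zpt x η)).im) (𝓝[>] 0) (𝓝 0)) :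
    ν (Ioo a b) = 0 := by
  let f : ℝ → ℝ := fun y => ν.real (Iic y)
  have hdiff : ∀ x y, x ≤ y → f y - f x = ν.real (Ioc x y) := by
    intro x y hxy
    have : Iic y = Iic x ∪ Ioc x y := (Iic_union_Ioc_eq_Iic hxy).symm
    simp only [f]
    rw [this, measureReal_union (by
      rw [Set.disjoint_left]; intro t ht ht2; exact absurd ht2.1 (not_lt.mpr ht))
      measurableSet_Ioc]
    ring
  have hder : ∀ x ∈ Ioo a b, HasDerivAt f 0 x := by
    intro x hx
    rw [hasDerivAt_iff_isLittleO, Asymptotics.isLittleO_iff]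
    intro c hc
    have h1 := (h x hx).eventually (gt_mem_nhds (show (0 : ℝ) < c / 2 by positivity))
    rw [eventually_nhdsWithin_iff, Metric.eventually_nhds_iff] at h1
    obtain ⟨δ, hδ, h1⟩ := h1
    rw [Metric.eventually_nhds_iff]
    refine ⟨δ, hδ, fun y hy => ?_⟩
    rcases eq_or_ne y x with rfl | hne
    · simp
    have hη : 0 < |y - x| := abs_pos.mpr (sub_ne_zero.mpr hne)
    have h2 := h1 (y := |y - x|) (by
      rw [Real.dist_eq] at hy ⊢; simpa using hy) hη
    have h3 := ball_le_im ν x hη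
    have h4 : |f y - f x| ≤ ν.real (Icc (x - |y - x|) (x + |y - x|)) := by
      rcases le_total x y with hxy | hxy
      · rw [hdiff x y hxy, abs_of_nonneg measureReal_nonneg]
        refine measureReal_mono ?_ (measure_ne_top _ _)
        intro t ht
        rw [abs_of_nonneg (sub_nonneg.mpr hxy)]
        constructor <;> linarith [ht.1, ht.2]
      · rw [abs_sub_comm, hdiff y x hxy, abs_of_nonneg measureReal_nonneg]
        refine measureReal_mono ?_ (measure_ne_top _ _)
        intro t ht
        rw [abs_of_nonpos (sub_nonpos.mpr hxy)]
        constructor <;> linarith [ht.1, ht.2]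
    simp only [smul_zero, sub_zero, Real.norm_eq_abs]
    nlinarith
  have hconst : ∀ s ∈ Ioo a b, ∀ t ∈ Ioo a b, f s = f t := by
    intro s hs t ht
    exact isOpen_Ioo.is_const_of_deriv_eq_zero isPreconnected_Ioo
      (fun x hx => (hder x hx).differentiableAt.differentiableWithinAt)
      (fun x hx => (hder x hx).deriv) hs ht
  apply measure_null_of_locally_null
  intro x hx
  obtain ⟨s, hs1, hs2⟩ := exists_between hx.1
  obtain ⟨t, ht1, ht2⟩ := exists_between hx.2
  refine ⟨Ioc s t, mem_nhdsWithin_of_mem_nhds (Ioc_mem_nhds hs2 ht1), ?_⟩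
  have h5 := hdiff s t (hs2.trans ht1).le
  rw [hconst t ⟨hx.1.trans ht1, ht2⟩ s ⟨hs1, hs2.trans hx.2⟩, sub_self] at h5
  exact (measureReal_eq_zero_iff).mp h5.symm

theorem notMem_msupp {ν : Measure ℝ} {E : ℝ} (h : E ∉ msupp ν) :
    ∃ ε > 0, ∀ᵐ x ∂ν, ε ≤ |x - E| := by
  simp only [msupp, mem_ofPred_eq, not_forall, not_lt, nonpos_iff_eq_zero] at h
  obtain ⟨ε, hε, h⟩ := h
  refine ⟨ε, hε, ?_⟩
  rw [ae_iff]
  convert h using 2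
  ext x
  simp only [mem_ofPred_eq, not_le, abs_lt, mem_Ioo]
  constructor <;> rintro ⟨h1, h2⟩ <;> constructor <;> linarith

theorem integrable_stR {ν : Measure ℝ} [IsFiniteMeasure ν] {E : ℝ} (h : E ∉ msupp ν) :
    Integrable (fun x : ℝ => (x - E)⁻¹) ν := by
  obtain ⟨ε, hε, h⟩ := notMem_msupp h
  refine Integrable.of_bound (by apply Measurable.aestronglyMeasurable; fun_prop) ε⁻¹ ?_
  filter_upwards [h] with x hx
  rw [norm_inv, Real.norm_eq_abs]
  exact inv_anti₀ hε hx

theorem st_sub_le {ν : Measure ℝ} [IsFiniteMeasure ν] {E : ℝ} (h : E ∉ msupp ν) :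
    ∃ K > 0, ∀ η > 0, ‖stT ν (zpt E η) - (stTR ν E : ℂ)‖ ≤ η * K := by
  have hI := integrable_stR h
  obtain ⟨ε, hε, h⟩ := notMem_msupp h
  refine ⟨ε⁻¹ * ε⁻¹ * (ν.real univ) + 1, by positivity, fun η hη => ?_⟩
  have hz : 0 < (zpt E η).im := by rwa [zpt_im]
  have e1 : stT ν (zpt E η) - (stTR ν E : ℂ) =
      ∫ x : ℝ, ((((x : ℂ) - zpt E η)⁻¹) - (((x - E)⁻¹ : ℝ) : ℂ)) ∂ν := by
    have := integral_sub (integrable_st ν hz) (hI.ofReal (𝕜 := ℂ))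
    refine Eq.trans ?_ this.symm
    congr 1
    exact integral_complex_ofReal.symm
  rw [e1]
  have h2 : ∀ᵐ x : ℝ ∂ν, ‖(((x : ℂ) - zpt E η)⁻¹) - (((x - E)⁻¹ : ℝ) : ℂ)‖ ≤ η * (ε⁻¹ * ε⁻¹) := by
    filter_upwards [h] with x hx
    have hx0 : 0 < |x - E| := hε.trans_le hx
    have hxE : ((x : ℂ) - E) ≠ 0 := by
      intro h0
      have : x - E = 0 := by exact_mod_cast h0
      rw [this] at hx0; simp at hx0
    have hxz := sub_ne_zero_of_im hz x
    have e2 : (((x : ℂ) - zpt E η)⁻¹) - (((x - E)⁻¹ : ℝ) : ℂ) =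
        (η * Complex.I) * (((x : ℂ) - zpt E η)⁻¹ * ((x : ℂ) - E)⁻¹) := by
      push_cast
      field_simp
      simp [zpt]
    have h3 : |x - E| ≤ ‖(x : ℂ) - zpt E η‖ := by
      have := Complex.abs_re_le_norm ((x : ℂ) - zpt E η)
      simpa [zpt] using this
    have h4 : ‖(x : ℂ) - E‖ = |x - E| := by
      rw [← Complex.ofReal_sub, Complex.norm_real, Real.norm_eq_abs]
    rw [e2, norm_mul, norm_mul, norm_mul, norm_inv, norm_inv, h4]
    simp only [Complex.norm_real, Complex.norm_I, mul_one, Real.norm_eq_abs, abs_of_pos hη]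
    have := inv_anti₀ hε hx
    have := inv_anti₀ hε (hx.trans h3)
    gcongr
  refine (norm_integral_le_of_norm_le_const h2).trans ?_
  nlinarith

theorem st_tendsto {ν : Measure ℝ} [IsFiniteMeasure ν] {E : ℝ} (h : E ∉ msupp ν) :
    Tendsto (fun η : ℝ => stT ν (zpt E η)) (𝓝[>] 0) (𝓝 (stTR ν E : ℂ)) := by
  obtain ⟨K, hK, h⟩ := st_sub_le h
  rw [tendsto_iff_norm_sub_tendsto_zero]
  have h1 : Tendsto (fun η : ℝ => η * K) (𝓝[>] 0) (𝓝 0) := by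
    have : Tendsto (fun η : ℝ => η * K) (𝓝 0) (𝓝 (0 * K)) :=
      (continuous_id.mul continuous_const).tendsto 0
    rw [zero_mul] at this
    exact this.mono_left nhdsWithin_le_nhds
  refine squeeze_zero' (Eventually.of_forall fun _ => norm_nonneg _) ?_ h1
  filter_upwards [self_mem_nhdsWithin] with η hη
  exact h η hη

theorem st_no_atom {ν : Measure ℝ} [IsFiniteMeasure ν] {E : ℝ} (h : ν {E} = 0) :
    Tendsto (fun η : ℝ => (η : ℂ) * stT ν (zpt E η)) (𝓝[>] 0) (𝓝 0) := by
  have h1 : ∀ η : ℝ, (η : ℂ) * stT ν (zpt E η) = ∫ x, (η : ℂ) * ((x : ℂ) - zpt E η)⁻¹ ∂ν := by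
    intro η; rw [integral_const_mul]; rfl
  simp_rw [h1]
  have h2 : (0 : ℂ) = ∫ x : ℝ, (0 : ℂ) ∂ν := by simp
  rw [h2]
  apply tendsto_integral_filter_of_dominated_convergence (fun _ => (1 : ℝ))
  · exact Eventually.of_forall fun η => by
      apply Measurable.aestronglyMeasurable
      fun_prop
  · filter_upwards [self_mem_nhdsWithin] with η hη
    have hη' : 0 < η := hη
    refine ae_of_all _ fun x => ?_
    have := norm_inv_le_im (z := zpt E η) (by rwa [zpt_im]) x
    rw [zpt_im] at this
    rw [norm_mul, Complex.norm_real, Real.norm_eq_abs, abs_of_pos hη']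
    calc η * _ ≤ η * η⁻¹ := by gcongr
      _ = 1 := mul_inv_cancel₀ hη'.ne'
  · exact integrable_const _
  · have hne : ∀ᵐ x ∂ν, x ≠ E := by
      rw [ae_iff]; simpa using h
    filter_upwards [hne] with x hx
    have h3 : Tendsto (fun η : ℝ => (η : ℂ)) (𝓝[>] 0) (𝓝 0) := by
      have := Complex.continuous_ofReal.tendsto 0
      simp only [Complex.ofReal_zero] at this
      exact this.mono_left nhdsWithin_le_nhds
    have h4 : Tendsto (fun η : ℝ => ((x : ℂ) - zpt E η)⁻¹) (𝓝[>] 0) (𝓝 ((x : ℂ) - E)⁻¹) := by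
      refine Tendsto.inv₀ (tendsto_const_nhds.sub (zpt_tendsto E)) ?_
      rw [sub_ne_zero]
      exact_mod_cast hx
    simpa using h3.mul h4

theorem st_atom_inv {ν : Measure ℝ} [IsFiniteMeasure ν] {E : ℝ} (h : 0 < ν {E}) :
    Tendsto (fun η : ℝ => (stT ν (zpt E η))⁻¹) (𝓝[>] 0) (𝓝 0) := by
  have hp : 0 < ν.real {E} := ENNReal.toReal_pos h.ne' (measure_ne_top _ _)
  rw [tendsto_zero_iff_norm_tendsto_zero]
  have h1 : Tendsto (fun η : ℝ => η * (2 / ν.real {E})) (𝓝[>] 0) (𝓝 0) := by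
    have : Tendsto (fun η : ℝ => η * (2 / ν.real {E})) (𝓝 0) (𝓝 (0 * (2 / ν.real {E}))) :=
      (continuous_id.mul continuous_const).tendsto 0
    rw [zero_mul] at this
    exact this.mono_left nhdsWithin_le_nhds
  refine squeeze_zero' (Eventually.of_forall fun _ => norm_nonneg _) ?_ h1
  filter_upwards [self_mem_nhdsWithin] with η hη
  have hη' : 0 < η := hη
  have h2 := ball_le_im ν E hη'
  have h3 : ν.real {E} ≤ ν.real (Icc (E - η) (E + η)) := by
    refine measureReal_mono ?_ (measure_ne_top _ _)
    rintro x rfl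
    constructor <;> linarith
  have h4 := (le_abs_self _).trans (Complex.abs_im_le_norm (stT ν (zpt E η)))
  have h5 : ν.real {E} / (2 * η) ≤ ‖stT ν (zpt E η)‖ := by
    rw [div_le_iff₀ (by positivity)]
    nlinarith
  rw [norm_inv]
  refine (inv_anti₀ (by positivity) h5).trans (le_of_eq ?_)
  field_simp

theorem integral_pos_of_ae {ν : Measure ℝ} [NeZero ν] {f : ℝ → ℝ} (hf : Integrable f ν)
    (h : ∀ᵐ x ∂ν, 0 < f x) : 0 < ∫ x, f x ∂ν := by
  have h0 : 0 ≤ᵐ[ν] f := by filter_upwards [h] with x hx using hx.le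
  refine lt_of_le_of_ne (integral_nonneg_of_ae h0) (fun h1 => ?_)
  rw [eq_comm, integral_eq_zero_iff_of_nonneg_ae h0 hf] at h1
  have : ∀ᵐ x ∂ν, False := by
    filter_upwards [h, h1] with x a b
    rw [b] at a
    exact lt_irrefl _ a
  rw [ae_iff] at this
  simp at this
  exact NeZero.ne ν this

theorem stR_aux {ν : Measure ℝ} {E E' : ℝ} (hE : E ∉ msupp ν)
    (hE' : E' ∉ msupp ν) (hlt : E < E') (h : ν (Ioo E E') = 0) :
    ∀ᵐ x ∂ν, 0 < (x - E')⁻¹ - (x - E)⁻¹ := by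
  obtain ⟨ε, hε, h1⟩ := notMem_msupp hE
  obtain ⟨ε', hε', h1'⟩ := notMem_msupp hE'
  have h2 : ∀ᵐ x ∂ν, x ∉ Ioo E E' := measure_eq_zero_iff_ae_notMem.mp h
  filter_upwards [h1, h1', h2] with x a b c
  have hx1 : x - E ≠ 0 := by
    intro h; rw [h] at a; simp at a; linarith
  have hx2 : x - E' ≠ 0 := by
    intro h; rw [h] at b; simp at b; linarith
  rw [sub_pos]
  rcases lt_or_gt_of_ne hx1 with h3 | h3
  · exact (inv_lt_inv_of_neg h3 (by linarith)).mpr (by linarith)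
  · rcases lt_or_gt_of_ne hx2 with h4 | h4
    · exact absurd ⟨by linarith, by linarith⟩ c
    · exact (inv_lt_inv₀ h3 h4).mpr (by linarith)

theorem stR_mono {ν : Measure ℝ} [IsFiniteMeasure ν] {E E' : ℝ} (hE : E ∉ msupp ν)
    (hE' : E' ∉ msupp ν) (hlt : E < E') (h : ν (Ioo E E') = 0) : stTR ν E ≤ stTR ν E' := by
  have h1 := stR_aux hE hE' hlt h
  apply integral_mono_ae (integrable_stR hE) (integrable_stR hE')
  filter_upwards [h1] with x hx
  linarith

theorem stR_strictMono {ν : Measure ℝ} [IsFiniteMeasure ν] [NeZero ν] {E E' : ℝ}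
    (hE : E ∉ msupp ν)
    (hE' : E' ∉ msupp ν) (hlt : E < E') (h : ν (Ioo E E') = 0) : stTR ν E < stTR ν E' := by
  have h1 := integral_pos_of_ae ((integrable_stR hE').sub (integrable_stR hE))
    (stR_aux hE hE' hlt h)
  have h2 := integral_sub (integrable_stR hE') (integrable_stR hE)
  simp only [Pi.sub_apply] at h1
  rw [h2] at h1
  exact sub_pos.mp h1

theorem stR_pos {ν : Measure ℝ} [IsFiniteMeasure ν] [NeZero ν] {E : ℝ}
    (hE : E ∉ msupp ν) (h : ν (Iio E) = 0) : 0 < stTR ν E := by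
  apply integral_pos_of_ae (integrable_stR hE)
  obtain ⟨ε, hε, h1⟩ := notMem_msupp hE
  have h2 : ∀ᵐ x ∂ν, x ∉ Iio E := measure_eq_zero_iff_ae_notMem.mp h
  filter_upwards [h1, h2] with x a b
  rw [inv_pos]
  simp at b
  refine lt_of_le_of_ne (by linarith) (fun h => ?_)
  rw [← h] at a; simp at a; linarith

theorem stR_neg {ν : Measure ℝ} [IsFiniteMeasure ν] [NeZero ν] {E : ℝ}
    (hE : E ∉ msupp ν) (h : ν (Ioi E) = 0) : stTR ν E < 0 := by
  have h3 : 0 < ∫ x, -(x - E)⁻¹ ∂ν := by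
    apply integral_pos_of_ae (integrable_stR hE).neg
    obtain ⟨ε, hε, h1⟩ := notMem_msupp hE
    have h2 : ∀ᵐ x ∂ν, x ∉ Ioi E := measure_eq_zero_iff_ae_notMem.mp h
    filter_upwards [h1, h2] with x a b
    change 0 < -(x - E)⁻¹
    rw [neg_pos, inv_lt_zero]
    simp at b
    refine lt_of_le_of_ne (by linarith) (fun h => ?_)
    rw [h] at a; simp at a; linarith
  rw [integral_neg] at h3
  exact neg_pos.mp h3

theorem msupp_eq_support (ν : Measure ℝ) : msupp ν = ν.support := by
  ext x
  have hb : (𝓝 x).HasBasis (fun ε : ℝ => 0 < ε) (fun ε => Ioo (x - ε) (x + ε)) :=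
    nhds_basis_Ioo_pos x
  rw [hb.mem_measureSupport]
  rfl

theorem nevan_hat_inv {μ ν : Measure ℝ} {m : ℝ} {E : ℝ} {r : ℝ}
    (hF : ∀ z : ℂ, 0 < z.im → ((m : ℂ) - z - stT ν z) * stT μ z = 1)
    (h : Tendsto (fun η : ℝ => (stT μ (zpt E η))⁻¹) (𝓝[>] 0) (𝓝 (r : ℂ))) :
    Tendsto (fun η : ℝ => (stT ν (zpt E η)).im) (𝓝[>] 0) (𝓝 0) := by
  have h1 : Tendsto (fun η : ℝ => ((m : ℂ) - zpt E η - (stT μ (zpt E η))⁻¹).im) (𝓝[>] 0)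
      (𝓝 (((m : ℂ) - E - r).im)) :=
    (Complex.continuous_im.tendsto _).comp ((tendsto_const_nhds.sub (zpt_tendsto E)).sub h)
  have h2 : ((m : ℂ) - E - r).im = 0 := by simp
  rw [h2] at h1
  refine h1.congr' ?_
  filter_upwards [self_mem_nhdsWithin] with η hη
  rw [← eq_inv_of_mul_eq_one_left (hF (zpt E η) (by rw [zpt_im]; exact hη))]
  congr 1
  ring

/-- If `ν` vanishes on an interval, so does the diffuse part of `μ`. -/
theorem nevan_mu_null {μ ν : Measure ℝ} [IsFiniteMeasure μ] [IsFiniteMeasure ν] {m : ℝ}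
    (hF : ∀ z : ℂ, 0 < z.im → ((m : ℂ) - z - stT ν z) * stT μ z = 1)
    {a b : ℝ} (hab : a < b) (h : ν (Ioo a b) = 0) : ∃ c, μ (Ioo a b \ {c}) = 0 := by
  have hoff : ∀ E ∈ Ioo a b, E ∉ msupp ν := by
    intro E hE hm
    rw [msupp_eq_support, Measure.mem_support_iff_forall] at hm
    exact (hm (Ioo a b) (Ioo_mem_nhds hE.1 hE.2)).ne' h
  have hanti : ∀ E ∈ Ioo a b, ∀ E' ∈ Ioo a b, E < E' →
      m - E' - stTR ν E' < m - E - stTR ν E := by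
    intro E hE E' hE' hlt
    have := stR_mono (hoff E hE) (hoff E' hE') hlt
      (measure_mono_null (Ioo_subset_Ioo hE.1.le hE'.2.le) h)
    linarith
  have hc : ∃ c, ∀ E ∈ Ioo a b, E ≠ c → m - E - stTR ν E ≠ 0 := by
    by_cases hz : ∃ c ∈ Ioo a b, m - c - stTR ν c = 0
    · obtain ⟨c, hc, hc0⟩ := hz
      refine ⟨c, fun E hE hne h0 => ?_⟩
      rcases lt_or_gt_of_ne hne with hlt | hlt
      · have := hanti E hE c hc hlt; linarith
      · have := hanti c hc E hE hlt; linarith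
    · push Not at hz
      exact ⟨a, fun E hE _ => hz E hE⟩
  obtain ⟨c, hc⟩ := hc
  refine ⟨c, ?_⟩
  have hlim : ∀ E ∈ Ioo a b, E ≠ c →
      Tendsto (fun η : ℝ => (stT μ (zpt E η)).im) (𝓝[>] 0) (𝓝 0) := by
    intro E hE hne
    have hd : (((m - E - stTR ν E : ℝ)) : ℂ) ≠ 0 := by exact_mod_cast hc E hE hne
    have h1 : Tendsto (fun η : ℝ => (m : ℂ) - zpt E η - stT ν (zpt E η)) (𝓝[>] 0)
        (𝓝 (((m - E - stTR ν E : ℝ)) : ℂ)) := by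
      push_cast
      exact (tendsto_const_nhds.sub (zpt_tendsto E)).sub (st_tendsto (hoff E hE))
    have h2 := (Complex.continuous_im.tendsto _).comp (h1.inv₀ hd)
    rw [← Complex.ofReal_inv, Complex.ofReal_im] at h2
    refine h2.congr' ?_
    filter_upwards [self_mem_nhdsWithin] with η hη
    simp only [Function.comp]
    rw [eq_inv_of_mul_eq_one_right (hF (zpt E η) (by rw [zpt_im]; exact hη))]
  have h1 : μ (Ioo a b ∩ Iio c) = 0 := by
    refine measure_mono_null (t := Ioo a (min b c)) (fun x hx => ⟨hx.1.1, lt_min hx.1.2 hx.2⟩) ?_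
    apply null_of_im_tendsto
    intro x hx
    exact hlim x ⟨hx.1, hx.2.trans_le (min_le_left _ _)⟩ (hx.2.trans_le (min_le_right _ _)).ne
  have h2 : μ (Ioo a b ∩ Ioi c) = 0 := by
    refine measure_mono_null (t := Ioo (max a c) b) (fun x hx => ⟨max_lt hx.1.1 hx.2, hx.1.2⟩) ?_
    apply null_of_im_tendsto
    intro x hx
    exact hlim x ⟨(le_max_left _ _).trans_lt hx.1, hx.2⟩ ((le_max_right _ _).trans_lt hx.1).ne'
  refine measure_mono_null ?_ (measure_union_null h1 h2)
  rintro x ⟨hx, hne⟩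
  rcases lt_or_gt_of_ne (show x ≠ c from hne) with h | h
  · exact Or.inl ⟨hx, h⟩
  · exact Or.inr ⟨hx, h⟩

/-- A zero of `m_μ` off the support of `μ` is an atom of `ν`. -/
theorem nevan_atom {μ ν : Measure ℝ} [IsFiniteMeasure μ] [IsFiniteMeasure ν] {m : ℝ} {E : ℝ}
    (hF : ∀ z : ℂ, 0 < z.im → ((m : ℂ) - z - stT ν z) * stT μ z = 1)
    (hE : E ∉ msupp μ) (h0 : stTR μ E = 0) : 0 < ν {E} := by
  rw [pos_iff_ne_zero]
  intro hν
  obtain ⟨K, hK, hb⟩ := st_sub_le hE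
  have hη0 : Tendsto (fun η : ℝ => (η : ℂ)) (𝓝[>] 0) (𝓝 0) := by
    have := Complex.continuous_ofReal.tendsto 0
    simp only [Complex.ofReal_zero] at this
    exact this.mono_left nhdsWithin_le_nhds
  have h1 : Tendsto (fun η : ℝ => (η : ℂ) * ((m : ℂ) - zpt E η) - (η : ℂ) * stT ν (zpt E η))
      (𝓝[>] 0) (𝓝 (0 * ((m : ℂ) - E) - 0)) :=
    (hη0.mul (tendsto_const_nhds.sub (zpt_tendsto E))).sub (st_no_atom hν)
  have h2 := h1.norm
  simp only [zero_mul, sub_zero, norm_zero] at h2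
  have h3 := h2.eventually (gt_mem_nhds (show (0 : ℝ) < K⁻¹ by positivity))
  obtain ⟨η, h4, hη⟩ := (h3.and self_mem_nhdsWithin).exists
  have hη' : 0 < η := hη
  have h5 := hb η hη'
  rw [h0, Complex.ofReal_zero, sub_zero] at h5
  have h6 := congrArg norm (hF (zpt E η) (by rwa [zpt_im]))
  rw [norm_mul, norm_one] at h6
  rw [← mul_sub, norm_mul, Complex.norm_real, Real.norm_eq_abs, abs_of_pos hη'] at h4
  set c := ‖(m : ℂ) - zpt E η - stT ν (zpt E η)‖
  have hc : 0 ≤ c := norm_nonneg _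
  have h7 : 1 ≤ c * (η * K) := by rw [← h6]; gcongr
  have h8 : η * c * K < 1 := by
    calc η * c * K < K⁻¹ * K := by gcongr
      _ = 1 := inv_mul_cancel₀ hK.ne'
  nlinarith

theorem count_lemma {κ : Type*} [Fintype κ] (c : κ → ℝ) (Z : Set ℝ)
    (h1 : ∀ E ∈ Z, ∃ k, c k < E) (h2 : ∀ E ∈ Z, ∃ k, E < c k)
    (h3 : ∀ E ∈ Z, ∀ E' ∈ Z, E < E' → ∃ k, E < c k ∧ c k < E') :
    Z.Finite ∧ Z.ncard ≤ Fintype.card κ - 1 := by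
  classical
  let N : ℝ → ℕ := fun E => (Finset.univ.filter (fun k => c k < E)).card
  have hmono : ∀ E ∈ Z, ∀ E' ∈ Z, E < E' → N E < N E' := by
    intro E hE E' hE' hlt
    apply Finset.card_lt_card
    rw [Finset.ssubset_iff_of_subset]
    · obtain ⟨k, hk1, hk2⟩ := h3 E hE E' hE' hlt
      exact ⟨k, by simpa using hk2, by simpa using hk1.le⟩
    · intro k hk
      simp at hk ⊢
      linarith
  have hinj : InjOn N Z := by
    intro E hE E' hE' h
    by_contra hne
    rcases lt_or_gt_of_ne hne with hlt | hlt
    · exact (hmono E hE E' hE' hlt).ne h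
    · exact (hmono E' hE' E hE hlt).ne' h
  have hmaps : MapsTo N Z (Set.Icc 1 (Fintype.card κ - 1)) := by
    intro E hE
    constructor
    · obtain ⟨k, hk⟩ := h1 E hE
      exact Finset.card_pos.mpr ⟨k, by simpa using hk⟩
    · obtain ⟨k, hk⟩ := h2 E hE
      have : N E < Fintype.card κ := by
        apply Finset.card_lt_univ_of_notMem (x := k)
        simpa using hk.le
      omega
  refine ⟨Set.Finite.of_injOn hmaps hinj (Set.finite_Icc _ _), ?_⟩
  have := Set.ncard_le_ncard_of_injOn N hmaps hinj (Set.finite_Icc _ _)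
  refine this.trans (le_of_eq ?_)
  rw [Set.ncard_eq_toFinset_card']
  simp

/-- Nevanlinna representation of `F_μ − id` under Assumption 1. -/
theorem nevanlinna_representation
    (μ : Measure ℝ) (nac npp nppout : ℕ)
    (Em Ep : Fin nac → ℝ) (atom : Fin npp → ℝ) (ρ : ℝ → ℝ)
    (hμ : Assumption1 μ nac npp nppout Em Ep atom ρ) :
    ∃ μhat : Measure ℝ, IsFiniteMeasure μhat ∧
      (∀ z ∈ UHP,
        nrT μ z - z = -((∫ x, x ∂μ : ℝ) : ℂ) + ∫ x, ((x : ℂ) - z)⁻¹ ∂μhat) ∧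
      0 < μhat Set.univ ∧
      (μhat Set.univ).toReal = (∫ x, x ^ 2 ∂μ) - (∫ x, x ∂μ) ^ 2 ∧
      ∃ (j : ℕ) (y : Fin j → ℝ), j ≤ nac + nppout - 1 ∧ Function.Injective y ∧
        (∀ i, stTR μ (y i) = 0 ∧ y i ∉ msupp (acPart μ)) ∧
        (∀ i, 0 < μhat {y i}) ∧
        msupp μhat = msupp (acPart μ) ∪ Set.range y := by
  classical
  have := hμ.prob
  set S := msupp (acPart μ) with hS
  have hSc : IsClosed S := by rw [hS, msupp_eq_support]; exact Measure.isClosed_support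
  have hdec : μ = μ.singularPart volume + acPart μ :=
    (Measure.haveLebesgueDecomposition_add μ volume)
  have hac_le : acPart μ ≤ μ := Measure.withDensity_rnDeriv_le μ volume
  have hac_abs : acPart μ ≪ volume := withDensity_absolutelyContinuous _ _
  -- the complement of `S ∪ atoms` is null
  have hnull : μ (S ∪ range atom)ᶜ = 0 := by
    rw [hdec, Measure.add_apply]
    have h1 : acPart μ (S ∪ range atom)ᶜ = 0 := by
      refine measure_mono_null (t := Sᶜ) (compl_subset_compl.mpr subset_union_left) ?_
      rw [hS, msupp_eq_support]
      exact Measure.measure_compl_support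
    have hm : MeasurableSet (S ∪ range atom)ᶜ :=
      (hSc.measurableSet.union (finite_range atom).measurableSet).compl
    have h2 : μ.singularPart volume (S ∪ range atom)ᶜ = 0 := by
      rw [hμ.sing_atomic, Measure.finsetSum_apply]
      refine Finset.sum_eq_zero fun j _ => ?_
      rw [Measure.smul_apply, Measure.dirac_apply' _ hm]
      simp
    rw [h1, h2, add_zero]
  have hTc : IsClosed (S ∪ range atom) := hSc.union (finite_range atom).isClosed
  have hoff : ∀ E, E ∉ S → E ∉ range atom → E ∉ msupp μ := by
    intro E h1 h2
    rw [msupp_eq_support, Measure.notMem_support_iff_exists]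
    exact ⟨_, hTc.isOpen_compl.mem_nhds (by simpa using ⟨h1, by simpa using h2⟩), hnull⟩
  have hex : ∀ U : Set ℝ, μ U ≠ 0 → ∃ p ∈ U, p ∈ S ∪ range atom := by
    intro U hU
    by_contra hcon
    push Not at hcon
    exact hU (measure_mono_null (fun x hx => hcon x hx) hnull)
  -- existence of the measure
  obtain ⟨R, hR⟩ : ∃ R : ℝ, ∀ᵐ x ∂μ, |x| ≤ R := by
    obtain ⟨R, hR⟩ := hμ.compact.isBounded.exists_norm_le
    refine ⟨R, ?_⟩
    have h1 : ∀ᵐ x ∂μ, x ∈ msupp μ := by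
      rw [msupp_eq_support]
      exact Measure.support_mem_ae
    filter_upwards [h1] with x hx
    exact hR x hx
  obtain ⟨ν, hfin, hmass, hF0⟩ := nevan_exists μ R hR
  have hF : ∀ z : ℂ, 0 < z.im → ((((∫ x, x ∂μ : ℝ)) : ℂ) - z - stT ν z) * stT μ z = 1 := hF0
  let Z : Set ℝ := {E | E ∉ S ∧ E ∉ range atom ∧ stTR μ E = 0}
  -- counting
  let κ := Fin nac ⊕ {j : Fin npp // atom j ∉ S}
  let c : κ → ℝ := Sum.elim Em (fun j => atom j.1)
  have hIcc : ∀ k, Icc (Em k) (Ep k) ⊆ S := fun k => by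
    rw [hS, hμ.supp_ac]; exact subset_iUnion (fun j => Icc (Em j) (Ep j)) k
  have hk : ∀ p ∈ S ∪ range atom, ∃ k, c k ≤ p ∧ ∀ E, E ∉ S → E < p → E < c k := by
    intro p hp
    by_cases hpS : p ∈ S
    · have hpS' := hpS
      rw [hS, hμ.supp_ac, mem_iUnion] at hpS'
      obtain ⟨k, hk⟩ := hpS'
      refine ⟨Sum.inl k, hk.1, fun E hE hlt => ?_⟩
      by_contra hcon
      exact hE (hIcc k ⟨not_lt.mp hcon, hlt.le.trans hk.2⟩)
    · obtain ⟨j, rfl⟩ := hp.resolve_left hpS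
      exact ⟨Sum.inr ⟨j, hpS⟩, le_rfl, fun E _ h => h⟩
  have hcard : Fintype.card κ = nac + nppout := by
    rw [← hμ.out_card, Nat.card_eq_fintype_card]
    exact (Fintype.card_sum).trans (by rw [Fintype.card_fin])
  obtain ⟨hZfin, hZcard⟩ := count_lemma c Z
    (by
      intro E hE
      have hm : μ (Iio E) ≠ 0 := fun h => by
        have := stR_pos (hoff E hE.1 hE.2.1) h
        exact this.ne' hE.2.2
      obtain ⟨p, hp, hp2⟩ := hex _ hm
      obtain ⟨k, hk1, -⟩ := hk p hp2
      exact ⟨k, hk1.trans_lt hp⟩)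
    (by
      intro E hE
      have hm : μ (Ioi E) ≠ 0 := fun h => by
        have := stR_neg (hoff E hE.1 hE.2.1) h
        exact this.ne hE.2.2
      obtain ⟨p, hp, hp2⟩ := hex _ hm
      obtain ⟨k, -, hk2⟩ := hk p hp2
      exact ⟨k, hk2 E hE.1 hp⟩)
    (by
      intro E hE E' hE' hlt
      have hm : μ (Ioo E E') ≠ 0 := fun h => by
        have := stR_strictMono (hoff E hE.1 hE.2.1) (hoff E' hE'.1 hE'.2.1) hlt h
        rw [hE.2.2, hE'.2.2] at this
        exact lt_irrefl _ this
      obtain ⟨p, hp, hp2⟩ := hex _ hm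
      obtain ⟨k, hk1, hk2⟩ := hk p hp2
      exact ⟨k, hk2 E hE.1 hp.1, hk1.trans_lt hp.2⟩)
  rw [hcard] at hZcard
  have hZatom : ∀ E ∈ Z, 0 < ν {E} := fun E hE =>
    nevan_atom hF (hoff E hE.1 hE.2.1) hE.2.2
  -- support
  have hlim : ∀ E, E ∉ S → E ∉ Z →
      Tendsto (fun η : ℝ => (stT ν (zpt E η)).im) (𝓝[>] 0) (𝓝 0) := by
    intro E hES hEZ
    by_cases hat : E ∈ range atom
    · obtain ⟨j, rfl⟩ := hat
      refine nevan_hat_inv (r := 0) hF ?_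
      rw [Complex.ofReal_zero]
      exact st_atom_inv (hμ.atom_pos j)
    · have hne : stTR μ E ≠ 0 := fun h => hEZ ⟨hES, hat, h⟩
      refine nevan_hat_inv (r := (stTR μ E)⁻¹) hF ?_
      rw [Complex.ofReal_inv]
      exact (st_tendsto (hoff E hES hat)).inv₀ (by exact_mod_cast hne)
  have hsub1 : msupp ν ⊆ S ∪ Z := by
    intro E hE
    by_contra hcon
    have hop : IsOpen (S ∪ Z)ᶜ := (hSc.union hZfin.isClosed).isOpen_compl
    obtain ⟨a, b, hab, hsub⟩ := mem_nhds_iff_exists_Ioo_subset.mp (hop.mem_nhds hcon)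
    have h0 : ν (Ioo a b) = 0 := by
      apply null_of_im_tendsto
      intro x hx
      have := hsub hx
      exact hlim x (fun h => this (Or.inl h)) (fun h => this (Or.inr h))
    rw [msupp_eq_support, Measure.mem_support_iff_forall] at hE
    exact (hE _ (Ioo_mem_nhds hab.1 hab.2)).ne' h0
  have hsub2 : S ⊆ msupp ν := by
    intro E hE ε hε
    rw [pos_iff_ne_zero]
    intro h0
    obtain ⟨c, hc⟩ := nevan_mu_null hF (show E - ε < E + ε by linarith) h0
    have h1 : acPart μ (Ioo (E - ε) (E + ε) \ {c}) = 0 :=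
      le_antisymm ((hac_le _).trans hc.le) bot_le
    have h2 : acPart μ {c} = 0 := hac_abs (by simp)
    have h3 : acPart μ (Ioo (E - ε) (E + ε)) = 0 := by
      refine measure_mono_null ?_ (measure_union_null h1 h2)
      intro x hx
      by_cases hxc : x = c
      · exact Or.inr hxc
      · exact Or.inl ⟨hx, hxc⟩
    exact (hE ε hε).ne' h3
  have hsub3 : Z ⊆ msupp ν := by
    intro E hE ε hε
    refine (hZatom E hE).trans_le (measure_mono ?_)
    rintro x rfl
    constructor <;> linarith
  refine ⟨ν, hfin, ?_, ?_, hmass, ?_⟩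
  · intro z hz
    have h1 := eq_inv_of_mul_eq_one_left (hF z hz)
    rw [nrT, ← h1]
    simp only [stT]
    ring
  · have hE : Em ⟨0, hμ.nac_pos⟩ ∈ S :=
      hIcc ⟨0, hμ.nac_pos⟩ (left_mem_Icc.mpr (hμ.lt _).le)
    exact (hsub2 hE 1 one_pos).trans_le (measure_mono (subset_univ _))
  · let e := hZfin.toFinset.equivFin.symm
    have he : ∀ i, (e i : ℝ) ∈ Z := fun i => hZfin.mem_toFinset.mp (e i).2
    refine ⟨hZfin.toFinset.card, fun i => (e i : ℝ), ?_, ?_, ?_, ?_, ?_⟩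
    · rw [← Set.ncard_eq_toFinset_card Z hZfin]; exact hZcard
    · exact Subtype.val_injective.comp e.injective
    · exact fun i => ⟨(he i).2.2, (he i).1⟩
    · exact fun i => hZatom _ (he i)
    · have hr : range (fun i => (e i : ℝ)) = Z := by
        ext x
        constructor
        · rintro ⟨i, rfl⟩; exact he i
        · intro hx
          exact ⟨e.symm ⟨x, hZfin.mem_toFinset.mpr hx⟩, by simp⟩
      rw [hr]
      exact Subset.antisymm hsub1 (union_subset hsub2 hsub3)
end

section
/- Let μ satisfy Assumption 1 and let t > 1. Then there exists a finite Borel measure ν on ℝ such that ω_t(z) − z = −(t−1)·∫_ℝ x dμ(x) + ∫_ℝ 1/(x−z) dν(x) for all z ∈ ℂ⁺. Moreover ν(ℝ) = (t−1)·(∫_ℝ x² dμ(x) − (∫_ℝ x dμ(x))²) < ∞ and supp(ν) equals the support of the absolutely continuous part of μ^{⊞t}. -/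
open MeasureTheory Topology Filter Set

namespace NevAux

lemma ae_bdd {μ : Measure ℝ} (hc : IsCompact (msupp μ)) :
    ∃ R : ℝ, 0 < R ∧ ∀ᵐ x ∂μ, |x| ≤ R := by
  obtain ⟨R, hR⟩ := hc.isBounded.exists_norm_le
  refine ⟨max R 1, by positivity, ?_⟩
  have h0 : μ (msupp μ)ᶜ = 0 := by
    apply measure_null_of_locally_null
    intro x hx
    simp only [msupp, mem_compl_iff, mem_ofPred_eq, not_forall, not_lt, nonpos_iff_eq_zero] at hx
    obtain ⟨ε, hε, h⟩ := hx
    exact ⟨_, mem_nhdsWithin_of_mem_nhds (Ioo_mem_nhds (by linarith) (by linarith)), h⟩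
  have : ∀ᵐ x ∂μ, x ∈ msupp μ := h0
  filter_upwards [this] with x hx
  exact (hR x hx).trans (le_max_left _ _)

lemma sub_ne {w : ℂ} (hw : w ∈ UHP) (x : ℝ) : (x : ℂ) - w ≠ 0 := by
  intro h
  have := congrArg Complex.im h
  simp at this
  exact absurd hw (by simp [UHP, this])

lemma im_le_norm_sub (w : ℂ) (x : ℝ) : |w.im| ≤ ‖(x : ℂ) - w‖ := by
  have := Complex.abs_im_le_norm ((x : ℂ) - w)
  simpa using this

lemma cont_inv {w : ℂ} (hw : w ∈ UHP) : Continuous fun x : ℝ => ((x : ℂ) - w)⁻¹ :=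
  Continuous.inv₀ (by fun_prop) (sub_ne hw)

lemma norm_inv_le {w : ℂ} (hw : w ∈ UHP) (x : ℝ) : ‖((x : ℂ) - w)⁻¹‖ ≤ w.im⁻¹ := by
  rw [norm_inv]
  have := im_le_norm_sub w x
  have h0 : 0 < w.im := hw
  rw [abs_of_pos h0] at this
  exact inv_anti₀ h0 this

lemma int_inv {μ : Measure ℝ} [IsFiniteMeasure μ] {w : ℂ} (hw : w ∈ UHP) :
    Integrable (fun x : ℝ => ((x : ℂ) - w)⁻¹) μ :=
  Integrable.of_bound (cont_inv hw).aestronglyMeasurable (w.im⁻¹)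
    (Eventually.of_forall (norm_inv_le hw))

lemma int_nsq {μ : Measure ℝ} [IsFiniteMeasure μ] {w : ℂ} (hw : w ∈ UHP) :
    Integrable (fun x : ℝ => (Complex.normSq ((x : ℂ) - w))⁻¹) μ := by
  refine Integrable.of_bound (Continuous.aestronglyMeasurable ?_) (w.im⁻¹ ^ 2)
    (Eventually.of_forall fun x => ?_)
  · exact Continuous.inv₀ (by fun_prop) (fun x => by
      simpa [Complex.normSq_eq_zero] using sub_ne hw x)
  · rw [← Complex.normSq_inv, Complex.normSq_eq_norm_sq, norm_pow, norm_norm]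
    gcongr
    exact norm_inv_le hw x

lemma stT_im {μ : Measure ℝ} [IsFiniteMeasure μ] {w : ℂ} (hw : w ∈ UHP) :
    (stT μ w).im = w.im * Ifun μ w := by
  unfold stT Ifun
  have := integral_im (𝕜 := ℂ) (int_inv (μ := μ) hw)
  simp only [RCLike.im_to_complex] at this
  rw [← this, ← integral_const_mul]
  congr 1
  ext x
  simp [Complex.inv_im, div_eq_mul_inv]

lemma Ifun_pos {μ : Measure ℝ} [IsProbabilityMeasure μ] {w : ℂ} (hw : w ∈ UHP) :
    0 < Ifun μ w := by
  unfold Ifun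
  rw [integral_pos_iff_support_of_nonneg (fun x => inv_nonneg.2 (Complex.normSq_nonneg _))
    (int_nsq hw)]
  have : Function.support (fun x : ℝ => (Complex.normSq ((x : ℂ) - w))⁻¹) = univ := by
    ext x
    simp [Complex.normSq_eq_zero, sub_ne hw x]
  rw [this]
  simp

lemma stT_ne {μ : Measure ℝ} [IsProbabilityMeasure μ] {w : ℂ} (hw : w ∈ UHP) :
    stT μ w ≠ 0 := by
  intro h
  have h1 := stT_im (μ := μ) hw
  rw [h] at h1
  have := mul_pos (show 0 < w.im from hw) (Ifun_pos (μ := μ) hw)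
  simp at h1
  rcases h1 with h1 | h1 <;> simp [h1] at this

/-- `A(w) = Im F(w) / Im w - 1`. -/
noncomputable def Af (μ : Measure ℝ) (w : ℂ) : ℝ := Ifun μ w / Complex.normSq (stT μ w) - 1

lemma nrT_im {μ : Measure ℝ} [IsProbabilityMeasure μ] {w : ℂ} (hw : w ∈ UHP) :
    (nrT μ w).im = w.im * (1 + Af μ w) := by
  unfold nrT Af
  rw [Complex.neg_im, Complex.inv_im, stT_im hw]
  ring

lemma Af_eq {μ : Measure ℝ} [IsProbabilityMeasure μ] {w : ℂ} (hw : w ∈ UHP) :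
    Integrable (fun x : ℝ => ‖((x : ℂ) - w)⁻¹ / stT μ w - 1‖ ^ 2) μ ∧
    Af μ w = ∫ x : ℝ, ‖((x : ℂ) - w)⁻¹ / stT μ w - 1‖ ^ 2 ∂μ := by
  have hm := stT_ne (μ := μ) hw
  have e : (fun x : ℝ => ‖((x : ℂ) - w)⁻¹ / stT μ w - 1‖ ^ 2) = fun x : ℝ =>
      (Complex.normSq ((x : ℂ) - w))⁻¹ * (Complex.normSq (stT μ w))⁻¹
        - 2 * (((x : ℂ) - w)⁻¹ / stT μ w).re + 1 := by
    ext x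
    rw [← Complex.normSq_eq_norm_sq, Complex.normSq_sub]
    simp [Complex.normSq_inv, div_eq_mul_inv]
    ring
  have i1 := (int_nsq (μ := μ) hw).mul_const (Complex.normSq (stT μ w))⁻¹
  have i2' : Integrable (fun x : ℝ => ((x : ℂ) - w)⁻¹ / stT μ w) μ := (int_inv hw).div_const _
  have i2 : Integrable (fun x : ℝ => 2 * (((x : ℂ) - w)⁻¹ / stT μ w).re) μ := i2'.re.const_mul 2
  have hre := integral_re (𝕜 := ℂ) i2'
  simp only [RCLike.re_to_complex] at hre
  rw [e]
  have i12 : Integrable (fun x : ℝ => (Complex.normSq ((x : ℂ) - w))⁻¹ *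
      (Complex.normSq (stT μ w))⁻¹ - 2 * (((x : ℂ) - w)⁻¹ / stT μ w).re) μ := i1.sub i2
  refine ⟨i12.add (integrable_const 1), ?_⟩
  rw [integral_add i12 (integrable_const 1), integral_sub i1 i2, integral_mul_const,
    integral_const_mul, hre, integral_div]
  change _ = Ifun μ w * _ - 2 * (stT μ w / stT μ w).re + _
  rw [div_self hm]
  simp [Af, div_eq_mul_inv]
  ring

lemma Af_nonneg {μ : Measure ℝ} [IsProbabilityMeasure μ] {w : ℂ} (hw : w ∈ UHP) :
    0 ≤ Af μ w := by
  rw [(Af_eq hw).2]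
  exact integral_nonneg fun x => by positivity

variable {μ : Measure ℝ} [IsProbabilityMeasure μ] {R : ℝ}

lemma int_bdd (hR : ∀ᵐ x ∂μ, |x| ≤ R) {E : Type*} [NormedAddCommGroup E] {g : ℝ → E}
    (hg : Continuous g) : Integrable g μ := by
  obtain ⟨C, hC⟩ := (isCompact_Icc (a := -R) (b := R)).exists_bound_of_continuousOn hg.continuousOn
  refine Integrable.of_bound hg.aestronglyMeasurable C ?_
  filter_upwards [hR] with x hx
  exact hC x (abs_le.1 hx)

lemma F_id (hR : ∀ᵐ x ∂μ, |x| ≤ R) {w : ℂ} (hw : w ∈ UHP) :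
    nrT μ w - w + ((∫ x, x ∂μ : ℝ) : ℂ) =
      -(∫ x : ℝ, ((x : ℂ) - ((∫ x, x ∂μ : ℝ) : ℂ)) * (((x : ℂ) - w)⁻¹ / stT μ w - 1) ∂μ) := by
  set m1 : ℝ := ∫ x, x ∂μ with hm1
  have hm := stT_ne (μ := μ) hw
  have e : (fun x : ℝ => ((x : ℂ) - m1) * (((x : ℂ) - w)⁻¹ / stT μ w - 1)) = fun x : ℝ =>
      ((stT μ w)⁻¹ + m1) + (w - m1) / stT μ w * ((x : ℂ) - w)⁻¹ - (x : ℂ) := by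
    ext x
    have := sub_ne hw x
    field_simp
    ring
  have ix : Integrable (fun x : ℝ => (x : ℂ)) μ := int_bdd hR (by fun_prop)
  have i2 := (int_inv (μ := μ) hw).const_mul ((w - m1) / stT μ w)
  have i3 : Integrable (fun x : ℝ => ((stT μ w)⁻¹ + (m1 : ℂ)) +
      (w - m1) / stT μ w * ((x : ℂ) - w)⁻¹) μ := (integrable_const _).add i2
  rw [e, integral_sub i3 ix, integral_add (integrable_const _) i2,
    integral_const_mul, integral_complex_ofReal, ← hm1]
  change _ = -(_ + _ * stT μ w - _)
  simp [nrT]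
  field_simp
  ring

lemma F_bdd (hR : ∀ᵐ x ∂μ, |x| ≤ R) {w : ℂ} (hw : w ∈ UHP) :
    ‖nrT μ w - w + ((∫ x, x ∂μ : ℝ) : ℂ)‖ ≤
      (∫ x, ‖(x : ℂ) - ((∫ x, x ∂μ : ℝ) : ℂ)‖ ^ 2 ∂μ) + Af μ w := by
  obtain ⟨hi, hA⟩ := Af_eq (μ := μ) hw
  rw [F_id hR hw, norm_neg, hA]
  set m1 : ℝ := ∫ x, x ∂μ with hm1
  have ia : Integrable (fun x : ℝ => ‖(x : ℂ) - m1‖ ^ 2) μ := int_bdd hR (by fun_prop)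
  rw [← integral_add ia hi]
  refine norm_integral_le_of_norm_le (ia.add hi) (Eventually.of_forall fun x => ?_)
  rw [norm_mul]
  nlinarith [sq_nonneg (‖(x : ℂ) - m1‖ - ‖((x : ℂ) - w)⁻¹ / stT μ w - 1‖),
    sq_nonneg (‖(x : ℂ) - m1‖), sq_nonneg ‖((x : ℂ) - w)⁻¹ / stT μ w - 1‖]

lemma ratio_bound {w : ℂ} {x : ℝ} (hx : |x| ≤ R) (hw : 2 * R + 1 ≤ ‖w‖) :
    ‖w / ((x : ℂ) - w)‖ ≤ 2 := by
  have h1 : ‖w‖ - ‖(x : ℂ)‖ ≤ ‖(x : ℂ) - w‖ := by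
    rw [norm_sub_rev]; exact norm_sub_norm_le _ _
  have h2 : ‖(x : ℂ)‖ = |x| := by simp
  have h3 := abs_nonneg x
  rw [norm_div, div_le_iff₀ (by linarith)]
  linarith

lemma ratio_tendsto (x : ℝ) :
    Tendsto (fun w : ℂ => w / ((x : ℂ) - w)) (comap (fun w : ℂ => ‖w‖) atTop) (𝓝 (-1)) := by
  rw [comap_norm_atTop]
  have h1 : Tendsto (fun w : ℂ => (x : ℂ) * w⁻¹ - 1) (Bornology.cobounded ℂ) (𝓝 (x * 0 - 1)) :=
    (tendsto_const_nhds.mul tendsto_inv₀_cobounded).sub_const 1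
  have h2 := h1.inv₀ (by simp)
  simp only [mul_zero, zero_sub, inv_neg, inv_one] at h2
  refine h2.congr' ?_
  filter_upwards [Bornology.eventually_ne_cobounded (0 : ℂ)] with w hw
  have e : (x : ℂ) * w⁻¹ - 1 = (x - w) / w := by field_simp
  rw [e, inv_div]

lemma dct {ν : Measure ℝ} [IsFiniteMeasure ν] (hR : ∀ᵐ x ∂ν, |x| ≤ R) {g : ℝ → ℂ}
    (hg : Integrable g ν) :
    Tendsto (fun w : ℂ => ∫ x : ℝ, g x * (w / ((x : ℂ) - w)) ∂ν)
      (comap (fun w : ℂ => ‖w‖) atTop) (𝓝 (-∫ x, g x ∂ν)) := by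
  rw [← integral_neg]
  refine tendsto_integral_filter_of_dominated_convergence (fun x => ‖g x‖ * 2) ?_ ?_ ?_ ?_
  · refine Eventually.of_forall fun w => hg.aestronglyMeasurable.mul ?_
    exact Measurable.aestronglyMeasurable (by fun_prop)
  · filter_upwards [tendsto_comap.eventually_ge_atTop (2 * R + 1)] with w hw
    filter_upwards [hR] with x hx
    rw [norm_mul]
    gcongr
    exact ratio_bound hx hw
  · exact hg.norm.mul_const 2
  · refine Eventually.of_forall fun x => ?_
    simpa using (ratio_tendsto x).const_mul (g x)

lemma dct2 (hR : ∀ᵐ x ∂μ, |x| ≤ R) :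
    Tendsto (fun w : ℂ => ∫ x : ℝ, ‖w / ((x : ℂ) - w)‖ ^ 2 ∂μ)
      (comap (fun w : ℂ => ‖w‖) atTop) (𝓝 1) := by
  have e : (1 : ℝ) = ∫ x : ℝ, (1 : ℝ) ∂μ := by simp
  rw [e]
  refine tendsto_integral_filter_of_dominated_convergence (fun x => 2 ^ 2) ?_ ?_ ?_ ?_
  · exact Eventually.of_forall fun w => Measurable.aestronglyMeasurable (by fun_prop)
  · filter_upwards [tendsto_comap.eventually_ge_atTop (2 * R + 1)] with w hw
    filter_upwards [hR] with x hx
    rw [norm_pow, norm_norm]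
    gcongr
    exact ratio_bound hx hw
  · exact integrable_const _
  · refine Eventually.of_forall fun x => ?_
    simpa using ((ratio_tendsto x).norm).pow 2

lemma wm_tendsto {ν : Measure ℝ} [IsFiniteMeasure ν] (hR : ∀ᵐ x ∂ν, |x| ≤ R) :
    Tendsto (fun w : ℂ => w * stT ν w)
      (comap (fun w : ℂ => ‖w‖) atTop) (𝓝 (-((ν univ).toReal : ℂ))) := by
  have := dct hR (integrable_const (μ := ν) (1 : ℂ))
  simp only [one_mul, integral_const, smul_eq_mul, mul_one] at this
  have e : (fun w : ℂ => w * stT ν w) = fun w : ℂ => ∫ x : ℝ, w / ((x : ℂ) - w) ∂ν := by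
    ext w
    simp only [stT, div_eq_mul_inv, integral_const_mul]
  rw [e]
  convert this using 2
  simp [Measure.real]

lemma Af_tendsto (hR : ∀ᵐ x ∂μ, |x| ≤ R) :
    Tendsto (Af μ) (comap (fun w : ℂ => ‖w‖) atTop) (𝓝 0) := by
  have h1 := dct2 hR
  have h2 := ((wm_tendsto hR).norm).pow 2
  have h3 := (h1.div h2 (by simp)).sub_const 1
  simp only [measure_univ, ENNReal.toReal_one, Complex.ofReal_one, norm_neg, norm_one, one_pow,
    div_one, sub_self] at h3
  refine h3.congr' ?_
  filter_upwards [tendsto_comap.eventually_ge_atTop 1] with w hw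
  have hw0 : ‖w‖ ≠ 0 := by positivity
  unfold Af Ifun
  simp only [Pi.div_apply, mul_pow, Complex.normSq_eq_norm_sq, norm_div, div_pow]
  simp only [div_eq_mul_inv (‖w‖ ^ 2), integral_const_mul]
  rw [norm_mul, mul_pow, mul_div_mul_left _ _ (by positivity)]

lemma F_tendsto (hR : ∀ᵐ x ∂μ, |x| ≤ R) :
    Tendsto (fun w : ℂ => w * (nrT μ w - w + ((∫ x, x ∂μ : ℝ) : ℂ)))
      (comap (fun w : ℂ => ‖w‖) atTop ⊓ 𝓟 UHP)
      (𝓝 (-(((∫ x, x ^ 2 ∂μ) - (∫ x, x ∂μ) ^ 2 : ℝ) : ℂ))) := by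
  set m1 : ℝ := ∫ x, x ∂μ with hm1
  have ix : Integrable (fun x : ℝ => x) μ := int_bdd hR (by fun_prop)
  have ix2 : Integrable (fun x : ℝ => x ^ 2) μ := int_bdd hR (by fun_prop)
  have ig : Integrable (fun x : ℝ => (x : ℂ) * (x - m1)) μ := int_bdd hR (by fun_prop)
  have hg : ∫ x : ℝ, (x : ℂ) * (x - m1) ∂μ = (((∫ x, x ^ 2 ∂μ) - m1 ^ 2 : ℝ) : ℂ) := by
    have : (fun x : ℝ => (x : ℂ) * (x - m1)) = fun x : ℝ => ((x ^ 2 - m1 * x : ℝ) : ℂ) := by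
      ext x; push_cast; ring
    rw [this, integral_complex_ofReal, integral_sub ix2 (ix.const_mul _), integral_const_mul,
      ← hm1]
    congr 1; ring
  have h1 := dct hR ig
  have h2 := wm_tendsto hR
  have h3 := (h1.div h2 (by simp)).neg.mono_left (inf_le_left (b := 𝓟 UHP))
  rw [hg] at h3
  simp only [measure_univ, ENNReal.toReal_one, Complex.ofReal_one, neg_div_neg_eq, div_one] at h3
  refine h3.congr' ?_
  filter_upwards [mem_inf_of_right (mem_principal_self UHP)] with w hw
  have hw0 : w ≠ 0 := by rintro rfl; simp [UHP] at hw
  have hm := stT_ne (μ := μ) hw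
  have e : (fun x : ℝ => (x : ℂ) * (x - m1) * (w / ((x : ℂ) - w))) = fun x : ℝ =>
      w * ((x : ℂ) - m1) + w ^ 2 + w ^ 2 * (w - m1) * ((x : ℂ) - w)⁻¹  := by
    ext x
    have := sub_ne hw x
    field_simp
    ring
  have ixc : Integrable (fun x : ℝ => w * ((x : ℂ) - m1)) μ := int_bdd hR (by fun_prop)
  have i2 := (int_inv (μ := μ) hw).const_mul (w ^ 2 * (w - m1))
  have ixc' : Integrable (fun x : ℝ => (x : ℂ)) μ := int_bdd hR (by fun_prop)
  have i3 : Integrable (fun x : ℝ => w * ((x : ℂ) - m1) + w ^ 2) μ :=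
    ixc.add (integrable_const _)
  simp only [Pi.div_apply]
  rw [e, integral_add i3 i2, integral_add ixc (integrable_const _),
    integral_const_mul, integral_const_mul, integral_sub ixc' (integrable_const _),
    integral_complex_ofReal, ← hm1]
  change -((_ + _ * stT μ w) / _) = _
  simp [nrT]
  field_simp
  ring

lemma UHP_sub : UHP ⊆ CUHP := by
  intro z hz
  have h : 0 < z.im := hz
  exact h.le

lemma cauchy_half {h : ℂ → ℂ} (hc : ContinuousOn h CUHP) (hd : DifferentiableOn ℂ h UHP)
    {C R0 : ℝ} (hb : ∀ z ∈ CUHP, R0 ≤ ‖z‖ → ‖h z‖ ≤ C / ‖z‖ ^ 2) :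
    Tendsto (fun r : ℝ => ∫ x : ℝ in (-r)..r, h x) atTop (𝓝 0) := by
  have hC : Tendsto (fun r : ℝ => 4 * |C| * r⁻¹) atTop (𝓝 0) := by
    simpa using tendsto_inv_atTop_zero.const_mul (4 * |C|)
  refine squeeze_zero_norm' ?_ hC
  filter_upwards [eventually_ge_atTop R0, eventually_gt_atTop 0] with r hr hr0
  have key := Complex.integral_boundary_rect_eq_zero_of_continuousOn_of_differentiableOn h
    ⟨-r, 0⟩ ⟨r, r⟩ (hc.mono ?_) (hd.mono ?_)
  rotate_left
  · intro z hz
    rw [Complex.mem_reProdIm] at hz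
    have := hz.2
    rw [uIcc_of_le hr0.le] at this
    exact this.1
  · intro z hz
    rw [Complex.mem_reProdIm] at hz
    have := hz.2
    simp only [min_eq_left hr0.le] at this
    exact this.1
  simp only [Complex.ofReal_zero, zero_mul, add_zero] at key
  have hbd : ∀ z ∈ CUHP, r ≤ ‖z‖ → ‖h z‖ ≤ |C| / r ^ 2 := by
    intro z hz hrz
    calc ‖h z‖ ≤ C / ‖z‖ ^ 2 := hb z hz (hr.trans hrz)
      _ ≤ |C| / ‖z‖ ^ 2 := by gcongr; exact le_abs_self C
      _ ≤ |C| / r ^ 2 := by gcongr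
  have b1 : ‖∫ x : ℝ in (-r)..r, h (x + r * Complex.I)‖ ≤ |C| / r ^ 2 * |r - (-r)| := by
    refine intervalIntegral.norm_integral_le_of_norm_le_const fun x _ => hbd _ ?_ ?_
    · simp [CUHP, hr0.le]
    · have := Complex.abs_im_le_norm ((x : ℂ) + r * Complex.I)
      simpa [abs_of_pos hr0] using this
  have b2 : ∀ s : ℝ, |s| = r → ‖∫ y : ℝ in (0 : ℝ)..r, h (s + y * Complex.I)‖ ≤
      |C| / r ^ 2 * |r - 0| := by
    intro s hs
    refine intervalIntegral.norm_integral_le_of_norm_le_const fun y hy => hbd _ ?_ ?_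
    · rw [uIoc_of_le hr0.le] at hy
      simp [CUHP, hy.1.le]
    · have := Complex.abs_re_le_norm ((s : ℂ) + y * Complex.I)
      simpa [hs] using this
  have c1 := b2 r (abs_of_pos hr0)
  have c2 := b2 (-r) (by rw [abs_neg, abs_of_pos hr0])
  have e : ∫ x : ℝ in (-r)..r, h x = (∫ x : ℝ in (-r)..r, h (x + r * Complex.I)) -
      Complex.I • (∫ y : ℝ in (0 : ℝ)..r, h ((r : ℝ) + y * Complex.I)) +
      Complex.I • (∫ y : ℝ in (0 : ℝ)..r, h ((-r : ℝ) + y * Complex.I)) := by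
    linear_combination key
  rw [e]
  refine (norm_add_le _ _).trans ?_
  refine (add_le_add (norm_sub_le _ _) le_rfl).trans ?_
  rw [norm_smul, norm_smul, Complex.norm_I, one_mul, one_mul]
  refine (add_le_add (add_le_add b1 c1) c2).trans (le_of_eq ?_)
  rw [sub_zero, sub_neg_eq_add, abs_of_pos hr0, abs_of_pos (show 0 < r + r by linarith)]
  field_simp
  ring

lemma conj_sub_ne {z : ℂ} (hz : z ∈ UHP) {ζ : ℂ} (hζ : ζ ∈ CUHP) :
    ζ - (starRingEnd ℂ) z ≠ 0 := by
  intro h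
  have := congrArg Complex.im h
  simp at this
  have h1 : 0 < z.im := hz
  have h2 : 0 ≤ ζ.im := hζ
  linarith

lemma norm_sub_ge {z ζ : ℂ} (h : 2 * ‖z‖ + 1 ≤ ‖ζ‖) : ‖ζ‖ / 2 ≤ ‖ζ - z‖ := by
  have := norm_sub_norm_le ζ z
  linarith

lemma poisson_int {z : ℂ} (hz : z ∈ UHP) :
    Tendsto (fun r : ℝ => ∫ x : ℝ in (-r)..r,
      (z - (starRingEnd ℂ) z) / (((x : ℂ) - (starRingEnd ℂ) z) * ((x : ℂ) - z)))
      atTop (𝓝 (2 * Real.pi * Complex.I)) := by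
  have hy : 0 < z.im := hz
  have e : ∀ x : ℝ, (z - (starRingEnd ℂ) z) / (((x : ℂ) - (starRingEnd ℂ) z) * ((x : ℂ) - z)) =
      (2 * Complex.I) * ((z.im⁻¹ * (1 + (z.im⁻¹ * x - z.re / z.im) ^ 2)⁻¹ : ℝ) : ℂ) := by
    intro x
    have h1 : ((x : ℂ) - (starRingEnd ℂ) z) * ((x : ℂ) - z) =
        (((x - z.re) ^ 2 + z.im ^ 2 : ℝ) : ℂ) := by
      apply Complex.ext
      · rw [Complex.ofReal_re]; simp; ring
      · rw [Complex.ofReal_im]; simp; ring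
    have h2 : z - (starRingEnd ℂ) z = 2 * Complex.I * (z.im : ℂ) := by
      apply Complex.ext <;> simp
      ring
    have h3 : z.im⁻¹ * (1 + (z.im⁻¹ * x - z.re / z.im) ^ 2)⁻¹ =
        z.im / ((x - z.re) ^ 2 + z.im ^ 2) := by
      have : (x - z.re) ^ 2 + z.im ^ 2 ≠ 0 := by positivity
      have : 1 + (z.im⁻¹ * x - z.re / z.im) ^ 2 ≠ 0 := by positivity
      field_simp
      ring
    rw [h1, h2, h3]
    push_cast
    ring
  simp only [e, intervalIntegral.integral_const_mul, intervalIntegral.integral_ofReal]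
  have h4 : Tendsto (fun r : ℝ => z.im⁻¹ * ∫ x : ℝ in (-r)..r,
      (1 + (z.im⁻¹ * x - z.re / z.im) ^ 2)⁻¹) atTop (𝓝 Real.pi) := by
    have hcomp : ∀ r : ℝ, z.im⁻¹ * ∫ x : ℝ in (-r)..r, (1 + (z.im⁻¹ * x - z.re / z.im) ^ 2)⁻¹ =
        Real.arctan (z.im⁻¹ * r - z.re / z.im) - Real.arctan (z.im⁻¹ * (-r) - z.re / z.im) := by
      intro r
      rw [intervalIntegral.integral_comp_mul_sub (fun u : ℝ => (1 + u ^ 2)⁻¹) (by positivity),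
        integral_inv_one_add_sq]
      simp [hy.ne']
    simp only [hcomp]
    have l1 : Tendsto (fun r : ℝ => z.im⁻¹ * r - z.re / z.im) atTop atTop :=
      tendsto_atTop_add_const_right _ _ (tendsto_id.const_mul_atTop (by positivity))
    have l2 : Tendsto (fun r : ℝ => z.im⁻¹ * (-r) - z.re / z.im) atTop atBot :=
      tendsto_atBot_add_const_right _ _
        (tendsto_neg_atTop_atBot.const_mul_atBot (by positivity))
    have l3 := (Real.tendsto_arctan_atTop.mono_right nhdsWithin_le_nhds).comp l1
    have l4 := (Real.tendsto_arctan_atBot.mono_right nhdsWithin_le_nhds).comp l2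
    have l5 := l3.sub l4
    have e5 : Real.pi / 2 - -(Real.pi / 2) = Real.pi := by ring
    rw [e5] at l5
    exact l5
  have h5 := ((Complex.continuous_ofReal.tendsto _).comp h4).const_mul (2 * Complex.I)
  convert h5 using 2
  · simp
  · ring

lemma represent {f : ℂ → ℂ} (hc : ContinuousOn f CUHP) (hd : DifferentiableOn ℂ f UHP)
    {C R0 : ℝ} (hb : ∀ z ∈ CUHP, R0 ≤ ‖z‖ → ‖f z‖ ≤ C / ‖z‖)
    (hs : ∀ x : ℝ, R0 ≤ |x| → (f x).im = 0) {z : ℂ} (hz : z ∈ UHP) :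
    ∫ x : ℝ, ((f x).im : ℂ) * ((x : ℂ) - z)⁻¹ = Real.pi * f z := by
  have hreal : ∀ x : ℝ, (x : ℂ) ∈ CUHP := fun x => by simp [CUHP]
  have hsub := UHP_sub
  have fc : Continuous fun x : ℝ => f x := by
    rw [← continuousOn_univ]
    exact hc.comp (by fun_prop) (fun x _ => hreal x)
  have hC0 : 0 ≤ |C| := abs_nonneg C
  have hnhds : UHP ∈ 𝓝 z := (isOpen_lt continuous_const Complex.continuous_im).mem_nhds hz
  have k1 : Tendsto (fun r : ℝ => ∫ x : ℝ in (-r)..r, f x / ((x : ℂ) - (starRingEnd ℂ) z))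
      atTop (𝓝 0) := by
    refine cauchy_half (h := fun ζ => f ζ / (ζ - (starRingEnd ℂ) z))
      (hc.div (by fun_prop) (fun ζ h => conj_sub_ne hz h))
      (hd.div (by fun_prop) (fun ζ h => conj_sub_ne hz (hsub h)))
      (C := 2 * |C|) (R0 := max R0 (2 * ‖z‖ + 1)) ?_
    intro ζ hζ hR
    have h1 := hb ζ hζ ((le_max_left _ _).trans hR)
    have h2 := norm_sub_ge (z := (starRingEnd ℂ) z) (ζ := ζ)
      (by rw [Complex.norm_conj]; exact (le_max_right _ _).trans hR)
    have h3 : 0 < ‖ζ‖ := by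
      have := (le_max_right R0 (2 * ‖z‖ + 1)).trans hR
      have := norm_nonneg z
      linarith
    rw [norm_div]
    calc ‖f ζ‖ / ‖ζ - (starRingEnd ℂ) z‖ ≤ (|C| / ‖ζ‖) / (‖ζ‖ / 2) := by
          gcongr
          exact h1.trans (by gcongr; exact le_abs_self C)
      _ = 2 * |C| / ‖ζ‖ ^ 2 := by field_simp
  set N : ℂ → ℂ := fun ζ => f ζ - f z * (z - (starRingEnd ℂ) z) / (ζ - (starRingEnd ℂ) z) with hN
  have hzz := conj_sub_ne hz (hsub hz)
  have Nz : N z = 0 := by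
    simp only [hN]
    field_simp
    ring
  have Nc : ContinuousOn N CUHP :=
    hc.sub (continuousOn_const.div (by fun_prop) (fun ζ h => conj_sub_ne hz h))
  have Nd : DifferentiableOn ℂ N UHP :=
    hd.sub ((differentiableOn_const _).div (by fun_prop) (fun ζ h => conj_sub_ne hz (hsub h)))
  have k2 : Tendsto (fun r : ℝ => ∫ x : ℝ in (-r)..r, dslope N z x) atTop (𝓝 0) := by
    refine cauchy_half (h := dslope N z)
      ((continuousOn_dslope (mem_of_superset hnhds hsub)).2 ⟨Nc, Nd.differentiableAt hnhds⟩)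
      ((Complex.differentiableOn_dslope hnhds).2 Nd)
      (C := 2 * (|C| + 2 * ‖f z * (z - (starRingEnd ℂ) z)‖)) (R0 := max R0 (2 * ‖z‖ + 1)) ?_
    intro ζ hζ hR
    have hR' := (le_max_right R0 (2 * ‖z‖ + 1)).trans hR
    have h1 := hb ζ hζ ((le_max_left _ _).trans hR)
    have h2 := norm_sub_ge (z := (starRingEnd ℂ) z) (ζ := ζ)
      (by rw [Complex.norm_conj]; exact hR')
    have h2' := norm_sub_ge (z := z) (ζ := ζ) hR'
    have h3 : 0 < ‖ζ‖ := by
      have := norm_nonneg z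
      linarith
    have hne : ζ ≠ z := by
      rintro rfl
      linarith
    rw [dslope_of_ne _ hne, slope_def_field, Nz, sub_zero, norm_div]
    have hNb : ‖N ζ‖ ≤ |C| / ‖ζ‖ + ‖f z * (z - (starRingEnd ℂ) z)‖ / (‖ζ‖ / 2) := by
      refine (norm_sub_le _ _).trans ?_
      rw [norm_div _ (ζ - _)]
      gcongr
      exact h1.trans (by gcongr; exact le_abs_self C)
    calc ‖N ζ‖ / ‖ζ - z‖ ≤ (|C| / ‖ζ‖ + ‖f z * (z - (starRingEnd ℂ) z)‖ / (‖ζ‖ / 2)) / (‖ζ‖ / 2) := by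
          gcongr
      _ = _ := by field_simp
  have k1' : Tendsto (fun r : ℝ => ∫ x : ℝ in (-r)..r, (starRingEnd ℂ) (f x) / ((x : ℂ) - z))
      atTop (𝓝 0) := by
    have := (Complex.continuous_conj.tendsto 0).comp k1
    simp only [map_zero] at this
    refine this.congr fun r => ?_
    simp only [Function.comp, intervalIntegral, map_sub, ← integral_conj]
    simp
  have k3 := poisson_int hz
  have c1 : Continuous fun x : ℝ => (starRingEnd ℂ) (f x) / ((x : ℂ) - z) :=
    (Complex.continuous_conj.comp fc).div (by fun_prop) (fun x => sub_ne hz x)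
  have c2 : Continuous fun x : ℝ => dslope N z x := by
    rw [← continuousOn_univ]
    exact ((continuousOn_dslope (mem_of_superset hnhds hsub)).2
      ⟨Nc, Nd.differentiableAt hnhds⟩).comp (by fun_prop) (fun x _ => hreal x)
  have c21 : Continuous fun x : ℝ => dslope N z x - (starRingEnd ℂ) (f x) / ((x : ℂ) - z) :=
    c2.sub c1
  have c3 : Continuous fun x : ℝ =>
      (z - (starRingEnd ℂ) z) / (((x : ℂ) - (starRingEnd ℂ) z) * ((x : ℂ) - z)) :=
    continuous_const.div (by fun_prop)
      (fun x => mul_ne_zero (conj_sub_ne hz (hreal x)) (sub_ne hz x))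
  have k4 := (k2.sub k1').add (k3.const_mul (f z))
  have hint : ∀ r : ℝ, (∫ x : ℝ in (-r)..r, dslope N z x) -
      (∫ x : ℝ in (-r)..r, (starRingEnd ℂ) (f x) / ((x : ℂ) - z)) + f z *
      (∫ x : ℝ in (-r)..r,
        (z - (starRingEnd ℂ) z) / (((x : ℂ) - (starRingEnd ℂ) z) * ((x : ℂ) - z))) =
      ∫ x : ℝ in (-r)..r, 2 * Complex.I * (((f x).im : ℂ) * ((x : ℂ) - z)⁻¹) := by
    intro r
    rw [← intervalIntegral.integral_const_mul,
      ← intervalIntegral.integral_sub (c2.intervalIntegrable _ _) (c1.intervalIntegrable _ _),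
      ← intervalIntegral.integral_add (c21.intervalIntegrable _ _)
        ((c3.const_mul (f z)).intervalIntegrable _ _)]
    refine intervalIntegral.integral_congr fun x _ => ?_
    have hne : (x : ℂ) ≠ z := sub_ne_zero.1 (sub_ne hz x)
    rw [dslope_of_ne _ hne, slope_def_field, Nz, sub_zero]
    simp only [hN]
    have h1 := conj_sub_ne hz (hreal x)
    have h2 := sub_ne hz x
    have h3 : f x - (starRingEnd ℂ) (f x) = 2 * Complex.I * ((f x).im : ℂ) := by
      apply Complex.ext <;> simp
      ring
    rw [← mul_assoc, ← h3]
    field_simp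
    ring
  simp only [hint, intervalIntegral.integral_const_mul] at k4
  have hfi : Integrable (fun x : ℝ => ((f x).im : ℂ) * ((x : ℂ) - z)⁻¹) := by
    refine Continuous.integrable_of_hasCompactSupport ?_ ?_
    · exact (Complex.continuous_ofReal.comp (Complex.continuous_im.comp fc)).mul (cont_inv hz)
    · refine HasCompactSupport.intro (isCompact_Icc (a := -R0) (b := R0)) fun x hx => ?_
      rw [hs x ?_]
      · simp
      · by_contra h
        push Not at h
        exact hx (abs_le.1 h.le)
  have k5 := (intervalIntegral_tendsto_integral hfi tendsto_neg_atTop_atBot tendsto_id).const_mul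
    (2 * Complex.I)
  have := tendsto_nhds_unique k5 k4
  have hI : (2 * Complex.I) ≠ 0 := by simp
  apply mul_left_cancel₀ hI
  rw [this]
  ring

lemma UHP_eta (x : ℝ) {η : ℝ} (hη : 0 < η) : (x : ℂ) + (η : ℂ) * Complex.I ∈ UHP := by
  simp [UHP, hη]

lemma nsq_eta (x η y : ℝ) :
    Complex.normSq ((y : ℂ) - ((x : ℂ) + (η : ℂ) * Complex.I)) = (y - x) ^ 2 + η ^ 2 := by
  simp [Complex.normSq_apply]
  ring

lemma ball_le (x : ℝ) {η : ℝ} (hη : 0 < η) :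
    (μ (Metric.closedBall x η)).toReal ≤
      2 * η * (stT μ ((x : ℂ) + (η : ℂ) * Complex.I)).im := by
  have hz := UHP_eta x hη
  rw [stT_im hz]
  have him : ((x : ℂ) + (η : ℂ) * Complex.I).im = η := by simp
  rw [him]
  have h1 : ∫ y, (Metric.closedBall x η).indicator (fun _ => (1 : ℝ) / (2 * η ^ 2)) y ∂μ ≤
      Ifun μ ((x : ℂ) + (η : ℂ) * Complex.I) := by
    refine integral_mono ((integrable_const _).indicator measurableSet_closedBall) (int_nsq hz) ?_
    intro y
    simp only
    rw [nsq_eta]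
    by_cases hy : y ∈ Metric.closedBall x η
    · rw [indicator_of_mem hy, one_div]
      rw [Metric.mem_closedBall, Real.dist_eq] at hy
      have : (y - x) ^ 2 ≤ η ^ 2 := by
        rw [← sq_abs (y - x)]; gcongr
      gcongr
      linarith
    · rw [indicator_of_notMem hy]; positivity
  rw [integral_indicator_const _ measurableSet_closedBall, smul_eq_mul] at h1
  change μ.real _ ≤ _
  have h2 : μ.real (Metric.closedBall x η) =
      2 * η * (η * (μ.real (Metric.closedBall x η) * (1 / (2 * η ^ 2)))) := by
    field_simp
  rw [h2]
  gcongr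

lemma meas_le (s : Set ℝ) {C : ℝ}
    (h : ∀ x ∈ s, ∀ᶠ η : ℝ in 𝓝[>] 0, (stT μ ((x : ℂ) + (η : ℂ) * Complex.I)).im ≤ C) :
    μ s ≤ ENNReal.ofReal C * volume s := by
  have := (Besicovitch.vitaliFamily μ).measure_le_of_frequently_le (ρ := μ)
    ((C.toNNReal) • (volume : Measure ℝ)) Measure.AbsolutelyContinuous.rfl s ?_
  · simpa [ENNReal.ofReal] using this
  intro x hx
  refine (Besicovitch.tendsto_filterAt μ x).frequently (Eventually.frequently ?_)
  filter_upwards [h x hx, self_mem_nhdsWithin] with η h1 hη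
  have hη : 0 < η := hη
  have h2 := ball_le (μ := μ) x hη
  have h3 : (μ (Metric.closedBall x η)).toReal ≤ C * (2 * η) := by
    refine h2.trans ?_
    nlinarith
  rw [← ENNReal.ofReal_toReal (measure_ne_top μ (Metric.closedBall x η))]
  refine (ENNReal.ofReal_le_ofReal h3).trans (le_of_eq ?_)
  simp only [Measure.smul_apply, Real.volume_closedBall]
  rw [ENNReal.ofReal_mul' (by positivity)]
  rfl

/-- If `μ` vanishes near `x`, then the imaginary part of the Stieltjes transform vanishes at `x`. -/
lemma im_tendsto_zero {x δ : ℝ} (hδ : 0 < δ) (h : μ (Ioo (x - δ) (x + δ)) = 0) :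
    Tendsto (fun η : ℝ => (stT μ ((x : ℂ) + (η : ℂ) * Complex.I)).im) (𝓝[>] 0) (𝓝 0) := by
  have h0 : Tendsto (fun η : ℝ => η * (δ ^ 2)⁻¹) (𝓝[>] 0) (𝓝 0) := by
    have : Tendsto (fun η : ℝ => η * (δ ^ 2)⁻¹) (𝓝 0) (𝓝 (0 * (δ ^ 2)⁻¹)) :=
      tendsto_id.mul_const _
    rw [zero_mul] at this
    exact this.mono_left nhdsWithin_le_nhds
  refine tendsto_of_tendsto_of_tendsto_of_le_of_le' tendsto_const_nhds h0 ?_ ?_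
  · filter_upwards [self_mem_nhdsWithin] with η hη
    rw [stT_im (UHP_eta x hη)]
    have : 0 < ((x : ℂ) + (η : ℂ) * Complex.I).im := UHP_eta x hη
    exact (mul_pos this (Ifun_pos (UHP_eta x hη))).le
  · filter_upwards [self_mem_nhdsWithin] with η hη
    have hη' : 0 < η := hη
    rw [stT_im (UHP_eta x hη)]
    have him : ((x : ℂ) + (η : ℂ) * Complex.I).im = η := by simp
    rw [him]
    gcongr
    have : Ifun μ ((x : ℂ) + (η : ℂ) * Complex.I) ≤ ∫ y, (δ ^ 2)⁻¹ ∂μ := by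
      refine integral_mono_ae (int_nsq (UHP_eta x hη)) (integrable_const _) ?_
      have hae : ∀ᵐ y ∂μ, y ∉ Ioo (x - δ) (x + δ) := measure_eq_zero_iff_ae_notMem.1 h
      filter_upwards [hae] with y hy
      rw [nsq_eta]
      have : δ ^ 2 ≤ (y - x) ^ 2 := by
        rw [← sq_abs (y - x)]
        gcongr
        by_contra hlt
        push Not at hlt
        rw [abs_lt] at hlt
        exact hy ⟨by linarith, by linarith⟩
      gcongr
      nlinarith
    simpa using this

/-- The filter at infinity in the upper half-plane. -/
noncomputable def Linf : Filter ℂ := comap (fun w : ℂ => ‖w‖) atTop ⊓ 𝓟 UHP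

instance : Linf.NeBot := by
  have : Tendsto (fun η : ℝ => (η : ℂ) * Complex.I) atTop Linf := by
    refine tendsto_inf.2 ⟨tendsto_comap_iff.2 ?_, tendsto_principal.2 ?_⟩
    · refine tendsto_abs_atTop_atTop.congr fun η => ?_
      simp
    · filter_upwards [eventually_gt_atTop 0] with η hη
      simp [UHP, hη]
  exact this.neBot

section subord

variable {t : ℝ} {ω : ℂ → ℂ}

lemma im_id (hω : IsSubordT μ t ω) {z : ℂ} (hz : z ∈ UHP) :
    z.im = (ω z).im * (1 - (t - 1) * Af μ (ω z)) := by
  have h := congrArg Complex.im (hω.eqn z hz)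
  have e : ((t : ℂ) - 1) = ((t - 1 : ℝ) : ℂ) := by push_cast; ring
  rw [e, Complex.im_ofReal_mul, nrT_im (hω.maps z hz), Complex.sub_im, Complex.im_ofReal_mul] at h
  linarith

lemma Af_le (hω : IsSubordT μ t ω) {z : ℂ} (hz : z ∈ UHP) : (t - 1) * Af μ (ω z) ≤ 1 := by
  have h := im_id hω hz
  have h1 : 0 < z.im := hz
  have h2 : 0 < (ω z).im := hω.maps z hz
  by_contra hlt
  push Not at hlt
  nlinarith

lemma f_eq (hω : IsSubordT μ t ω) {z : ℂ} (hz : z ∈ UHP) (c : ℂ) :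
    ω z - z + ((t : ℂ) - 1) * c = ((t : ℂ) - 1) * (nrT μ (ω z) - ω z + c) := by
  linear_combination hω.eqn z hz

lemma w_bdd (ht : 1 < t) (hR : ∀ᵐ x ∂μ, |x| ≤ R) (hω : IsSubordT μ t ω) :
    ∃ K, ∀ z ∈ UHP, ‖ω z - z‖ ≤ K := by
  refine ⟨(t - 1) * (∫ x, ‖(x : ℂ) - ((∫ x, x ∂μ : ℝ) : ℂ)‖ ^ 2 ∂μ) + 1 +
    ‖((t : ℂ) - 1) * ((∫ x, x ∂μ : ℝ) : ℂ)‖, fun z hz => ?_⟩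
  have h1 := F_bdd hR (hω.maps z hz)
  have h2 := Af_le hω hz
  have h3 := f_eq hω hz ((∫ x, x ∂μ : ℝ) : ℂ)
  have e : ‖(t : ℂ) - 1‖ = t - 1 := by
    have : ((t : ℂ) - 1) = ((t - 1 : ℝ) : ℂ) := by push_cast; ring
    rw [this, Complex.norm_real, Real.norm_of_nonneg (by linarith)]
  have h4 : ω z - z = ((t : ℂ) - 1) * (nrT μ (ω z) - ω z + ((∫ x, x ∂μ : ℝ) : ℂ)) -
    ((t : ℂ) - 1) * ((∫ x, x ∂μ : ℝ) : ℂ) := by rw [← h3]; ring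
  rw [h4]
  refine (norm_sub_le _ _).trans ?_
  gcongr
  rw [norm_mul, e]
  have h5 := mul_le_mul_of_nonneg_left h1 (show 0 ≤ t - 1 by linarith)
  linarith

lemma w_tendsto (ht : 1 < t) (hR : ∀ᵐ x ∂μ, |x| ≤ R) (hω : IsSubordT μ t ω) :
    Tendsto ω Linf Linf := by
  obtain ⟨K, hK⟩ := w_bdd ht hR hω
  have hU : UHP ∈ Linf := mem_inf_of_right (mem_principal_self UHP)
  refine tendsto_inf.2 ⟨tendsto_comap_iff.2 ?_, tendsto_principal.2 ?_⟩
  · have h1 : Tendsto (fun z : ℂ => ‖z‖ + (-K)) Linf atTop :=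
      tendsto_atTop_add_const_right _ _ (tendsto_comap.mono_left inf_le_left)
    refine tendsto_atTop_mono' _ ?_ h1
    filter_upwards [hU] with z hz
    have := hK z hz
    have h2 := norm_sub_norm_le z (ω z)
    rw [norm_sub_rev] at h2
    simp only [Function.comp]
    linarith
  · filter_upwards [hU] with z hz using hω.maps z hz

lemma zf_tendsto (ht : 1 < t) (hR : ∀ᵐ x ∂μ, |x| ≤ R) (hω : IsSubordT μ t ω) :
    Tendsto (fun z => z * (ω z - z + ((t : ℂ) - 1) * ((∫ x, x ∂μ : ℝ) : ℂ))) Linf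
      (𝓝 (-(((t - 1) * ((∫ x, x ^ 2 ∂μ) - (∫ x, x ∂μ) ^ 2) : ℝ) : ℂ))) := by
  obtain ⟨K, hK⟩ := w_bdd ht hR hω
  have hU : UHP ∈ Linf := mem_inf_of_right (mem_principal_self UHP)
  have hw := w_tendsto ht hR hω
  have hn : Tendsto (fun z => ‖ω z‖) Linf atTop :=
    (tendsto_comap.mono_left inf_le_left : Tendsto (fun w : ℂ => ‖w‖) Linf atTop).comp hw
  have h1 := (F_tendsto hR).comp hw
  have h2 : Tendsto (fun z => 1 - (ω z - z) / ω z) Linf (𝓝 1) := by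
    have : Tendsto (fun z => (ω z - z) / ω z) Linf (𝓝 0) := by
      refine squeeze_zero_norm' (a := fun z => K * ‖ω z‖⁻¹) ?_ ?_
      · filter_upwards [hU] with z hz
        rw [norm_div, div_eq_mul_inv]
        gcongr
        exact hK z hz
      · simpa using (tendsto_inv_atTop_zero.comp hn).const_mul K
    simpa using this.const_sub 1
  have h3 := (h2.mul h1).const_mul ((t : ℂ) - 1)
  convert h3.congr' ?_ using 2
  · push_cast; ring
  · filter_upwards [hU] with z hz
    rw [f_eq hω hz]
    have : ω z ≠ 0 := by
      intro h0
      have h5 : 0 < (ω z).im := hω.maps z hz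
      simp [h0] at h5
    simp only [Function.comp]
    field_simp
    ring

lemma bdry (hω : IsSubordT μ t ω) {z : ℂ} (hz : z ∈ CUHP) :
    Tendsto (fun η : ℝ => ω (z + (η : ℂ) * Complex.I)) (𝓝[>] 0) (𝓝 (ω z)) := by
  have h1 := hω.cont z hz
  refine h1.tendsto.comp (tendsto_nhdsWithin_iff.2 ⟨?_, ?_⟩)
  · have : Continuous fun η : ℝ => z + (η : ℂ) * Complex.I := by fun_prop
    have h := this.tendsto 0
    simp only [Complex.ofReal_zero, zero_mul, add_zero] at h
    exact h.mono_left nhdsWithin_le_nhds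
  · filter_upwards [self_mem_nhdsWithin] with η hη
    have h2 : 0 ≤ z.im := hz
    have h3 : 0 < η := hη
    have : 0 ≤ (z + (η : ℂ) * Complex.I).im := by simp; linarith
    exact this

lemma CUHP_add {z : ℂ} (hz : z ∈ CUHP) {η : ℝ} (hη : 0 < η) :
    z + (η : ℂ) * Complex.I ∈ UHP := by
  have h2 : 0 ≤ z.im := hz
  have : 0 < (z + (η : ℂ) * Complex.I).im := by simp; linarith
  exact this

lemma real_CUHP (x : ℝ) : (x : ℂ) ∈ CUHP := by simp [CUHP]

lemma norm_le_add {z : ℂ} (hz : z ∈ CUHP) {η : ℝ} (hη : 0 < η) :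
    ‖z‖ ≤ ‖z + (η : ℂ) * Complex.I‖ := by
  have h2 : 0 ≤ z.im := hz
  rw [← abs_of_nonneg (norm_nonneg z), ← abs_of_nonneg (norm_nonneg (z + _)), ← sq_le_sq,
    ← Complex.normSq_eq_norm_sq, ← Complex.normSq_eq_norm_sq, Complex.normSq_apply,
    Complex.normSq_apply]
  simp
  nlinarith

lemma bounds (ht : 1 < t) (hR : ∀ᵐ x ∂μ, |x| ≤ R) (hω : IsSubordT μ t ω) :
    ∃ R0 C : ℝ, 0 < R0 ∧
      (∀ z ∈ CUHP, R0 ≤ ‖z‖ →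
        ‖ω z - z + ((t : ℂ) - 1) * ((∫ x, x ∂μ : ℝ) : ℂ)‖ ≤ C / ‖z‖) ∧
      ∀ x : ℝ, R0 ≤ |x| → (ω x).im = 0 := by
  set c : ℂ := ((t : ℂ) - 1) * ((∫ x, x ∂μ : ℝ) : ℂ) with hc
  have h1 := (zf_tendsto ht hR hω).norm
  rw [← hc] at h1
  set S : ℝ := ‖(-(((t - 1) * ((∫ x, x ^ 2 ∂μ) - (∫ x, x ∂μ) ^ 2) : ℝ) : ℂ))‖
  have e1 : ∀ᶠ z in Linf, ‖z * (ω z - z + c)‖ ≤ S + 1 :=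
    (h1.eventually_lt_const (by linarith)).mono fun _ h => h.le
  have h2 := ((Af_tendsto hR).mono_left inf_le_left).comp (w_tendsto ht hR hω)
  have e2 : ∀ᶠ z in Linf, Af μ (ω z) ≤ 1 / (2 * (t - 1)) :=
    (h2.eventually_lt_const (by have : 0 < t - 1 := by linarith
                                positivity)).mono fun _ h => h.le
  have e3 := e1.and e2
  rw [Linf, eventually_inf_principal, eventually_comap] at e3
  obtain ⟨a, ha⟩ := eventually_atTop.1 e3
  refine ⟨max a 1, S + 1, by positivity, ?_, ?_⟩
  · intro z hz hza
    have hz0 : 0 < ‖z‖ := lt_of_lt_of_le one_pos ((le_max_right a 1).trans hza)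
    have hl : Tendsto (fun η : ℝ => ‖(z + (η : ℂ) * Complex.I) *
        (ω (z + (η : ℂ) * Complex.I) - (z + (η : ℂ) * Complex.I) + c)‖) (𝓝[>] 0)
        (𝓝 ‖z * (ω z - z + c)‖) := by
      have hz1 : Tendsto (fun η : ℝ => z + (η : ℂ) * Complex.I) (𝓝[>] 0) (𝓝 z) := by
        have : Continuous fun η : ℝ => z + (η : ℂ) * Complex.I := by fun_prop
        have h := this.tendsto 0
        simp only [Complex.ofReal_zero, zero_mul, add_zero] at h
        exact h.mono_left nhdsWithin_le_nhds
      exact (hz1.mul (((bdry hω hz).sub hz1).add_const c)).norm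
    have hle : ‖z * (ω z - z + c)‖ ≤ S + 1 := by
      refine le_of_tendsto hl ?_
      filter_upwards [self_mem_nhdsWithin] with η hη
      exact (ha _ (((le_max_left a 1).trans hza).trans (norm_le_add hz hη)) _ rfl
        (CUHP_add hz hη)).1
    rw [le_div_iff₀ hz0, mul_comm, ← norm_mul]
    exact hle
  · intro x hx
    have hx' : max a 1 ≤ ‖(x : ℂ)‖ := by simpa using hx
    have hl := (Complex.continuous_im.tendsto _).comp (bdry hω (real_CUHP x))
    have hu : Tendsto (fun η : ℝ => 2 * η) (𝓝[>] 0) (𝓝 0) := by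
      have : Continuous fun η : ℝ => 2 * η := by fun_prop
      have h := this.tendsto 0
      rw [mul_zero] at h
      exact h.mono_left nhdsWithin_le_nhds
    refine tendsto_nhds_unique hl
      (tendsto_of_tendsto_of_tendsto_of_le_of_le' tendsto_const_nhds hu ?_ ?_)
    · filter_upwards [self_mem_nhdsWithin] with η hη
      have : 0 < (ω (x + (η : ℂ) * Complex.I)).im := hω.maps _ (UHP_eta x hη)
      exact this.le
    · filter_upwards [self_mem_nhdsWithin] with η hη
      have h5 := (ha _ (((le_max_left a 1).trans hx').trans (norm_le_add (real_CUHP x) hη)) _ rfl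
        (CUHP_add (real_CUHP x) hη)).2
      have h6 := im_id hω (UHP_eta x hη)
      have h7 : 0 < (ω (x + (η : ℂ) * Complex.I)).im := hω.maps _ (UHP_eta x hη)
      have him : ((x : ℂ) + (η : ℂ) * Complex.I).im = η := by simp
      rw [him] at h6
      have h8 : (t - 1) * Af μ (ω (x + (η : ℂ) * Complex.I)) ≤ 1 / 2 := by
        have h9 := mul_le_mul_of_nonneg_left h5 (show 0 ≤ t - 1 by linarith)
        have : (t - 1) * (1 / (2 * (t - 1))) = 1 / 2 := by
          have : t - 1 ≠ 0 := by linarith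
          field_simp
        linarith
      simp only [Function.comp]
      nlinarith

end subord

section final

variable {t : ℝ} {ω : ℂ → ℂ} {μt : Measure ℝ}

lemma mt_eq (ht : 1 < t) (hω : IsSubordT μ t ω) (hμt : IsFreePow μ ω μt) {z : ℂ} (hz : z ∈ UHP) :
    stT μt z = -(((t - 1 : ℝ) : ℂ) / ((t : ℂ) * ω z - z)) := by
  have hm := stT_ne (μ := μ) (hω.maps z hz)
  have ht' : ((t : ℂ) - 1) ≠ 0 := by
    have : ((t - 1 : ℝ) : ℂ) ≠ 0 := by
      rw [Complex.ofReal_ne_zero]; linarith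
    simpa using this
  rw [hμt.2 z hz, hω.eqn z hz, nrT]
  push_cast
  field_simp

lemma im_neg_div (a : ℝ) (b : ℂ) : (-((a : ℂ) / b)).im = a * b.im / Complex.normSq b := by
  rw [Complex.neg_im, div_eq_mul_inv, Complex.im_ofReal_mul, Complex.inv_im]
  ring

lemma mt_bdry (ht : 1 < t) (hω : IsSubordT μ t ω) (hμt : IsFreePow μ ω μt) {x : ℝ}
    (hx : (t : ℂ) * ω x - x ≠ 0) :
    Tendsto (fun η : ℝ => (stT μt ((x : ℂ) + (η : ℂ) * Complex.I)).im) (𝓝[>] 0)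
      (𝓝 ((t - 1) * (t * (ω x).im) / Complex.normSq ((t : ℂ) * ω x - x))) := by
  have h1 := bdry hω (real_CUHP x)
  have hz1 : Tendsto (fun η : ℝ => (x : ℂ) + (η : ℂ) * Complex.I) (𝓝[>] 0) (𝓝 (x : ℂ)) := by
    have : Continuous fun η : ℝ => (x : ℂ) + (η : ℂ) * Complex.I := by fun_prop
    have h := this.tendsto 0
    simp only [Complex.ofReal_zero, zero_mul, add_zero] at h
    exact h.mono_left nhdsWithin_le_nhds
  have h2 := (tendsto_const_nhds (x := ((t - 1 : ℝ) : ℂ))).div ((h1.const_mul (t : ℂ)).sub hz1) hx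
  have h3 := (Complex.continuous_im.tendsto _).comp h2.neg
  rw [im_neg_div] at h3
  have e : ((t : ℂ) * ω x - x).im = t * (ω x).im := by simp
  rw [e] at h3
  refine h3.congr' ?_
  filter_upwards [self_mem_nhdsWithin] with η hη
  rw [mt_eq ht hω hμt (UHP_eta x hη)]
  rfl

lemma im_nonneg (hω : IsSubordT μ t ω) (x : ℝ) : 0 ≤ (ω x).im := by
  refine ge_of_tendsto ((Complex.continuous_im.tendsto _).comp (bdry hω (real_CUHP x))) ?_
  filter_upwards [self_mem_nhdsWithin] with η hη
  have : 0 < (ω (x + (η : ℂ) * Complex.I)).im := hω.maps _ (UHP_eta x hη)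
  exact this.le

lemma cont_real (hω : IsSubordT μ t ω) : Continuous fun x : ℝ => ω x := by
  rw [← continuousOn_univ]
  exact hω.cont.comp (by fun_prop) (fun x _ => real_CUHP x)

/-- Monotonicity of `ω` on an interval not charged by `ν`. -/
lemma mono_gap (hω : IsSubordT μ t ω) {ν : Measure ℝ} [IsFiniteMeasure ν] {c : ℂ}
    (hν : ∀ z ∈ UHP, ω z - z = c + ∫ x : ℝ, ((x : ℂ) - z)⁻¹ ∂ν) {a b : ℝ}
    (hJ : ν (Ioo a b) = 0) {x x' : ℝ} (hx : x ∈ Ioo a b) (hx' : x' ∈ Ioo a b) (hlt : x < x') :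
    x' - x ≤ (ω x').re - (ω x).re := by
  have hl := (Complex.continuous_re.tendsto _).comp
    ((bdry hω (real_CUHP x')).sub (bdry hω (real_CUHP x)))
  rw [Complex.sub_re] at hl
  refine ge_of_tendsto hl ?_
  have hδ : 0 < min (x - a) (b - x') := lt_min (by linarith [hx.1]) (by linarith [hx'.2])
  filter_upwards [self_mem_nhdsWithin, nhdsWithin_le_nhds (Iio_mem_nhds hδ)] with η hη hηδ
  have hη : 0 < η := hη
  have hηδ : η < min (x - a) (b - x') := hηδ
  have hz := UHP_eta x hη
  have hz' := UHP_eta x' hη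
  simp only [Function.comp]
  have e1 := hν _ hz
  have e2 := hν _ hz'
  have e3 : ω (x' + (η : ℂ) * Complex.I) - ω (x + (η : ℂ) * Complex.I) =
      ((x' - x : ℝ) : ℂ) + ∫ y : ℝ, (((y : ℂ) - (x' + (η : ℂ) * Complex.I))⁻¹ -
        ((y : ℂ) - (x + (η : ℂ) * Complex.I))⁻¹) ∂ν := by
    rw [integral_sub (int_inv hz') (int_inv hz)]
    push_cast
    linear_combination e2 - e1
  rw [e3, Complex.add_re, Complex.ofReal_re]
  have hre := integral_re (𝕜 := ℂ) ((int_inv (μ := ν) hz').sub (int_inv (μ := ν) hz))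
  simp only [RCLike.re_to_complex, Pi.sub_apply] at hre
  rw [← hre]
  suffices h : 0 ≤ ∫ y : ℝ, (((y : ℂ) - (x' + (η : ℂ) * Complex.I))⁻¹ -
        ((y : ℂ) - (x + (η : ℂ) * Complex.I))⁻¹).re ∂ν by linarith
  refine integral_nonneg_of_ae ?_
  have hae : ∀ᵐ y ∂ν, y ∉ Ioo a b := measure_eq_zero_iff_ae_notMem.1 hJ
  filter_upwards [hae] with y hy
  simp only [Pi.zero_apply]
  rw [Complex.sub_re, Complex.inv_re, Complex.inv_re, nsq_eta, nsq_eta]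
  have r1 : ∀ s : ℝ, ((y : ℂ) - (s + (η : ℂ) * Complex.I)).re = y - s := by intro s; simp
  rw [r1, r1, sub_nonneg, div_le_div_iff₀ (by positivity) (by positivity)]
  have key : η ^ 2 ≤ (y - x) * (y - x') := by
    have m1 := hηδ.trans_le (min_le_left _ _)
    have m2 := hηδ.trans_le (min_le_right _ _)
    rw [mem_Ioo, not_and_or, not_lt, not_lt] at hy
    rcases hy with hy | hy
    · nlinarith
    · nlinarith
  nlinarith [mul_nonneg (sub_nonneg.2 hlt.le) (sub_nonneg.2 key)]

theorem main (hc : IsCompact (msupp μ)) (ht : 1 < t) (hω : IsSubordT μ t ω)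
    (hμt : IsFreePow μ ω μt) :
    ∃ ν : Measure ℝ, IsFiniteMeasure ν ∧
      (∀ z ∈ UHP,
        ω z - z = -(((t - 1) * ∫ x, x ∂μ : ℝ) : ℂ) + ∫ x, ((x : ℂ) - z)⁻¹ ∂ν) ∧
      (ν Set.univ).toReal = (t - 1) * ((∫ x, x ^ 2 ∂μ) - (∫ x, x ∂μ) ^ 2) ∧
      msupp ν = msupp (acPart μt) := by
  obtain ⟨R, hR0, hR⟩ := ae_bdd hc
  obtain ⟨R0, C, hR0', hb, hs⟩ := bounds ht hR hω
  have hzf := zf_tendsto ht hR hω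
  set c : ℂ := ((t : ℂ) - 1) * ((∫ x, x ∂μ : ℝ) : ℂ) with hcdef
  have wc := cont_real hω
  have wic : Continuous fun x : ℝ => (ω x).im / Real.pi :=
    (Complex.continuous_im.comp wc).div_const Real.pi
  have wnn := im_nonneg hω
  have dnn : ∀ x : ℝ, 0 ≤ (ω x).im / Real.pi := fun x => div_nonneg (wnn x) Real.pi_pos.le
  have wint : Integrable (fun x : ℝ => (ω x).im / Real.pi) := by
    refine wic.integrable_of_hasCompactSupport ?_
    refine HasCompactSupport.intro (isCompact_Icc (a := -R0) (b := R0)) fun x hx => ?_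
    rw [hs x ?_]
    · simp
    · by_contra h
      push Not at h
      exact hx (abs_le.1 h.le)
  have dmeas : Measurable fun x : ℝ => ENNReal.ofReal ((ω x).im / Real.pi) :=
    wic.measurable.ennreal_ofReal
  set ν : Measure ℝ := volume.withDensity fun x : ℝ => ENNReal.ofReal ((ω x).im / Real.pi) with hνdef
  haveI νfin : IsFiniteMeasure ν := isFiniteMeasure_withDensity_ofReal wint.2
  have νR : ∀ᵐ x ∂ν, |x| ≤ R0 := by
    rw [hνdef, ae_withDensity_iff dmeas]
    refine Eventually.of_forall fun x hx => ?_
    by_contra h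
    push Not at h
    exact hx (by rw [hs x h.le]; simp)
  have hcr : -(((t - 1) * ∫ x, x ∂μ : ℝ) : ℂ) = -c := by
    rw [hcdef]; push_cast; ring
  have rep : ∀ z ∈ UHP, ω z - z = -c + ∫ x : ℝ, ((x : ℂ) - z)⁻¹ ∂ν := by
    intro z hz
    have h1 := represent (f := fun z => ω z - z + c) ((hω.cont.sub continuousOn_id).add continuousOn_const)
      ((hω.diff.sub differentiableOn_id).add_const c) hb (by
        intro x hx
        have := hs x hx
        have hci : c.im = 0 := by rw [hcdef]; simp
        simp [this, hci]) hz
    have hci : ∀ x : ℝ, (ω x - x + c).im = (ω x).im := by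
      have : c.im = 0 := by rw [hcdef]; simp
      intro x
      simp [this]
    simp only [hci] at h1
    have h2 : ∫ x : ℝ, ((x : ℂ) - z)⁻¹ ∂ν = ω z - z + c := by
      rw [hνdef, integral_withDensity_eq_integral_toReal_smul dmeas
        (Eventually.of_forall fun x => ENNReal.ofReal_lt_top)]
      have : ∀ x : ℝ, (ENNReal.ofReal ((ω x).im / Real.pi)).toReal • ((x : ℂ) - z)⁻¹ =
          (Real.pi : ℂ)⁻¹ * (((ω x).im : ℂ) * ((x : ℂ) - z)⁻¹) := by
        intro x
        rw [ENNReal.toReal_ofReal (dnn x), Complex.real_smul]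
        push_cast
        ring
      simp only [this]
      rw [integral_const_mul, h1]
      have : (Real.pi : ℂ) ≠ 0 := by simp [Real.pi_ne_zero]
      field_simp
    rw [h2]
    ring
  refine ⟨ν, νfin, ?_, ?_, ?_⟩
  · intro z hz
    rw [hcr]
    exact rep z hz
  · have h1 : Tendsto (fun w : ℂ => w * stT ν w) Linf (𝓝 (-((ν univ).toReal : ℂ))) :=
      (wm_tendsto νR).mono_left inf_le_left
    have h2 := tendsto_nhds_unique_of_eventuallyEq h1 hzf (by
      filter_upwards [mem_inf_of_right (mem_principal_self UHP)] with z hz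
      rw [rep z hz]
      unfold stT
      ring)
    exact_mod_cast neg_injective h2
  · haveI : IsProbabilityMeasure μt := hμt.1
    have acle : acPart μt ≤ μt := Measure.withDensity_rnDeriv_le μt volume
    have acac : acPart μt ≪ volume := withDensity_absolutelyContinuous _ _
    ext x
    constructor
    · intro hx ε hε
      obtain ⟨x0, hx0, hpos⟩ : ∃ x0 ∈ Ioo (x - ε) (x + ε), 0 < (ω x0).im := by
        by_contra hcon
        push Not at hcon
        have h0 := hx ε hε
        rw [hνdef, withDensity_apply _ measurableSet_Ioo,
          setLIntegral_congr_fun (g := fun _ => 0) measurableSet_Ioo] at h0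
        · simp at h0
        · intro y hy
          have : (ω y).im = 0 := le_antisymm (hcon y hy) (wnn y)
          simp [this]
      have hopen : {y : ℝ | (ω x0).im / 2 < (ω y).im} ∩ Ioo (x - ε) (x + ε) ∈ 𝓝 x0 := by
        refine inter_mem ?_ (isOpen_Ioo.mem_nhds hx0)
        exact (isOpen_lt continuous_const (Complex.continuous_im.comp wc)).mem_nhds
          (by simp; linarith)
      obtain ⟨δ, hδ, hsub⟩ := Metric.mem_nhds_iff.1 hopen
      rw [Real.ball_eq_Ioo] at hsub
      set J := Ioo (x0 - δ) (x0 + δ) with hJ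
      have hne : ∀ y : ℝ, 0 < (ω y).im → (t : ℂ) * ω y - y ≠ 0 := by
        intro y hy h0
        have := congrArg Complex.im h0
        simp at this
        rcases this with h | h <;> linarith
      have hbd : ∀ s ⊆ J, μt s ≤
          ENNReal.ofReal ((t - 1) / (t * ((ω x0).im / 2)) + 1) * volume s := by
        intro s hsJ
        refine meas_le s fun y hy => ?_
        have hy2 : (ω x0).im / 2 < (ω y).im := (hsub (hsJ hy)).1
        have hy0 : 0 < (ω y).im := by linarith
        have hlim := mt_bdry ht hω hμt (hne y hy0)
        refine (hlim.eventually_lt_const ?_).mono fun _ h => h.le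
        have hn : (t * (ω y).im) ^ 2 ≤ Complex.normSq ((t : ℂ) * ω y - y) := by
          have e : ((t : ℂ) * ω y - y).im = t * (ω y).im := by simp
          rw [Complex.normSq_apply, e]
          nlinarith [mul_self_nonneg ((t : ℂ) * ω y - y).re]
        have htp : 0 < t := by linarith
        have ht1 : 0 < t - 1 := by linarith
        have : (t - 1) * (t * (ω y).im) / Complex.normSq ((t : ℂ) * ω y - y) ≤
            (t - 1) / (t * ((ω x0).im / 2)) := by
          calc _ ≤ (t - 1) * (t * (ω y).im) / (t * (ω y).im) ^ 2 := by gcongr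
            _ = (t - 1) / (t * (ω y).im) := by field_simp
            _ ≤ _ := by gcongr
        linarith
      have hμJ : μt J ≠ 0 := by
        intro h0
        have l1 := im_tendsto_zero (μ := μt) hδ h0
        have l2 := mt_bdry ht hω hμt (hne x0 hpos)
        have h3 := tendsto_nhds_unique l1 l2
        have h4 : 0 < (t - 1) * (t * (ω x0).im) / Complex.normSq ((t : ℂ) * ω x0 - x0) := by
          have := Complex.normSq_pos.2 (hne x0 hpos)
          have htp : 0 < t := by linarith
          have ht1 : 0 < t - 1 := by linarith
          positivity
        linarith
      have hsing : μt.singularPart volume J = 0 := by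
        obtain ⟨N, hNm, hN1, hN2⟩ := Measure.mutuallySingular_singularPart μt volume
        have a1 : μt.singularPart volume (J ∩ Nᶜ) = 0 := by
          have a3 : μt (J ∩ Nᶜ) = 0 := by
            have := hbd (J ∩ Nᶜ) inter_subset_left
            have hv : volume (J ∩ Nᶜ) = 0 := measure_mono_null inter_subset_right hN2
            rw [hv, mul_zero] at this
            exact nonpos_iff_eq_zero.1 this
          exact nonpos_iff_eq_zero.1
            ((Measure.singularPart_le μt volume (J ∩ Nᶜ)).trans a3.le)
        refine measure_mono_null (t := N ∪ (J ∩ Nᶜ)) ?_ (measure_union_null hN1 a1)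
        intro y hy
        by_cases hyN : y ∈ N
        · exact Or.inl hyN
        · exact Or.inr ⟨hy, hyN⟩
      have hJac : acPart μt J = μt J := by
        have hdec := Measure.haveLebesgueDecomposition_add μt volume
        have := congrArg (fun m : Measure ℝ => m J) hdec
        simp only [Measure.add_apply, hsing, zero_add] at this
        exact this.symm
      refine lt_of_lt_of_le (pos_iff_ne_zero.2 (hJac ▸ hμJ)) (measure_mono ?_)
      exact fun y hy => (hsub hy).2
    · intro hx
      by_contra hcon
      simp only [msupp, mem_ofPred_eq, not_forall, not_lt, nonpos_iff_eq_zero] at hcon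
      obtain ⟨ε, hε, hν0⟩ := hcon
      have hx := hx ε hε
      set J := Ioo (x - ε) (x + ε) with hJ
      have him : ∀ y ∈ J, (ω y).im = 0 := by
        have h0 := hν0
        rw [hνdef, withDensity_apply _ measurableSet_Ioo, lintegral_eq_zero_iff dmeas] at h0
        have h1 : (fun y : ℝ => (ω y).im / Real.pi) =ᵐ[volume.restrict J] fun _ => 0 := by
          filter_upwards [h0] with y hy
          exact le_antisymm (ENNReal.ofReal_eq_zero.1 hy) (dnn y)
        have h2 := Measure.eqOn_open_of_ae_eq h1 isOpen_Ioo wic.continuousOn continuousOn_const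
        intro y hy
        have := h2 hy
        simpa [Real.pi_ne_zero] using this
      set Z : Set ℝ := {y : ℝ | (t : ℂ) * ω y - y = 0} with hZ
      have hsubs : (J ∩ Z).Subsingleton := by
        have aux : ∀ y ∈ J ∩ Z, ∀ y' ∈ J ∩ Z, ¬ y < y' := by
          intro y hy y' hy' hlt
          have h1 := mono_gap hω rep hν0 hy.1 hy'.1 hlt
          have h2 := congrArg Complex.re (show (t : ℂ) * ω y - y = 0 from hy.2)
          have h3 := congrArg Complex.re (show (t : ℂ) * ω y' - y' = 0 from hy'.2)
          rw [Complex.sub_re, Complex.re_ofReal_mul] at h2 h3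
          simp only [Complex.ofReal_re, Complex.zero_re] at h2 h3
          nlinarith
        intro y hy y' hy'
        exact le_antisymm (not_lt.1 (aux y' hy' y hy)) (not_lt.1 (aux y hy y' hy'))
      have hA : acPart μt (J ∩ Z) = 0 := acac (hsubs.measure_zero volume)
      have hB : μt (J \ Z) = 0 := by
        have h1 : ∀ e : ℝ, 0 < e → μt (J \ Z) ≤ ENNReal.ofReal e * volume (J \ Z) := by
          intro e he
          refine meas_le _ fun y hy => ?_
          have hlim := mt_bdry ht hω hμt (x := y) hy.2
          rw [him y hy.1] at hlim
          simp only [mul_zero, zero_div] at hlim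
          exact (hlim.eventually_lt_const he).mono fun _ h => h.le
        have hvol : volume (J \ Z) ≤ ENNReal.ofReal (2 * ε) := by
          refine (measure_mono sdiff_subset).trans (le_of_eq ?_)
          rw [hJ, Real.volume_Ioo]
          congr 1
          ring
        have h2 : ∀ e : ℝ, 0 < e → (μt (J \ Z)).toReal ≤ e * (2 * ε) := by
          intro e he
          refine ENNReal.toReal_le_of_le_ofReal (by positivity) ?_
          rw [ENNReal.ofReal_mul he.le]
          exact (h1 e he).trans (by gcongr)
        have h3 : (μt (J \ Z)).toReal ≤ 0 := by
          refine le_of_forall_pos_le_add fun e he => ?_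
          have := h2 (e / (2 * ε)) (by positivity)
          rw [div_mul_cancel₀ _ (by positivity)] at this
          linarith
        have h4 := le_antisymm h3 ENNReal.toReal_nonneg
        rcases (ENNReal.toReal_eq_zero_iff _).1 h4 with h | h
        · exact h
        · exact absurd h (measure_ne_top _ _)
      have hB' : acPart μt (J \ Z) = 0 := nonpos_iff_eq_zero.1 ((acle _).trans hB.le)
      have : acPart μt J = 0 := by
        rw [← inter_union_sdiff J Z]
        exact measure_union_null hA hB'
      rw [this] at hx
      exact lt_irrefl _ hx

end final

end NevAux

/-- Nevanlinna representation of `ω_t − id`. -/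
theorem nevanlinna_representation_omega_t
    (μ μt : Measure ℝ) (nac npp nppout : ℕ)
    (Em Ep : Fin nac → ℝ) (atom : Fin npp → ℝ) (ρ : ℝ → ℝ)
    (hμ : Assumption1 μ nac npp nppout Em Ep atom ρ)
    (t : ℝ) (ht : 1 < t) (ω : ℂ → ℂ) (hω : IsSubordT μ t ω)
    (hμt : IsFreePow μ ω μt) :
    ∃ ν : Measure ℝ, IsFiniteMeasure ν ∧
      (∀ z ∈ UHP,
        ω z - z = -(((t - 1) * ∫ x, x ∂μ : ℝ) : ℂ) + ∫ x, ((x : ℂ) - z)⁻¹ ∂ν) ∧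
      (ν Set.univ).toReal = (t - 1) * ((∫ x, x ^ 2 ∂μ) - (∫ x, x ∂μ) ^ 2) ∧
      msupp ν = msupp (acPart μt) := by
  haveI := hμ.prob
  exact NevAux.main hμ.compact ht hω hμt
end

section
/- Let μ_α and μ_β satisfy Assumption 2. Then the singular part of μ̂_α is purely atomic with finitely many atoms E_1^α,…,E_{m_α}^α, where m_α ≤ n_α − 1; each atom lies in one of the open gaps (A_i⁺, A_{i+1}⁻) between consecutive intervals of supp(μ_α), with at most one atom per gap, and each atom is a zero of m_{μ_α}; moreover supp(μ̂_α) = supp(μ_α) ∪ {E_1^α,…,E_{m_α}^α}. The analogous statements hold for μ̂_β, with m_β ≤ n_β − 1 atoms, each a zero of m_{μ_β} lying in a gap of supp(μ_β). -/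
open MeasureTheory Topology Filter Set

/-! ### Basic facts about the Cauchy–Stieltjes transform -/

lemma aux_ne (t x η : ℝ) (hη : 0 < η) : ((t : ℂ) - ((x : ℂ) + (η : ℂ) * Complex.I)) ≠ 0 := by
  intro h
  have := congrArg Complex.im h
  simp at this
  exact hη.ne' this

lemma aux_normSq (t x η : ℝ) :
    Complex.normSq ((t : ℂ) - ((x : ℂ) + (η : ℂ) * Complex.I)) = (t - x) ^ 2 + η ^ 2 := by
  simp [Complex.normSq_apply]; ring

lemma aux_im (t x η : ℝ) :
    (((t : ℂ) - ((x : ℂ) + (η : ℂ) * Complex.I))⁻¹).im = η / ((t - x) ^ 2 + η ^ 2) := by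
  rw [Complex.inv_im, aux_normSq]; simp

lemma aux_norm_ge (t x η : ℝ) : |t - x| ≤ ‖(t : ℂ) - ((x : ℂ) + (η : ℂ) * Complex.I)‖ := by
  have := Complex.abs_re_le_norm ((t : ℂ) - ((x : ℂ) + (η : ℂ) * Complex.I))
  simpa using this

lemma aux_norm_ge' (t x η : ℝ) (hη : 0 < η) :
    η ≤ ‖(t : ℂ) - ((x : ℂ) + (η : ℂ) * Complex.I)‖ := by
  have := Complex.abs_im_le_norm ((t : ℂ) - ((x : ℂ) + (η : ℂ) * Complex.I))
  simpa [abs_of_pos hη] using this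

lemma aux_meas (z : ℂ) : Measurable (fun t : ℝ => ((t : ℂ) - z)⁻¹) :=
  (Complex.measurable_ofReal.sub_const z).inv

lemma aux_integrable (ν : Measure ℝ) [IsFiniteMeasure ν] (x η : ℝ) (hη : 0 < η) :
    Integrable (fun t : ℝ => ((t : ℂ) - ((x : ℂ) + (η : ℂ) * Complex.I))⁻¹) ν := by
  refine Integrable.of_bound (aux_meas _).aestronglyMeasurable η⁻¹ (Eventually.of_forall ?_)
  intro t
  rw [norm_inv]
  exact inv_anti₀ hη (aux_norm_ge' t x η hη)

lemma im_stT (ν : Measure ℝ) [IsFiniteMeasure ν] (x η : ℝ) (hη : 0 < η) :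
    (stT ν ((x : ℂ) + (η : ℂ) * Complex.I)).im = ∫ t, η / ((t - x) ^ 2 + η ^ 2) ∂ν := by
  have h := Complex.imCLM.integral_comp_comm (aux_integrable ν x η hη)
  simp only [Complex.imCLM_apply, aux_im] at h
  rw [stT, ← h]

lemma integrable_im (ν : Measure ℝ) [IsFiniteMeasure ν] (x η : ℝ) (hη : 0 < η) :
    Integrable (fun t : ℝ => η / ((t - x) ^ 2 + η ^ 2)) ν := by
  have h := Complex.imCLM.integrable_comp (aux_integrable ν x η hη)
  simpa only [Complex.imCLM_apply, aux_im] using h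

lemma ball_le (ν : Measure ℝ) [IsFiniteMeasure ν] (x r η : ℝ) (hη : 0 < η) :
    ν.real (Metric.closedBall x r) * (η / (r ^ 2 + η ^ 2)) ≤
      (stT ν ((x : ℂ) + (η : ℂ) * Complex.I)).im := by
  rw [im_stT ν x η hη]
  have hb : MeasurableSet (Metric.closedBall x r) := Metric.isClosed_closedBall.measurableSet
  have h1 : ∫ t in Metric.closedBall x r, (η / (r ^ 2 + η ^ 2)) ∂ν ≤
      ∫ t in Metric.closedBall x r, η / ((t - x) ^ 2 + η ^ 2) ∂ν := by
    refine setIntegral_mono_on (integrable_const _) (integrable_im ν x η hη).integrableOn hb ?_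
    intro t ht
    have ht' : |t - x| ≤ r := by simpa [Real.dist_eq] using ht
    have h2 : (t - x) ^ 2 ≤ r ^ 2 := by
      rw [← sq_abs (t - x)]
      exact pow_le_pow_left₀ (abs_nonneg _) ht' 2
    gcongr
  have h3 : ∫ t in Metric.closedBall x r, η / ((t - x) ^ 2 + η ^ 2) ∂ν ≤
      ∫ t, η / ((t - x) ^ 2 + η ^ 2) ∂ν :=
    setIntegral_le_integral (integrable_im ν x η hη)
      (Eventually.of_forall fun t => by simp only [Pi.zero_apply]; positivity)
  rw [setIntegral_const, smul_eq_mul] at h1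
  exact h1.trans h3

lemma ae_dist_ge (ν : Measure ℝ) (a b y : ℝ) (hν : ν (Ioo a b) = 0) (hy : y ∈ Ioo a b) :
    ∃ δ > 0, ∀ᵐ t ∂ν, δ ≤ |t - y| := by
  refine ⟨min (y - a) (b - y), lt_min (by linarith [hy.1]) (by linarith [hy.2]), ?_⟩
  have h : ∀ᵐ t ∂ν, t ∉ Ioo a b := measure_eq_zero_iff_ae_notMem.1 hν
  filter_upwards [h] with t ht
  by_contra hlt
  push Not at hlt
  apply ht
  have h1 := (lt_min_iff.1 hlt)
  rw [abs_lt, abs_lt] at h1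
  constructor <;> linarith [h1.1.1, h1.2.2]

lemma im_le (ν : Measure ℝ) [IsFiniteMeasure ν] (x η δ : ℝ) (hη : 0 < η) (hδ : 0 < δ)
    (h : ∀ᵐ t ∂ν, δ ≤ |t - x|) :
    (stT ν ((x : ℂ) + (η : ℂ) * Complex.I)).im ≤ η * (ν.real univ / δ ^ 2) := by
  rw [im_stT ν x η hη]
  have h1 : ∫ t, η / ((t - x) ^ 2 + η ^ 2) ∂ν ≤ ∫ t, η / δ ^ 2 ∂ν := by
    refine integral_mono_ae (integrable_im ν x η hη) (integrable_const _) ?_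
    filter_upwards [h] with t ht
    have h2 : δ ^ 2 ≤ (t - x) ^ 2 := by
      rw [← sq_abs (t - x)]
      exact pow_le_pow_left₀ hδ.le ht 2
    gcongr
    nlinarith
  refine h1.trans (le_of_eq ?_)
  rw [integral_const, smul_eq_mul]; ring

lemma tendsto_stT (ν : Measure ℝ) [IsFiniteMeasure ν] (y δ : ℝ) (hδ : 0 < δ)
    (h : ∀ᵐ t ∂ν, δ ≤ |t - y|) :
    Tendsto (fun η : ℝ => stT ν ((y : ℂ) + (η : ℂ) * Complex.I)) (𝓝[>] 0)
      (𝓝 ((stTR ν y : ℝ) : ℂ)) := by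
  have e : ((stTR ν y : ℝ) : ℂ) = ∫ t : ℝ, ((t : ℂ) - (y : ℂ))⁻¹ ∂ν := by
    rw [stTR, ← integral_complex_ofReal]
    simp
  rw [e]
  unfold stT
  refine tendsto_integral_filter_of_dominated_convergence (fun _ => δ⁻¹)
    (Eventually.of_forall fun η => (aux_meas _).aestronglyMeasurable) ?_ (integrable_const _) ?_
  · filter_upwards with η
    filter_upwards [h] with t ht
    rw [norm_inv]
    exact inv_anti₀ hδ (ht.trans (aux_norm_ge t y η))
  · filter_upwards [h] with t ht
    have hne : (t : ℂ) - (y : ℂ) ≠ 0 := by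
      intro h0
      have h2 : t - y = 0 := by exact_mod_cast h0
      rw [h2] at ht; simp at ht; linarith
    have hc : Tendsto (fun η : ℝ => (t : ℂ) - ((y : ℂ) + (η : ℂ) * Complex.I)) (𝓝[>] 0)
        (𝓝 ((t : ℂ) - (y : ℂ))) := by
      have hc' : Continuous (fun η : ℝ => (t : ℂ) - ((y : ℂ) + (η : ℂ) * Complex.I)) := by fun_prop
      have := (hc'.tendsto 0).mono_left (nhdsWithin_le_nhds (s := Ioi 0))
      simpa using this
    exact hc.inv₀ hne

lemma integrable_inv_sub (ν : Measure ℝ) [IsFiniteMeasure ν] (y δ : ℝ) (hδ : 0 < δ)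
    (h : ∀ᵐ t ∂ν, δ ≤ |t - y|) : Integrable (fun t : ℝ => (t - y)⁻¹) ν := by
  refine Integrable.of_bound (by fun_prop) δ⁻¹ ?_
  filter_upwards [h] with t ht
  rw [norm_inv, Real.norm_eq_abs]
  exact inv_anti₀ hδ ht

lemma integral_pos_aux (ν : Measure ℝ) (hν : ν ≠ 0) (f : ℝ → ℝ) (hf : Integrable f ν)
    (hpos : ∀ᵐ t ∂ν, 0 < f t) : 0 < ∫ t, f t ∂ν := by
  have hnn : 0 ≤ᵐ[ν] f := by filter_upwards [hpos] with t ht using ht.le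
  refine lt_of_le_of_ne (integral_nonneg_of_ae hnn) fun h => hν ?_
  have h0 := (integral_eq_zero_iff_of_nonneg_ae hnn hf).1 h.symm
  have hfalse : ∀ᵐ t ∂ν, False := by
    filter_upwards [hpos, h0] with t h1 h2
    simp at h2; linarith
  rw [← ae_eq_bot]
  exact eventually_false_iff_eq_bot.1 hfalse

lemma aux_inv_lt (a b x y t : ℝ) (hx : x ∈ Ioo a b) (hy : y ∈ Ioo a b) (hxy : x < y)
    (ht : t ∉ Ioo a b) : (t - x)⁻¹ < (t - y)⁻¹ := by
  have h : t ≤ a ∨ b ≤ t := by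
    by_contra hc
    push Not at hc
    exact ht hc
  rcases h with h | h
  · exact (inv_lt_inv_of_neg (by linarith [hx.1]) (by linarith [hy.1])).2 (by linarith)
  · exact inv_strictAnti₀ (by linarith [hy.2]) (by linarith)

lemma stTR_mono (ν : Measure ℝ) [IsFiniteMeasure ν] (a b x y : ℝ)
    (hν : ν (Ioo a b) = 0) (hx : x ∈ Ioo a b) (hy : y ∈ Ioo a b) (hxy : x < y) :
    stTR ν x ≤ stTR ν y := by
  obtain ⟨δ, hδ, hd⟩ := ae_dist_ge ν a b x hν hx
  obtain ⟨δ', hδ', hd'⟩ := ae_dist_ge ν a b y hν hy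
  refine integral_mono_ae (integrable_inv_sub ν x δ hδ hd) (integrable_inv_sub ν y δ' hδ' hd') ?_
  have h : ∀ᵐ t ∂ν, t ∉ Ioo a b := measure_eq_zero_iff_ae_notMem.1 hν
  filter_upwards [h] with t ht
  exact (aux_inv_lt a b x y t hx hy hxy ht).le

lemma stTR_strictMono (ν : Measure ℝ) [IsFiniteMeasure ν] (hν0 : ν ≠ 0) (a b x y : ℝ)
    (hν : ν (Ioo a b) = 0) (hx : x ∈ Ioo a b) (hy : y ∈ Ioo a b) (hxy : x < y) :
    stTR ν x < stTR ν y := by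
  obtain ⟨δ, hδ, hd⟩ := ae_dist_ge ν a b x hν hx
  obtain ⟨δ', hδ', hd'⟩ := ae_dist_ge ν a b y hν hy
  have hi := integrable_inv_sub ν x δ hδ hd
  have hi' := integrable_inv_sub ν y δ' hδ' hd'
  have h : ∀ᵐ t ∂ν, t ∉ Ioo a b := measure_eq_zero_iff_ae_notMem.1 hν
  have := integral_pos_aux ν hν0 _ (hi'.sub hi) (by
    filter_upwards [h] with t ht
    exact sub_pos.2 (aux_inv_lt a b x y t hx hy hxy ht))
  simp only [Pi.sub_apply] at this
  rw [integral_sub hi' hi] at this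
  unfold stTR
  linarith

/-! ### Covering lemmas -/

lemma cover_le (ν : Measure ℝ) [IsFiniteMeasure ν] (K : NNReal) (s : Set ℝ)
    (h : ∀ x ∈ s, ∀ᶠ η in 𝓝[>] (0 : ℝ),
      ν.real (Metric.closedBall x η) ≤ K * (2 * η)) :
    ν s ≤ K * volume s := by
  have := (Besicovitch.vitaliFamily ν).measure_le_of_frequently_le (ρ := ν)
    (K • (volume : Measure ℝ)) Measure.AbsolutelyContinuous.rfl s ?_
  · simpa using this
  · intro x hx
    refine (Besicovitch.tendsto_filterAt ν x).frequently (Eventually.frequently ?_)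
    filter_upwards [h x hx, self_mem_nhdsWithin] with η hη hpos
    have hpos' : (0 : ℝ) < η := hpos
    rw [Measure.smul_apply, Real.volume_closedBall, ← ENNReal.ofReal_toReal (measure_ne_top ν _)]
    refine (ENNReal.ofReal_le_ofReal hη).trans (le_of_eq ?_)
    rw [ENNReal.ofReal_mul (NNReal.coe_nonneg K)]
    simp [ENNReal.smul_def]

lemma cover_null (ν : Measure ℝ) [IsFiniteMeasure ν] (s : Set ℝ) (hs : volume s = 0)
    (h : ∀ x ∈ s, ∃ K : ℝ, ∀ᶠ η in 𝓝[>] (0 : ℝ), ν.real (Metric.closedBall x η) ≤ K * η) :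
    ν s = 0 := by
  choose! K hK using h
  have hsub : s ⊆ ⋃ n : ℕ, {x ∈ s | K x ≤ n} := by
    intro x hx
    obtain ⟨n, hn⟩ := exists_nat_ge (K x)
    exact mem_iUnion.2 ⟨n, hx, hn⟩
  refine measure_mono_null hsub (measure_iUnion_null fun n => ?_)
  have h1 : ν {x ∈ s | K x ≤ n} ≤ (n : NNReal) * volume {x ∈ s | K x ≤ n} := by
    refine cover_le ν _ _ ?_
    rintro x ⟨hx, hn⟩
    filter_upwards [hK x hx, self_mem_nhdsWithin] with η hη hpos
    have hpos' : (0 : ℝ) < η := hpos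
    refine hη.trans ?_
    have : K x * η ≤ n * η := by gcongr
    have h2 : (0 : ℝ) ≤ n * η := by positivity
    push_cast
    linarith
  have h2 : volume {x ∈ s | K x ≤ n} = 0 := measure_mono_null (fun x hx => hx.1) hs
  rw [h2, mul_zero] at h1
  exact le_antisymm h1 zero_le

lemma cover_null' (ν : Measure ℝ) [IsFiniteMeasure ν] (s : Set ℝ) (hs : volume s ≠ ⊤)
    (h : ∀ x ∈ s, ∃ K : ℝ, ∀ᶠ η in 𝓝[>] (0 : ℝ), ν.real (Metric.closedBall x η) ≤ K * η ^ 2) :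
    ν s = 0 := by
  have key : ∀ ε : NNReal, 0 < ε → ν s ≤ ε * volume s := by
    intro ε hε
    refine cover_le ν _ _ ?_
    intro x hx
    obtain ⟨K, hK⟩ := h x hx
    have ht : Tendsto (fun η : ℝ => K * η) (𝓝[>] 0) (𝓝 0) := by
      have hc : Continuous (fun η : ℝ => K * η) := by fun_prop
      have := (hc.tendsto 0).mono_left (nhdsWithin_le_nhds (s := Ioi 0))
      simpa using this
    have hε' : (0 : ℝ) < ε := hε
    filter_upwards [hK, self_mem_nhdsWithin, ht.eventually (gt_mem_nhds hε')] with η hη hpos hlt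
    have hpos' : (0 : ℝ) < η := hpos
    nlinarith
  have ht : Tendsto (fun ε : NNReal => (ε : ENNReal) * volume s) (𝓝[>] 0) (𝓝 0) := by
    have h1 : Tendsto (fun ε : NNReal => (ε : ENNReal)) (𝓝[>] 0) (𝓝 0) := by
      have := (ENNReal.continuous_coe.tendsto 0).mono_left (nhdsWithin_le_nhds (s := Ioi (0:NNReal)))
      simpa using this
    have := ENNReal.Tendsto.mul_const h1 (b := volume s) (Or.inr hs)
    simpa using this
  have h0 : ν s ≤ 0 := by
    refine ge_of_tendsto ht ?_
    filter_upwards [self_mem_nhdsWithin] with ε hε using key ε hε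
  exact le_antisymm h0 zero_le

/-! ### Pairs of Nevanlinna functions with product `-1` -/

/-- `G₁ G₂ = -1` on the upper half-plane, where `G_i(z) = b_i z + m_{ν_i}(z)`. -/
def NevPair (b₁ b₂ : ℝ) (ν₁ ν₂ : Measure ℝ) : Prop :=
  0 ≤ b₁ ∧ 0 ≤ b₂ ∧ ∀ x η : ℝ, 0 < η →
    ((b₁ : ℂ) * ((x : ℂ) + (η : ℂ) * Complex.I) + stT ν₁ ((x : ℂ) + (η : ℂ) * Complex.I)) *
    ((b₂ : ℂ) * ((x : ℂ) + (η : ℂ) * Complex.I) + stT ν₂ ((x : ℂ) + (η : ℂ) * Complex.I)) = -1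

lemma NevPair.symm {b₁ b₂ : ℝ} {ν₁ ν₂ : Measure ℝ} (h : NevPair b₁ b₂ ν₁ ν₂) :
    NevPair b₂ b₁ ν₂ ν₁ :=
  ⟨h.2.1, h.1, fun x η hη => by rw [mul_comm]; exact h.2.2 x η hη⟩

lemma im_G (b x η : ℝ) (w : ℂ) :
    ((b : ℂ) * ((x : ℂ) + (η : ℂ) * Complex.I) + w).im = b * η + w.im := by
  simp

lemma pair_bound {b₁ b₂ : ℝ} {ν₁ ν₂ : Measure ℝ} [IsFiniteMeasure ν₁] [IsFiniteMeasure ν₂]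
    (h : NevPair b₁ b₂ ν₁ ν₂) (x η r r' : ℝ) (hη : 0 < η) :
    (ν₁.real (Metric.closedBall x r) * (η / (r ^ 2 + η ^ 2))) *
      (ν₂.real (Metric.closedBall x r') * (η / (r' ^ 2 + η ^ 2))) ≤ 1 := by
  obtain ⟨hb₁, hb₂, hG⟩ := h
  have h1 := ball_le ν₁ x r η hη
  have h2 := ball_le ν₂ x r' η hη
  have hp := hG x η hη
  have i1 := im_G b₁ x η (stT ν₁ ((x : ℂ) + (η : ℂ) * Complex.I))
  have i2 := im_G b₂ x η (stT ν₂ ((x : ℂ) + (η : ℂ) * Complex.I))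
  set G₁ := (b₁ : ℂ) * ((x : ℂ) + (η : ℂ) * Complex.I) + stT ν₁ ((x : ℂ) + (η : ℂ) * Complex.I)
  set G₂ := (b₂ : ℂ) * ((x : ℂ) + (η : ℂ) * Complex.I) + stT ν₂ ((x : ℂ) + (η : ℂ) * Complex.I)
  have n1 : ν₁.real (Metric.closedBall x r) * (η / (r ^ 2 + η ^ 2)) ≤ ‖G₁‖ := by
    have := (le_abs_self _).trans (Complex.abs_im_le_norm G₁)
    nlinarith [mul_nonneg hb₁ hη.le]
  have n2 : ν₂.real (Metric.closedBall x r') * (η / (r' ^ 2 + η ^ 2)) ≤ ‖G₂‖ := by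
    have := (le_abs_self _).trans (Complex.abs_im_le_norm G₂)
    nlinarith [mul_nonneg hb₂ hη.le]
  have n3 : ‖G₁‖ * ‖G₂‖ = 1 := by rw [← norm_mul, hp]; simp
  rw [← n3]
  exact mul_le_mul n1 n2 (by positivity) (norm_nonneg _)

lemma pair_interior {b₁ b₂ : ℝ} {ν₁ ν₂ : Measure ℝ} [IsFiniteMeasure ν₁] [IsFiniteMeasure ν₂]
    (h : NevPair b₁ b₂ ν₁ ν₂) (x c : ℝ) (hc : 0 < c)
    (hx : ∀ᶠ η in 𝓝[>] (0 : ℝ), c * η ≤ ν₁.real (Metric.closedBall x η)) :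
    ∃ K : ℝ, ∀ᶠ η in 𝓝[>] (0 : ℝ), ν₂.real (Metric.closedBall x η) ≤ K * η := by
  refine ⟨4 / c, ?_⟩
  filter_upwards [hx, self_mem_nhdsWithin] with η h1 hpos
  have hpos' : (0 : ℝ) < η := hpos
  have h2 := pair_bound h x η η η hpos'
  have e : η / (η ^ 2 + η ^ 2) = 1 / (2 * η) := by field_simp; ring
  rw [e] at h2
  set N := ν₂.real (Metric.closedBall x η)
  set M := ν₁.real (Metric.closedBall x η)
  have hN : 0 ≤ N := measureReal_nonneg
  have h3 : M * N ≤ 4 * η ^ 2 := by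
    have : M * (1 / (2 * η)) * (N * (1 / (2 * η))) = M * N / (4 * η ^ 2) := by field_simp; ring
    rw [this, div_le_one (by positivity)] at h2
    exact h2
  have h4 : c * η * N ≤ 4 * η ^ 2 := (mul_le_mul_of_nonneg_right h1 hN).trans h3
  have h5 : (c * N) * η ≤ (4 * η) * η := by nlinarith
  have h6 := le_of_mul_le_mul_right h5 hpos'
  rw [div_mul_eq_mul_div, le_div_iff₀ hc]
  linarith

lemma pair_endpoint {b₁ b₂ : ℝ} {ν₁ ν₂ : Measure ℝ} [IsFiniteMeasure ν₁] [IsFiniteMeasure ν₂]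
    (h : NevPair b₁ b₂ ν₁ ν₂) (x : ℝ)
    (hx : ∀ K : ℝ, 0 < K → ∃ η > 0, K * η ^ 2 ≤ ν₁.real (Metric.closedBall x (2 * η))) :
    ν₂ {x} = 0 := by
  have hN : 0 ≤ ν₂.real {x} := measureReal_nonneg
  have key : ∀ K : ℝ, 0 < K → K * ν₂.real {x} ≤ 5 := by
    intro K hK
    obtain ⟨η, hη, h1⟩ := hx K hK
    have h2 := pair_bound h x η (2 * η) 0 hη
    rw [Metric.closedBall_zero] at h2
    set N := ν₂.real {x}
    set M := ν₁.real (Metric.closedBall x (2 * η))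
    have : M * (η / ((2 * η) ^ 2 + η ^ 2)) * (N * (η / (0 ^ 2 + η ^ 2))) = M * N / (5 * η ^ 2) := by
      field_simp; ring
    rw [this, div_le_one (by positivity)] at h2
    have h4 : K * η ^ 2 * N ≤ 5 * η ^ 2 := (mul_le_mul_of_nonneg_right h1 hN).trans h2
    have h5 : (K * N) * η ^ 2 ≤ 5 * η ^ 2 := by nlinarith
    exact le_of_mul_le_mul_right h5 (by positivity)
  have h0 : ν₂.real {x} = 0 := by
    by_contra hne
    have hpos : 0 < ν₂.real {x} := lt_of_le_of_ne hN (Ne.symm hne)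
    have := key (6 / ν₂.real {x}) (by positivity)
    rw [div_mul_cancel₀ _ hne] at this
    linarith
  exact (measureReal_eq_zero_iff).1 h0

lemma tendsto_G (b : ℝ) (ν : Measure ℝ) [IsFiniteMeasure ν] (y δ : ℝ) (hδ : 0 < δ)
    (h : ∀ᵐ t ∂ν, δ ≤ |t - y|) :
    Tendsto (fun η : ℝ => (b : ℂ) * ((y : ℂ) + (η : ℂ) * Complex.I) +
      stT ν ((y : ℂ) + (η : ℂ) * Complex.I)) (𝓝[>] 0)
      (𝓝 ((b * y + stTR ν y : ℝ) : ℂ)) := by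
  have h1 : Tendsto (fun η : ℝ => (b : ℂ) * ((y : ℂ) + (η : ℂ) * Complex.I)) (𝓝[>] 0)
      (𝓝 ((b : ℂ) * y)) := by
    have hc : Continuous (fun η : ℝ => (b : ℂ) * ((y : ℂ) + (η : ℂ) * Complex.I)) := by fun_prop
    have := (hc.tendsto 0).mono_left (nhdsWithin_le_nhds (s := Ioi 0))
    simpa using this
  have := h1.add (tendsto_stT ν y δ hδ h)
  simpa using this

lemma pair_atom {b₁ b₂ : ℝ} {ν₁ ν₂ : Measure ℝ} [IsFiniteMeasure ν₁] [IsFiniteMeasure ν₂]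
    (h : NevPair b₁ b₂ ν₁ ν₂) (a b y : ℝ) (hν : ν₁ (Ioo a b) = 0) (hy : y ∈ Ioo a b)
    (h0 : b₁ * y + stTR ν₁ y = 0) : ν₂ (Ioo a b) ≠ 0 := by
  intro hν₂
  obtain ⟨δ, hδ, hd⟩ := ae_dist_ge ν₁ a b y hν hy
  obtain ⟨δ', hδ', hd'⟩ := ae_dist_ge ν₂ a b y hν₂ hy
  have t := (tendsto_G b₁ ν₁ y δ hδ hd).mul (tendsto_G b₂ ν₂ y δ' hδ' hd')
  rw [h0] at t
  have t' : Tendsto (fun _ : ℝ => (-1 : ℂ)) (𝓝[>] (0 : ℝ)) (𝓝 0) := by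
    have := t.congr' (f₂ := fun _ => (-1 : ℂ)) (by
      filter_upwards [self_mem_nhdsWithin] with η hη
      exact h.2.2 y η hη)
    simpa using this
  have := tendsto_nhds_unique t' tendsto_const_nhds
  norm_num at this

lemma pair_null {b₁ b₂ : ℝ} {ν₁ ν₂ : Measure ℝ} [IsFiniteMeasure ν₁] [IsFiniteMeasure ν₂]
    (h : NevPair b₁ b₂ ν₁ ν₂) (a b : ℝ) (hν : ν₁ (Ioo a b) = 0) :
    ν₂ {y ∈ Ioo a b | b₁ * y + stTR ν₁ y ≠ 0} = 0 := by
  refine cover_null' ν₂ _ ?_ ?_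
  · refine ne_top_of_le_ne_top ?_ (measure_mono (fun y hy => hy.1 : _ ⊆ Ioo a b))
    simp
  rintro y ⟨hy, hne⟩
  obtain ⟨δ, hδ, hd⟩ := ae_dist_ge ν₁ a b y hν hy
  have t := (tendsto_G b₁ ν₁ y δ hδ hd)
  set c := b₁ * y + stTR ν₁ y with hc
  have hc2 : 0 < c ^ 2 := by positivity
  have t2 : Tendsto (fun η : ℝ => Complex.normSq ((b₁ : ℂ) * ((y : ℂ) + (η : ℂ) * Complex.I) +
      stT ν₁ ((y : ℂ) + (η : ℂ) * Complex.I))) (𝓝[>] 0) (𝓝 (c ^ 2)) := by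
    have := (Complex.continuous_normSq.tendsto _).comp t
    rw [Complex.normSq_ofReal, ← sq] at this
    exact this
  set C := b₁ + ν₁.real univ / δ ^ 2 with hC
  have hC0 : 0 ≤ C := by have := h.1; positivity
  refine ⟨2 * (C / (c ^ 2 / 2)), ?_⟩
  filter_upwards [self_mem_nhdsWithin, t2.eventually (lt_mem_nhds (half_lt_self hc2))] with η hη hlt
  have hη' : (0 : ℝ) < η := hη
  have b1 := im_le ν₁ y η δ hη' hδ hd
  have b2 := ball_le ν₂ y η η hη'
  have hp := h.2.2 y η hη'
  have i1 := im_G b₁ y η (stT ν₁ ((y : ℂ) + (η : ℂ) * Complex.I))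
  have i2 := im_G b₂ y η (stT ν₂ ((y : ℂ) + (η : ℂ) * Complex.I))
  set G₁ := (b₁ : ℂ) * ((y : ℂ) + (η : ℂ) * Complex.I) + stT ν₁ ((y : ℂ) + (η : ℂ) * Complex.I)
  set G₂ := (b₂ : ℂ) * ((y : ℂ) + (η : ℂ) * Complex.I) + stT ν₂ ((y : ℂ) + (η : ℂ) * Complex.I)
  have hG1 : G₁ ≠ 0 := by
    intro h0; rw [h0] at hp; simp at hp
  have hG2 : G₂ = -G₁⁻¹ := by
    field_simp
    linear_combination hp
  have e2 : G₂.im = G₁.im / Complex.normSq G₁ := by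
    rw [hG2, Complex.neg_im, Complex.inv_im]; ring
  have u1 : G₁.im ≤ η * C := by rw [i1, hC]; linarith
  have u2 : G₂.im ≤ η * C / (c ^ 2 / 2) := by
    rw [e2]
    exact div_le_div₀ (by positivity) u1 (by positivity) hlt.le
  have e : η / (η ^ 2 + η ^ 2) = 1 / (2 * η) := by field_simp; ring
  rw [e] at b2
  have u3 : ν₂.real (Metric.closedBall y η) * (1 / (2 * η)) ≤ η * C / (c ^ 2 / 2) := by
    have := mul_nonneg h.2.1 hη'.le
    linarith
  rw [mul_one_div, div_le_iff₀ (by positivity)] at u3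
  refine u3.trans (le_of_eq ?_)
  ring

/-! ### Lower bounds coming from the density -/

lemma density_lower (μ : Measure ℝ) [IsFiniteMeasure μ] (ρ : ℝ → ℝ)
    (hac : μ = volume.withDensity fun x => ENNReal.ofReal (ρ x)) (a b k x r : ℝ) (hab : a ≤ b)
    (hk : 0 ≤ k)
    (hsub : Icc a b ⊆ Metric.closedBall x r)
    (h : ∀ᵐ t ∂volume, t ∈ Icc a b → k ≤ ρ t) :
    k * (b - a) ≤ μ.real (Metric.closedBall x r) := by
  have h1 : ENNReal.ofReal (k * (b - a)) ≤ μ (Icc a b) := by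
    rw [hac, withDensity_apply _ measurableSet_Icc, ENNReal.ofReal_mul hk, ← Real.volume_Icc,
      ← setLIntegral_const]
    refine lintegral_mono_ae ((ae_restrict_iff' measurableSet_Icc).2 ?_)
    filter_upwards [h] with t ht hmem
    exact ENNReal.ofReal_le_ofReal (ht hmem)
  have h2 := h1.trans (measure_mono hsub)
  rw [Measure.real]
  exact (ENNReal.ofReal_le_iff_le_toReal (measure_ne_top _ _)).1 h2

lemma rpow_asymp (s r d C K : ℝ) (hs : s < 1) (hd : 0 < d) (hC : 0 < C) :
    ∀ᶠ u in 𝓝[>] (0 : ℝ), K * u ≤ C⁻¹ * (u ^ s * (d - u) ^ r) := by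
  have h1 : Tendsto (fun u : ℝ => u ^ (s - 1)) (𝓝[>] 0) atTop :=
    tendsto_rpow_neg_nhdsGT_zero (by linarith)
  have h2 : Tendsto (fun u : ℝ => C⁻¹ * (d - u) ^ r) (𝓝[>] 0) (𝓝 (C⁻¹ * d ^ r)) := by
    have hc : ContinuousAt (fun u : ℝ => C⁻¹ * (d - u) ^ r) 0 := by
      refine continuousAt_const.mul (ContinuousAt.rpow_const (by fun_prop) (Or.inl ?_))
      simpa using hd.ne'
    have := hc.tendsto.mono_left (nhdsWithin_le_nhds (s := Ioi 0))
    simpa using this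
  have h3 := (h1.atTop_mul_pos (by positivity) h2).eventually_ge_atTop K
  filter_upwards [h3, self_mem_nhdsWithin] with u hu hpos
  have hpos' : (0 : ℝ) < u := hpos
  have e : u ^ s = u ^ (s - 1) * u := by
    rw [Real.rpow_sub_one hpos'.ne']; field_simp
  rw [e]
  calc K * u ≤ (u ^ (s - 1) * (C⁻¹ * (d - u) ^ r)) * u := by gcongr
    _ = _ := by ring

lemma power_lower {μ : Measure ℝ} {n : ℕ} {Am Ap : Fin n → ℝ} {ρ : ℝ → ℝ}
    (h : Assumption2 μ n Am Ap ρ) (j : Fin n) :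
    ∃ sm sp C : ℝ, sm < 1 ∧ sp < 1 ∧ 0 < C ∧ ∀ᵐ x ∂volume, x ∈ Ioo (Am j) (Ap j) →
      C⁻¹ * ((x - Am j) ^ sm * (Ap j - x) ^ sp) ≤ ρ x := by
  obtain ⟨sm, sp, C, -, h1, -, h2, hC, hp⟩ := h.power_law j
  refine ⟨sm, sp, C, h1, h2, by linarith, ?_⟩
  filter_upwards [hp] with x hx hmem
  have hx' := (hx ⟨hmem.1.le, hmem.2.le⟩).1
  have hpos : 0 < (x - Am j) ^ sm * (Ap j - x) ^ sp :=
    mul_pos (Real.rpow_pos_of_pos (sub_pos.2 hmem.1) _) (Real.rpow_pos_of_pos (sub_pos.2 hmem.2) _)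
  exact ((lt_div_iff₀ hpos).1 hx').le

lemma interior_lower {μ : Measure ℝ} {n : ℕ} {Am Ap : Fin n → ℝ} {ρ : ℝ → ℝ}
    (h : Assumption2 μ n Am Ap ρ) (j : Fin n) (x : ℝ) (hx : x ∈ Ioo (Am j) (Ap j)) :
    ∃ c > 0, ∀ᶠ η in 𝓝[>] (0 : ℝ), c * η ≤ μ.real (Metric.closedBall x η) := by
  have := h.prob
  obtain ⟨sm, sp, C, -, -, hC, hp⟩ := power_lower h j
  set g : ℝ → ℝ := fun x => C⁻¹ * ((x - Am j) ^ sm * (Ap j - x) ^ sp) with hg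
  have hgx : 0 < g x := mul_pos (inv_pos.2 hC)
    (mul_pos (Real.rpow_pos_of_pos (sub_pos.2 hx.1) _) (Real.rpow_pos_of_pos (sub_pos.2 hx.2) _))
  have hcont : ContinuousAt g x := by
    refine continuousAt_const.mul (ContinuousAt.mul ?_ ?_)
    · exact ContinuousAt.rpow_const (by fun_prop) (Or.inl (sub_pos.2 hx.1).ne')
    · exact ContinuousAt.rpow_const (by fun_prop) (Or.inl (sub_pos.2 hx.2).ne')
  have hev : ∀ᶠ t in 𝓝 x, g x / 2 < g t ∧ t ∈ Ioo (Am j) (Ap j) :=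
    (hcont.eventually (lt_mem_nhds (half_lt_self hgx))).and (Ioo_mem_nhds hx.1 hx.2)
  obtain ⟨δ, hδ, hball⟩ := Metric.eventually_nhds_iff.1 hev
  refine ⟨g x, hgx, ?_⟩
  filter_upwards [Ioo_mem_nhdsGT hδ] with η hη
  have := density_lower μ ρ h.ac (x - η) (x + η) (g x / 2) x η (by linarith [hη.1]) (by positivity)
    (by rw [Real.closedBall_eq_Icc]) (by
      filter_upwards [hp] with t ht hmem
      have hd : dist t x < δ := by
        rw [Real.dist_eq]
        refine lt_of_le_of_lt (abs_le.2 ⟨?_, ?_⟩) hη.2 <;> linarith [hmem.1, hmem.2]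
      obtain ⟨h1, h2⟩ := hball hd
      exact h1.le.trans (ht h2))
  linarith

lemma left_lower {μ : Measure ℝ} {n : ℕ} {Am Ap : Fin n → ℝ} {ρ : ℝ → ℝ}
    (h : Assumption2 μ n Am Ap ρ) (j : Fin n) (K : ℝ) (hK : 0 < K) :
    ∃ η > 0, K * η ^ 2 ≤ μ.real (Metric.closedBall (Am j) (2 * η)) := by
  have := h.prob
  obtain ⟨sm, sp, C, hsm, -, hC, hp⟩ := power_lower h j
  have hd : 0 < Ap j - Am j := sub_pos.2 (h.lt j)
  have hev := (rpow_asymp sm sp (Ap j - Am j) C K hsm hd hC).and (Ioo_mem_nhdsGT hd)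
  obtain ⟨δ, hδ, hsub⟩ := mem_nhdsGT_iff_exists_Ioo_subset.1 hev
  have hδ' : (0 : ℝ) < δ := hδ
  refine ⟨δ / 3, by positivity, ?_⟩
  have := density_lower μ ρ h.ac (Am j + δ / 3) (Am j + 2 * (δ / 3)) (K * (δ / 3)) (Am j)
    (2 * (δ / 3)) (by linarith) (by positivity)
    (by rw [Real.closedBall_eq_Icc]; exact Icc_subset_Icc (by linarith) le_rfl) (by
      filter_upwards [hp] with t ht hmem
      have hu : t - Am j ∈ Ioo 0 δ := ⟨by linarith [hmem.1], by linarith [hmem.2]⟩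
      obtain ⟨h1, h2⟩ := hsub hu
      have h3 := ht ⟨by linarith [h2.1], by linarith [h2.2]⟩
      have e : Ap j - Am j - (t - Am j) = Ap j - t := by ring
      rw [e] at h1
      have h4 : K * (δ / 3) ≤ K * (t - Am j) := by
        have : δ / 3 ≤ t - Am j := by linarith [hmem.1]
        gcongr
      linarith)
  calc K * (δ / 3) ^ 2 = K * (δ / 3) * (Am j + 2 * (δ / 3) - (Am j + δ / 3)) := by ring
    _ ≤ _ := this

lemma right_lower {μ : Measure ℝ} {n : ℕ} {Am Ap : Fin n → ℝ} {ρ : ℝ → ℝ}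
    (h : Assumption2 μ n Am Ap ρ) (j : Fin n) (K : ℝ) (hK : 0 < K) :
    ∃ η > 0, K * η ^ 2 ≤ μ.real (Metric.closedBall (Ap j) (2 * η)) := by
  have := h.prob
  obtain ⟨sm, sp, C, -, hsp, hC, hp⟩ := power_lower h j
  have hd : 0 < Ap j - Am j := sub_pos.2 (h.lt j)
  have hev := (rpow_asymp sp sm (Ap j - Am j) C K hsp hd hC).and (Ioo_mem_nhdsGT hd)
  obtain ⟨δ, hδ, hsub⟩ := mem_nhdsGT_iff_exists_Ioo_subset.1 hev
  have hδ' : (0 : ℝ) < δ := hδ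
  refine ⟨δ / 3, by positivity, ?_⟩
  have := density_lower μ ρ h.ac (Ap j - 2 * (δ / 3)) (Ap j - δ / 3) (K * (δ / 3)) (Ap j)
    (2 * (δ / 3)) (by linarith) (by positivity)
    (by rw [Real.closedBall_eq_Icc]; exact Icc_subset_Icc le_rfl (by linarith)) (by
      filter_upwards [hp] with t ht hmem
      have hu : Ap j - t ∈ Ioo 0 δ := ⟨by linarith [hmem.2], by linarith [hmem.1]⟩
      obtain ⟨h1, h2⟩ := hsub hu
      have h3 := ht ⟨by linarith [h2.2], by linarith [h2.1]⟩
      have e : Ap j - Am j - (Ap j - t) = t - Am j := by ring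
      rw [e, mul_comm ((Ap j - t) ^ sp)] at h1
      have h4 : K * (δ / 3) ≤ K * (Ap j - t) := by
        have : δ / 3 ≤ Ap j - t := by linarith [hmem.2]
        gcongr
      linarith)
  calc K * (δ / 3) ^ 2 = K * (δ / 3) * (Ap j - δ / 3 - (Ap j - 2 * (δ / 3))) := by ring
    _ ≤ _ := this

/-! ### Supports -/

lemma notMem_msupp_s12 {μ : Measure ℝ} {x : ℝ} :
    x ∉ msupp μ ↔ ∃ ε > 0, μ (Ioo (x - ε) (x + ε)) = 0 := by
  constructor
  · intro h
    by_contra hc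
    push Not at hc
    exact h fun ε hε => pos_iff_ne_zero.2 (hc ε hε)
  · rintro ⟨ε, hε, h0⟩ h
    have := h ε hε
    rw [h0] at this
    exact lt_irrefl _ this

lemma mem_Ioo_self (x ε : ℝ) (hε : 0 < ε) : x ∈ Ioo (x - ε) (x + ε) :=
  ⟨by linarith, by linarith⟩

lemma null_of_disjoint_msupp {μ : Measure ℝ} (s : Set ℝ) (hs : ∀ x ∈ s, x ∉ msupp μ) :
    μ s = 0 := by
  refine measure_null_of_locally_null s fun x hx => ?_
  obtain ⟨ε, hε, h0⟩ := notMem_msupp_s12.1 (hs x hx)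
  exact ⟨_, mem_nhdsWithin_of_mem_nhds (Ioo_mem_nhds (by linarith) (by linarith)), h0⟩

lemma isClosed_supp {μ : Measure ℝ} {n : ℕ} {Am Ap : Fin n → ℝ} {ρ : ℝ → ℝ}
    (h : Assumption2 μ n Am Ap ρ) : IsClosed (msupp μ) := by
  rw [h.supp_eq]
  exact isClosed_iUnion_of_finite fun _ => isClosed_Icc

lemma zero_in_gap {μ : Measure ℝ} {n : ℕ} {Am Ap : Fin n → ℝ} {ρ : ℝ → ℝ}
    (h : Assumption2 μ n Am Ap ρ) (E : ℝ) (hE : E ∉ msupp μ) (h0 : stTR μ E = 0) :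
    ∃ i : ℕ, ∃ hi : i + 1 < n, E ∈ Ioo (Ap ⟨i, Nat.lt_of_succ_lt hi⟩) (Am ⟨i + 1, hi⟩) := by
  have := h.prob
  have hμ : μ ≠ 0 := IsProbabilityMeasure.ne_zero μ
  have hsupp : ∀ᵐ t ∂μ, t ∈ msupp μ := by
    have : μ (msupp μ)ᶜ = 0 := null_of_disjoint_msupp _ fun x hx => hx
    exact mem_ae_iff.2 this
  obtain ⟨ε, hε, hn⟩ := notMem_msupp_s12.1 hE
  obtain ⟨δ, hδ, hd⟩ := ae_dist_ge μ _ _ E hn (mem_Ioo_self E ε hε)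
  have hint := integrable_inv_sub μ E δ hδ hd
  rw [h.supp_eq] at hE hsupp
  have hE' : ∀ j, E < Am j ∨ Ap j < E := by
    intro j
    by_contra hc
    push Not at hc
    exact hE (mem_iUnion.2 ⟨j, hc⟩)
  -- some interval lies to the left of `E`
  have hleft : ∃ j, Ap j < E := by
    by_contra hc
    push Not at hc
    have : 0 < ∫ t, (t - E)⁻¹ ∂μ := by
      refine integral_pos_aux μ hμ _ hint ?_
      filter_upwards [hsupp] with t ht
      obtain ⟨j, hj⟩ := mem_iUnion.1 ht
      have := (hE' j).resolve_right (not_lt.2 (hc j))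
      exact inv_pos.2 (by linarith [hj.1])
    rw [stTR] at h0
    linarith
  have hright : ∃ j, E < Am j := by
    by_contra hc
    push Not at hc
    have : 0 < ∫ t, -(t - E)⁻¹ ∂μ := by
      refine integral_pos_aux μ hμ _ hint.neg ?_
      filter_upwards [hsupp] with t ht
      obtain ⟨j, hj⟩ := mem_iUnion.1 ht
      have := (hE' j).resolve_left (not_lt.2 (hc j))
      have : (t - E)⁻¹ < 0 := inv_lt_zero.2 (by linarith [hj.2])
      linarith
    rw [integral_neg] at this
    rw [stTR] at h0
    linarith
  obtain ⟨i, hi, hmax⟩ := (Set.toFinite {j | Ap j < E}).exists_maximal hleft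
  have hi' : Ap i < E := hi
  obtain ⟨k, hk⟩ := hright
  have hik : i < k := by
    by_contra hc
    rcases (not_lt.1 hc).lt_or_eq with hlt | heq
    · linarith [h.ordered k i hlt, h.lt i, h.lt k]
    · rw [heq] at hk; linarith [h.lt i]
  have hi1 : (i : ℕ) + 1 < n := lt_of_le_of_lt (Nat.succ_le_of_lt hik) k.2
  refine ⟨i, hi1, hi', ?_⟩
  refine (hE' _).resolve_right fun hlt => ?_
  have hle : i ≤ (⟨(i : ℕ) + 1, hi1⟩ : Fin n) := by
    rw [Fin.le_def]; simp
  have := hmax hlt hle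
  rw [Fin.le_def] at this
  simp at this

lemma gap_null {μ : Measure ℝ} {n : ℕ} {Am Ap : Fin n → ℝ} {ρ : ℝ → ℝ}
    (h : Assumption2 μ n Am Ap ρ) (i : ℕ) (hi : i + 1 < n) (E : ℝ)
    (hE : E ∈ Ioo (Ap ⟨i, Nat.lt_of_succ_lt hi⟩) (Am ⟨i + 1, hi⟩)) : E ∉ msupp μ := by
  rw [h.supp_eq]
  intro hm
  obtain ⟨j, hj⟩ := mem_iUnion.1 hm
  rcases Nat.lt_or_ge i j with hlt | hge
  · have hle : (⟨i + 1, hi⟩ : Fin n) ≤ j := hlt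
    rcases hle.lt_or_eq with h1 | h1
    · linarith [h.ordered _ _ h1, h.lt ⟨i + 1, hi⟩, hj.1, hE.2]
    · rw [← h1] at hj; linarith [hj.1, hE.2]
  · have hle : j ≤ (⟨i, Nat.lt_of_succ_lt hi⟩ : Fin n) := hge
    rcases hle.lt_or_eq with h1 | h1
    · linarith [h.ordered _ _ h1, h.lt ⟨i, Nat.lt_of_succ_lt hi⟩, hj.2, hE.1]
    · rw [h1] at hj; linarith [hj.2, hE.1]

lemma gap_lt {μ : Measure ℝ} {n : ℕ} {Am Ap : Fin n → ℝ} {ρ : ℝ → ℝ}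
    (h : Assumption2 μ n Am Ap ρ) (i j : ℕ) (hi : i + 1 < n) (hj : j + 1 < n) (hij : i < j)
    (E E' : ℝ) (hE : E ∈ Ioo (Ap ⟨i, Nat.lt_of_succ_lt hi⟩) (Am ⟨i + 1, hi⟩))
    (hE' : E' ∈ Ioo (Ap ⟨j, Nat.lt_of_succ_lt hj⟩) (Am ⟨j + 1, hj⟩)) : E < E' := by
  have hle : (⟨i + 1, hi⟩ : Fin n) ≤ ⟨j, Nat.lt_of_succ_lt hj⟩ := hij
  have h3 := h.lt ⟨j, Nat.lt_of_succ_lt hj⟩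
  rcases hle.lt_or_eq with h1 | h1
  · linarith [h.ordered _ _ h1, h.lt ⟨i + 1, hi⟩, hE.2, hE'.1]
  · rw [← h1] at h3
    have := hE'.1
    rw [← h1] at this
    linarith [hE.2]

lemma nevPair_of_hat {μ μhat : Measure ℝ} {n : ℕ} {Am Ap : Fin n → ℝ} {ρ : ℝ → ℝ}
    (h : Assumption2 μ n Am Ap ρ) (hhat : IsNevanHat μ μhat) : NevPair 0 1 μ μhat := by
  have := h.prob
  refine ⟨le_rfl, zero_le_one, fun x η hη => ?_⟩
  have hz : ((x : ℂ) + (η : ℂ) * Complex.I) ∈ UHP := by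
    show 0 < ((x : ℂ) + (η : ℂ) * Complex.I).im
    simpa using hη
  have h1 := hhat.2 _ hz
  rw [h.centered, nrT] at h1
  have him : 0 < (stT μ ((x : ℂ) + (η : ℂ) * Complex.I)).im := by
    rw [im_stT μ x η hη]
    refine integral_pos_aux μ (IsProbabilityMeasure.ne_zero μ) _ (integrable_im μ x η hη) ?_
    exact Eventually.of_forall fun t => by positivity
  have hne : stT μ ((x : ℂ) + (η : ℂ) * Complex.I) ≠ 0 := by
    intro h0; rw [h0] at him; simp at him
  have h2 : ((1 : ℝ) : ℂ) * ((x : ℂ) + (η : ℂ) * Complex.I) +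
      stT μhat ((x : ℂ) + (η : ℂ) * Complex.I) = -(stT μ ((x : ℂ) + (η : ℂ) * Complex.I))⁻¹ := by
    rw [stT.eq_1 μhat]
    push_cast at h1 ⊢
    linear_combination -h1
  rw [h2]
  field_simp
  push_cast
  ring

lemma singularPart_aux (ν : Measure ℝ) [IsFiniteMeasure ν] (m : ℕ) (E : Fin m → ℝ)
    (hE : Function.Injective E)
    (h : ∀ N : Set ℝ, volume N = 0 → ν (N \ range E) = 0) :
    ν.singularPart volume = ∑ k : Fin m, ν {E k} • Measure.dirac (E k) := by
  have hT : MeasurableSet (range E) := (finite_range E).measurableSet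
  have hT0 : volume (range E) = 0 := (finite_range E).measure_zero _
  have hac : ν.restrict (range E)ᶜ ≪ volume := by
    intro N hN
    rw [Measure.restrict_apply' hT.compl, ← sdiff_eq]
    exact h N hN
  have hsing : ν.restrict (range E) ⟂ₘ volume := by
    refine ⟨(range E)ᶜ, hT.compl, ?_, ?_⟩
    · simp [Measure.restrict_apply' hT]
    · simpa using hT0
  have h1 : ν.singularPart volume = ν.restrict (range E) := by
    conv_lhs => rw [← Measure.restrict_add_restrict_compl (μ := ν) hT]
    rw [Measure.singularPart_add, Measure.singularPart_eq_zero_of_ac hac, add_zero,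
      Measure.singularPart_eq_self.2 hsing]
  rw [h1]
  have e : range E = ⋃ k : Fin m, {E k} := by
    ext y; simp [eq_comm]
  rw [e, Measure.restrict_iUnion (fun i j hij => by simpa using fun hh => hij (hE hh))
    (fun i => measurableSet_singleton _), Measure.sum_fintype]
  simp [Measure.restrict_singleton]

lemma one_side (μ μhat : Measure ℝ) (n : ℕ) (Am Ap : Fin n → ℝ) (ρ : ℝ → ℝ)
    (h : Assumption2 μ n Am Ap ρ) (hhat : IsNevanHat μ μhat) :
    ∃ (m : ℕ) (Ept : Fin m → ℝ) (gap : Fin m → ℕ),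
      m ≤ n - 1 ∧ Function.Injective Ept ∧ Function.Injective gap ∧
      (∀ k, ∃ h : gap k + 1 < n,
        Ept k ∈ Set.Ioo (Ap ⟨gap k, Nat.lt_of_succ_lt h⟩) (Am ⟨gap k + 1, h⟩)) ∧
      (∀ k, stTR μ (Ept k) = 0) ∧
      (∀ k, μhat {Ept k} ≠ 0) ∧
      μhat.singularPart volume = ∑ k : Fin m, μhat {Ept k} • Measure.dirac (Ept k) ∧
      msupp μhat = msupp μ ∪ Set.range Ept := by
  classical
  have := h.prob
  have := hhat.1
  have hpair := nevPair_of_hat h hhat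
  have hμ : μ ≠ 0 := IsProbabilityMeasure.ne_zero μ
  have hμac : μ ≪ volume := by
    rw [h.ac]; exact withDensity_absolutelyContinuous _ _
  -- the gaps containing a zero
  let P : ℕ → Prop := fun i => ∃ hi : i + 1 < n, ∃ E,
    E ∈ Ioo (Ap ⟨i, Nat.lt_of_succ_lt hi⟩) (Am ⟨i + 1, hi⟩) ∧ stTR μ E = 0
  let S : Finset ℕ := (Finset.range (n - 1)).filter P
  have hcard : S.card ≤ n - 1 := by
    have := Finset.card_filter_le (Finset.range (n - 1)) P
    simpa using this
  let gap : Fin S.card → ℕ := S.orderEmbOfFin rfl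
  have hgapinj : Function.Injective gap := (S.orderEmbOfFin rfl).injective
  have hgapP : ∀ k, P (gap k) := fun k =>
    (Finset.mem_filter.1 (Finset.orderEmbOfFin_mem S rfl k)).2
  choose hgap Ept hEpt hEpt0 using hgapP
  have hnotsupp : ∀ k, Ept k ∉ msupp μ := fun k => gap_null h _ (hgap k) _ (hEpt k)
  -- null gaps
  have hgapnull : ∀ (i : ℕ) (hi : i + 1 < n),
      μ (Ioo (Ap ⟨i, Nat.lt_of_succ_lt hi⟩) (Am ⟨i + 1, hi⟩)) = 0 := fun i hi =>
    null_of_disjoint_msupp _ fun x hx => gap_null h i hi x hx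
  -- every zero off the support is one of the `Ept`
  have hzero : ∀ E, E ∉ msupp μ → stTR μ E = 0 → E ∈ range Ept := by
    intro E hE h0
    obtain ⟨i, hi, hmem⟩ := zero_in_gap h E hE h0
    have hiS : i ∈ S := by
      refine Finset.mem_filter.2 ⟨Finset.mem_range.2 (by omega), hi, E, hmem, h0⟩
    have hr : i ∈ range (S.orderEmbOfFin rfl) := by
      rw [Finset.range_orderEmbOfFin]; exact hiS
    obtain ⟨k, hk⟩ := hr
    refine ⟨k, ?_⟩
    have hk' : gap k = i := hk
    subst hk'
    have hE1 := hEpt k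
    rcases lt_trichotomy (Ept k) E with hlt | heq | hgt
    · have := stTR_strictMono μ hμ _ _ _ _ (hgapnull _ hi) hE1 hmem hlt
      rw [h0, hEpt0 k] at this; exact absurd this (lt_irrefl _)
    · exact heq
    · have := stTR_strictMono μ hμ _ _ _ _ (hgapnull _ hi) hmem hE1 hgt
      rw [h0, hEpt0 k] at this; exact absurd this (lt_irrefl _)
  have hinj : Function.Injective Ept := by
    intro k l hkl
    by_contra hne
    rcases lt_or_gt_of_ne (fun hh => hne (hgapinj hh)) with hlt | hlt
    · exact (gap_lt h _ _ (hgap k) (hgap l) hlt _ _ (hEpt k) (hEpt l)).ne hkl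
    · exact (gap_lt h _ _ (hgap l) (hgap k) hlt _ _ (hEpt l) (hEpt k)).ne hkl.symm
  -- `μhat` has no mass off `supp μ ∪ range Ept`
  have hoff : μhat (msupp μ ∪ range Ept)ᶜ = 0 := by
    refine measure_null_of_locally_null _ fun x hx => ?_
    have hx1 : x ∉ msupp μ := fun hh => hx (Or.inl hh)
    obtain ⟨ε, hε, hn⟩ := notMem_msupp_s12.1 hx1
    have hp := pair_null hpair _ _ hn
    refine ⟨_, ?_, hp⟩
    have hop : IsOpen (msupp μ ∪ range Ept)ᶜ :=
      ((isClosed_supp h).union (finite_range Ept).isClosed).isOpen_compl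
    refine mem_nhdsWithin_of_mem_nhds ?_
    filter_upwards [hop.mem_nhds hx,
      Ioo_mem_nhds (mem_Ioo_self x ε hε).1 (mem_Ioo_self x ε hε).2] with y hy hy2
    refine ⟨hy2, fun h0 => ?_⟩
    have hy1 : y ∉ msupp μ := fun hh => hy (Or.inl hh)
    exact hy (Or.inr (hzero y hy1 (by simpa using h0)))
  have hatom : ∀ k, μhat {Ept k} ≠ 0 := by
    intro k h0
    have h1 := pair_atom hpair _ _ _ (hgapnull _ (hgap k)) (hEpt k) (by simpa using hEpt0 k)
    apply h1
    have hsub : Ioo (Ap ⟨gap k, Nat.lt_of_succ_lt (hgap k)⟩) (Am ⟨gap k + 1, hgap k⟩) ⊆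
        (msupp μ ∪ range Ept)ᶜ ∪ {Ept k} := by
      intro y hy
      by_cases hyk : y = Ept k
      · exact Or.inr hyk
      left
      rintro (hh | ⟨l, rfl⟩)
      · exact gap_null h _ (hgap k) y hy hh
      · apply hyk
        rcases lt_trichotomy (gap k) (gap l) with hlt | heq | hlt
        · exact absurd (gap_lt h _ _ (hgap k) (hgap l) hlt _ _ hy (hEpt l)) (lt_irrefl _)
        · rw [hgapinj heq]
        · exact absurd (gap_lt h _ _ (hgap l) (hgap k) hlt _ _ (hEpt l) hy) (lt_irrefl _)
    exact measure_mono_null hsub (measure_union_null hoff h0)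
  refine ⟨S.card, Ept, gap, hcard, hinj, hgapinj, fun k => ⟨hgap k, hEpt k⟩, hEpt0, hatom, ?_, ?_⟩
  · refine singularPart_aux μhat _ Ept hinj ?_
    intro N hN
    have hsub : N \ range Ept ⊆ (msupp μ ∪ range Ept)ᶜ ∪
        ((⋃ j, {Am j}) ∪ ((⋃ j, {Ap j}) ∪ ⋃ j, (N ∩ Ioo (Am j) (Ap j)))) := by
      rintro y ⟨hyN, hyE⟩
      by_cases hy : y ∈ msupp μ
      · right
        rw [h.supp_eq] at hy
        obtain ⟨j, hj⟩ := mem_iUnion.1 hy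
        rcases hj.1.eq_or_lt with h1 | h1
        · exact Or.inl (mem_iUnion.2 ⟨j, h1.symm⟩)
        rcases hj.2.eq_or_lt with h2 | h2
        · exact Or.inr (Or.inl (mem_iUnion.2 ⟨j, h2⟩))
        · exact Or.inr (Or.inr (mem_iUnion.2 ⟨j, hyN, h1, h2⟩))
      · left
        rintro (hh | hh)
        · exact hy hh
        · exact hyE hh
    refine measure_mono_null hsub (measure_union_null hoff (measure_union_null ?_
      (measure_union_null ?_ ?_)))
    · exact measure_iUnion_null fun j => pair_endpoint hpair _ (left_lower h j)
    · exact measure_iUnion_null fun j => pair_endpoint hpair _ (right_lower h j)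
    · refine measure_iUnion_null fun j => cover_null μhat _ (measure_mono_null inter_subset_left hN) ?_
      rintro x ⟨-, hx⟩
      obtain ⟨c, hc, hx'⟩ := interior_lower h j x hx
      exact pair_interior hpair x c hc hx'
  · apply Subset.antisymm
    · intro x hx
      by_contra hc
      have hop : IsOpen (msupp μ ∪ range Ept)ᶜ :=
        ((isClosed_supp h).union (finite_range Ept).isClosed).isOpen_compl
      obtain ⟨ε, hε, hb⟩ := Metric.isOpen_iff.1 hop x hc
      rw [Real.ball_eq_Ioo] at hb
      exact notMem_msupp_s12.2 ⟨ε, hε, measure_mono_null hb hoff⟩ hx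
    · rintro x (hx | ⟨k, rfl⟩)
      · by_contra hc
        obtain ⟨ε, hε, hn⟩ := notMem_msupp_s12.1 hc
        have hp := pair_null hpair.symm _ _ hn
        refine notMem_msupp_s12.2 ⟨ε, hε, ?_⟩ hx
        have hss : {y ∈ Ioo (x - ε) (x + ε) | 1 * y + stTR μhat y = 0}.Subsingleton := by
          rintro y ⟨hy, hy0⟩ y' ⟨hy', hy0'⟩
          rcases lt_trichotomy y y' with hlt | heq | hlt
          · have := stTR_mono μhat _ _ _ _ hn hy hy' hlt
            linarith
          · exact heq
          · have := stTR_mono μhat _ _ _ _ hn hy' hy hlt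
            linarith
        have hz : μ {y ∈ Ioo (x - ε) (x + ε) | 1 * y + stTR μhat y = 0} = 0 :=
          hμac (hss.measure_zero _)
        refine measure_mono_null ?_ (measure_union_null hp hz)
        intro y hy
        by_cases hy0 : 1 * y + stTR μhat y = 0
        · exact Or.inr ⟨hy, hy0⟩
        · exact Or.inl ⟨hy, hy0⟩
      · intro ε hε
        refine lt_of_lt_of_le (pos_iff_ne_zero.2 (hatom k)) (measure_mono ?_)
        exact singleton_subset_iff.2 (mem_Ioo_self _ ε hε)

/-- The singular parts of `μ̂_α` and `μ̂_β` are purely atomic, with at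
most one atom in each gap of the respective supports, each atom being a zero of the
respective Cauchy–Stieltjes transform; and `supp(μ̂) = supp(μ) ∪ {atoms}`. -/
theorem nevanlinna_measure_structure
    (μa μb μhata μhatb : Measure ℝ) (na nb : ℕ)
    (Am Ap : Fin na → ℝ) (Bm Bp : Fin nb → ℝ) (ρa ρb : ℝ → ℝ)
    (hμa : Assumption2 μa na Am Ap ρa)
    (hμb : Assumption2 μb nb Bm Bp ρb)
    (hhata : IsNevanHat μa μhata) (hhatb : IsNevanHat μb μhatb) :
    (∃ (m : ℕ) (Ept : Fin m → ℝ) (gap : Fin m → ℕ),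
      m ≤ na - 1 ∧ Function.Injective Ept ∧ Function.Injective gap ∧
      (∀ k, ∃ h : gap k + 1 < na,
        Ept k ∈ Set.Ioo (Ap ⟨gap k, Nat.lt_of_succ_lt h⟩) (Am ⟨gap k + 1, h⟩)) ∧
      (∀ k, stTR μa (Ept k) = 0) ∧
      (∀ k, μhata {Ept k} ≠ 0) ∧
      μhata.singularPart volume = ∑ k : Fin m, μhata {Ept k} • Measure.dirac (Ept k) ∧
      msupp μhata = msupp μa ∪ Set.range Ept) ∧
    (∃ (m : ℕ) (Ept : Fin m → ℝ) (gap : Fin m → ℕ),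
      m ≤ nb - 1 ∧ Function.Injective Ept ∧ Function.Injective gap ∧
      (∀ k, ∃ h : gap k + 1 < nb,
        Ept k ∈ Set.Ioo (Bp ⟨gap k, Nat.lt_of_succ_lt h⟩) (Bm ⟨gap k + 1, h⟩)) ∧
      (∀ k, stTR μb (Ept k) = 0) ∧
      (∀ k, μhatb {Ept k} ≠ 0) ∧
      μhatb.singularPart volume = ∑ k : Fin m, μhatb {Ept k} • Measure.dirac (Ept k) ∧
      msupp μhatb = msupp μb ∪ Set.range Ept) := by
  exact ⟨one_side μa μhata na Am Ap ρa hμa hhata, one_side μb μhatb nb Bm Bp ρb hμb hhatb⟩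
end
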